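/- arXiv:1805.09475 — 4 statements merged into one kernel-verified Lean document; each statement's English description precedes it below -/
import Mathlib

section
/- Let d ≥ 2, λ ∈ (0,1], M > 0 and A ∈ 𝒜(λ,M). Let χ be the corrector, Â the homogenized matrix, and define B(y) = (b_ij(y)) by b_ij = a_ij + a_ik ∂χ_j/∂y_k − â_ij (so B is ℤ^d-periodic, continuous, with ∫_{[0,1]^d} b_ij dy = 0 and ∫ b_ij ∂_i ψ dy = 0 for every smooth compactly supported ψ on ℝ^d). Then there exist bounded continuous ℤ^d-periodic functions φ_kij : ℝ^d → ℝ, 1 ≤ i, j, k ≤ d, such that φ_kij = −φ_ikj and b_ij = ∂φ_kij/∂y_k in the sense of distributions, i.e. ∫ b_ij ψ dy = −∑_k ∫ φ_kij ∂_k ψ dy for every smooth compactly supported ψ on ℝ^d. -/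
open MeasureTheory Metric Set
open scoped ENNReal NNReal

noncomputable section

/-- The bilinear form `⟨A ξ, η⟩ = ∑ i j, A i j * ξ j * η i`. -/
def bform {d : ℕ} (A : Matrix (Fin d) (Fin d) ℝ) (ξ η : EuclideanSpace ℝ (Fin d)) : ℝ :=
  ∑ i, ∑ j, A i j * ξ j * η i

/-- The point of `ℝᵈ` (as `EuclideanSpace`) with integer coordinates `z`. -/
def perPt {d : ℕ} (z : Fin d → ℤ) : EuclideanSpace ℝ (Fin d) :=
  (WithLp.equiv 2 (Fin d → ℝ)).symm fun i => (z i : ℝ)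

/-- The class `𝒜(λ, M)`: symmetric, elliptic, `ℤᵈ`-periodic, `M`-Lipschitz coefficients. -/
structure MemA (d : ℕ) (lam M : ℝ)
    (A : EuclideanSpace ℝ (Fin d) → Matrix (Fin d) (Fin d) ℝ) : Prop where
  symm : ∀ y, (A y).IsSymm
  ellip_low : ∀ y ξ, lam * ‖ξ‖ ^ 2 ≤ bform (A y) ξ ξ
  ellip_high : ∀ y ξ, bform (A y) ξ ξ ≤ ‖ξ‖ ^ 2
  periodic : ∀ (y : EuclideanSpace ℝ (Fin d)) (z : Fin d → ℤ), A (y + perPt z) = A y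
  lipschitz : ∀ x y i j, |A x i j - A y i j| ≤ M * ‖x - y‖

/-- `u` is a weak solution of `div (A ∇u) = 0` in the open set `Ω`:
`u` is `C¹` on `Ω` and the weak formulation holds against all test functions. -/
def IsWeakSol {d : ℕ} (A : EuclideanSpace ℝ (Fin d) → Matrix (Fin d) (Fin d) ℝ)
    (Ω : Set (EuclideanSpace ℝ (Fin d))) (u : EuclideanSpace ℝ (Fin d) → ℝ) : Prop :=
  ContDiffOn ℝ 1 u Ω ∧
  ∀ ψ : EuclideanSpace ℝ (Fin d) → ℝ, ContDiff ℝ (⊤ : ℕ∞) ψ → HasCompactSupport ψ →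
    tsupport ψ ⊆ Ω →
    ∫ x in Ω, bform (A x) (gradient u x) (gradient ψ x) = 0

/-- The unit cube `[0,1]^d`. -/
def unitCube (d : ℕ) : Set (EuclideanSpace ℝ (Fin d)) := {y | ∀ i, y i ∈ Set.Icc (0 : ℝ) 1}

/-- `χ` is the corrector for the operator with coefficient matrix `A`. -/
def IsCorrector {d : ℕ} (A : EuclideanSpace ℝ (Fin d) → Matrix (Fin d) (Fin d) ℝ)
    (χ : Fin d → EuclideanSpace ℝ (Fin d) → ℝ) : Prop :=
  ∀ j, ContDiff ℝ 1 (χ j) ∧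
    (∀ (y : EuclideanSpace ℝ (Fin d)) (z : Fin d → ℤ), χ j (y + perPt z) = χ j y) ∧
    (∫ y in unitCube d, χ j y) = 0 ∧
    (∀ ψ : EuclideanSpace ℝ (Fin d) → ℝ, ContDiff ℝ (⊤ : ℕ∞) ψ → HasCompactSupport ψ →
      ∫ y, bform (A y) (gradient (χ j) y + EuclideanSpace.single j 1) (gradient ψ y) = 0)

/-- The homogenized matrix `Â`, `â_ij = ∫_{[0,1]^d} (a_ij + a_ik ∂χ_j/∂y_k) dy`. -/
def homMatrix {d : ℕ} (A : EuclideanSpace ℝ (Fin d) → Matrix (Fin d) (Fin d) ℝ)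
    (χ : Fin d → EuclideanSpace ℝ (Fin d) → ℝ) : Matrix (Fin d) (Fin d) ℝ :=
  Matrix.of fun i j => ∫ y in unitCube d, (A y i j + ∑ k, A y i k * gradient (χ j) y k)

/-- The ellipsoid `E_r = {x : ⟨Â⁻¹ x, x⟩ < r²}` associated with a homogenized matrix `Â`. -/
def ellipsoid {d : ℕ} (Ahat : Matrix (Fin d) (Fin d) ℝ) (r : ℝ) :
    Set (EuclideanSpace ℝ (Fin d)) := {x | bform Ahat⁻¹ x x < r ^ 2}

/-- The class `ℱ(N)` of normalized solutions of constant-coefficient equations in `B₁`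
satisfying an `N`-doubling condition. -/
def MemF (d : ℕ) (lam N : ℝ) (u : EuclideanSpace ℝ (Fin d) → ℝ) : Prop :=
  (∃ A : Matrix (Fin d) (Fin d) ℝ, A.IsSymm ∧
      (∀ ξ : EuclideanSpace ℝ (Fin d), lam * ‖ξ‖ ^ 2 ≤ bform A ξ ξ ∧ bform A ξ ξ ≤ ‖ξ‖ ^ 2) ∧
      IsWeakSol (fun _ => A) (ball 0 1) u) ∧
  (⨍ x in ball (0 : EuclideanSpace ℝ (Fin d)) 1, (u x) ^ 2) = 1 ∧
  (⨍ x in ball (0 : EuclideanSpace ℝ (Fin d)) 1, (u x) ^ 2) ≤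
    N * ⨍ x in ball (0 : EuclideanSpace ℝ (Fin d)) (1 / 2), (u x) ^ 2

/-- `w` is harmonic on `Ω`: it is `C²` there and its Laplacian vanishes. -/
def IsHarmonicOn {d : ℕ} (w : EuclideanSpace ℝ (Fin d) → ℝ)
    (Ω : Set (EuclideanSpace ℝ (Fin d))) : Prop :=
  ContDiffOn ℝ 2 w Ω ∧ ∀ x ∈ Ω, (∑ i, gradient (fun y => gradient w y i) x i) = 0

/-- `F_ε(y, r) = ℋ^{d-1}(Z(u) ∩ B(y,r)) / r^{d-1}` where `Z(u)` is the nodal set of `u` in `B₂`. -/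
def nodalRatio {d : ℕ} (u : EuclideanSpace ℝ (Fin d) → ℝ)
    (y : EuclideanSpace ℝ (Fin d)) (r : ℝ) : ℝ≥0∞ :=
  μH[(d : ℝ) - 1] ({x ∈ ball (0 : EuclideanSpace ℝ (Fin d)) 2 | u x = 0} ∩ ball y r) /
    ENNReal.ofReal (r ^ (d - 1))

namespace FluxAux

/-- Ambient space. -/
abbrev V (d : ℕ) := EuclideanSpace ℝ (Fin d)

/-- Weighted average of translates in direction `v`. -/
def T {d : ℕ} (w : ℝ → ℝ) (v : V d) (g : V d → ℝ) (y : V d) : ℝ :=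
  ∫ s in (0 : ℝ)..1, w s * g (y + s • v)

/-- Partial derivative. -/
def pd {d : ℕ} (k : Fin d) (ψ : V d → ℝ) (y : V d) : ℝ :=
  fderiv ℝ ψ y (EuclideanSpace.single k 1)

lemma gradient_apply {d : ℕ} (ψ : V d → ℝ) (y : V d) (k : Fin d) :
    gradient ψ y k = pd k ψ y := by
  have h := inner_gradient_left (𝕜 := ℝ) (f := ψ) (x := y) (y := EuclideanSpace.single k (1 : ℝ))
  rw [EuclideanSpace.inner_single_right] at h
  simpa [pd] using h

lemma swap_set {d : ℕ} (K : Set (V d)) (hK : IsCompact K) (F : ℝ → V d → ℝ)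
    (hF : Continuous (Function.uncurry F)) :
    ∫ y in K, ∫ s in (0 : ℝ)..1, F s y = ∫ s in (0 : ℝ)..1, ∫ y in K, F s y := by
  symm
  apply intervalIntegral_integral_swap
  rw [Measure.prod_restrict]
  have : IntegrableOn (Function.uncurry F) (Icc (0:ℝ) 1 ×ˢ K) (volume.prod volume) :=
    hF.continuousOn.integrableOn_compact (isCompact_Icc.prod hK)
  apply this.mono_set
  apply Set.prod_mono _ subset_rfl
  rw [uIoc_of_le zero_le_one]
  exact Ioc_subset_Icc_self

lemma swap_cpt {d : ℕ} (K : Set (V d)) (hK : IsCompact K) (F : ℝ → V d → ℝ)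
    (hF : Continuous (Function.uncurry F))
    (h0 : ∀ s ∈ Icc (0 : ℝ) 1, ∀ y, y ∉ K → F s y = 0) :
    ∫ y, ∫ s in (0 : ℝ)..1, F s y = ∫ s in (0 : ℝ)..1, ∫ y, F s y := by
  have h1 : ∀ y, y ∉ K → ∫ s in (0 : ℝ)..1, F s y = 0 := by
    intro y hy
    rw [intervalIntegral.integral_congr (g := fun _ => 0)]
    · simp
    · intro s hs
      rw [uIcc_of_le zero_le_one] at hs
      exact h0 s hs y hy
  rw [← setIntegral_eq_integral_of_forall_compl_eq_zero h1, swap_set K hK F hF]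
  apply intervalIntegral.integral_congr
  intro s hs
  rw [uIcc_of_le zero_le_one] at hs
  exact setIntegral_eq_integral_of_forall_compl_eq_zero (h0 s hs)

lemma T_cont {d : ℕ} {w : ℝ → ℝ} (hw : Continuous w) (v : V d) {g : V d → ℝ}
    (hg : Continuous g) : Continuous (T w v g) := by
  unfold T
  apply intervalIntegral.continuous_parametric_intervalIntegral_of_continuous'
  unfold Function.uncurry
  fun_prop

/-- Adjoint identity, halfway. -/
lemma T_half {d : ℕ} {w : ℝ → ℝ} (hw : Continuous w) (v : V d) {g h : V d → ℝ}
    (hg : Continuous g) (hh : Continuous h) (hc : HasCompactSupport h) :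
    ∫ y, T w v g y * h y = ∫ s in (0 : ℝ)..1, w s * ∫ y, g y * h (y - s • v) := by
  have e1 : ∀ y, T w v g y * h y = ∫ s in (0 : ℝ)..1, w s * (g (y + s • v) * h y) := by
    intro y
    rw [T, ← intervalIntegral.integral_mul_const]
    simp only [mul_assoc]
  simp_rw [e1]
  rw [swap_cpt (tsupport h) hc]
  · apply intervalIntegral.integral_congr
    intro s _
    simp only
    rw [integral_const_mul]
    congr 1
    rw [← integral_add_right_eq_self (fun y => g y * h (y - s • v)) (s • v)]
    simp
  · unfold Function.uncurry
    fun_prop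
  · intro s _ y hy
    rw [image_eq_zero_of_notMem_tsupport hy]
    simp

lemma T_adj {d : ℕ} {w : ℝ → ℝ} (hw : Continuous w) (v : V d) {g h : V d → ℝ}
    (hg : Continuous g) (hh : Continuous h) (hc : HasCompactSupport h) :
    ∫ y, T w v g y * h y = ∫ y, g y * T w (-v) h y := by
  rw [T_half hw v hg hh hc]
  have e1 : ∀ y, g y * T w (-v) h y = ∫ s in (0 : ℝ)..1, w s * (g y * h (y - s • v)) := by
    intro y
    rw [T, ← intervalIntegral.integral_const_mul]
    apply intervalIntegral.integral_congr
    intro s _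
    simp only [smul_neg, ← sub_eq_add_neg]
    ring
  simp_rw [e1]
  rw [swap_cpt ((fun p : ℝ × V d => p.2 + p.1 • v) '' (Icc (0:ℝ) 1 ×ˢ tsupport h))]
  · apply intervalIntegral.integral_congr
    intro s _
    simp only
    rw [integral_const_mul]
  · apply (isCompact_Icc.prod hc).image
    fun_prop
  · unfold Function.uncurry
    fun_prop
  · intro s hs y hy
    have : y - s • v ∉ tsupport h := by
      intro h'
      apply hy
      exact ⟨(s, y - s • v), ⟨hs, h'⟩, by simp⟩
    rw [image_eq_zero_of_notMem_tsupport this]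
    simp

lemma T_supp {d : ℕ} (w : ℝ → ℝ) (v : V d) {h : V d → ℝ} (hc : HasCompactSupport h) :
    HasCompactSupport (T w v h) := by
  apply HasCompactSupport.intro
    (K := (fun p : ℝ × V d => p.2 - p.1 • v) '' (Icc (0:ℝ) 1 ×ˢ tsupport h))
  · apply (isCompact_Icc.prod hc).image
    fun_prop
  · intro y hy
    unfold T
    rw [intervalIntegral.integral_congr (g := fun _ => 0)]
    · simp
    · intro s hs
      rw [uIcc_of_le zero_le_one] at hs
      have : y + s • v ∉ tsupport h := by
        intro h'
        apply hy
        exact ⟨(s, y + s • v), ⟨hs, h'⟩, by simp⟩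
      simp only
      rw [image_eq_zero_of_notMem_tsupport this]
      simp

lemma integrable_mul {d : ℕ} {g h : V d → ℝ}
    (hg : Continuous g) (hh : Continuous h) (hc : HasCompactSupport h) :
    Integrable (fun y => g y * h y) :=
  (hg.mul hh).integrable_of_hasCompactSupport hc.mul_left

lemma pd_cont {d : ℕ} {ψ : V d → ℝ} (hψ : ContDiff ℝ (⊤ : ℕ∞) ψ) (k : Fin d) :
    Continuous (pd k ψ) := by
  have : Continuous (fderiv ℝ ψ) := hψ.continuous_fderiv (by simp)
  unfold pd
  fun_prop

lemma pd_supp {d : ℕ} {ψ : V d → ℝ} (hc : HasCompactSupport ψ) (k : Fin d) :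
    HasCompactSupport (pd k ψ) := by
  exact hc.fderiv_apply (𝕜 := ℝ) _

lemma pd_shift {d : ℕ} (ψ : V d → ℝ) (k : Fin d) (a y : V d) :
    pd k (fun x => ψ (x - a)) y = pd k ψ (y - a) := by
  unfold pd
  rw [fderiv_comp_sub]

/-- weakly divergence free -/
def DF {d : ℕ} (b : Fin d → V d → ℝ) : Prop :=
  ∀ ψ : V d → ℝ, ContDiff ℝ (⊤ : ℕ∞) ψ → HasCompactSupport ψ →
    ∑ i, ∫ y, b i y * pd i ψ y = 0

lemma shift_supp {d : ℕ} {ψ : V d → ℝ} (hc : HasCompactSupport ψ) (a : V d) :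
    HasCompactSupport (fun x => ψ (x - a)) := by
  have := hc.comp_homeomorph (Homeomorph.subRight a)
  exact this

lemma half_cont {d : ℕ} (v : V d) {g h : V d → ℝ}
    (hg : Continuous g) (hh : Continuous h) (hc : HasCompactSupport h) :
    Continuous (fun s : ℝ => ∫ y, g y * h (y - s • v)) := by
  have e : ∀ s : ℝ, ∫ y, g y * h (y - s • v) = ∫ y in tsupport h, g (y + s • v) * h y := by
    intro s
    rw [setIntegral_eq_integral_of_forall_compl_eq_zero,
      ← integral_add_right_eq_self (fun y => g y * h (y - s • v)) (s • v)]
    · simp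
    · intro y hy
      rw [image_eq_zero_of_notMem_tsupport hy]
      simp
  simp_rw [e]
  apply continuous_parametric_integral_of_continuous _ hc
  unfold Function.uncurry
  fun_prop

lemma DF_T {d : ℕ} {w : ℝ → ℝ} (hw : Continuous w) (v : V d) {b : Fin d → V d → ℝ}
    (hb : ∀ i, Continuous (b i)) (h : DF b) : DF (fun i => T w v (b i)) := by
  intro ψ hψ hc
  simp_rw [fun i => T_half hw v (hb i) (pd_cont hψ i) (pd_supp hc i)]
  rw [← intervalIntegral.integral_finsetSum]
  · have : ∀ s : ℝ, ∑ i, w s * ∫ y, b i y * pd i ψ (y - s • v) = 0 := by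
      intro s
      rw [← Finset.mul_sum]
      have := h (fun x => ψ (x - s • v)) (hψ.comp (contDiff_id.sub contDiff_const))
        (shift_supp hc _)
      simp_rw [pd_shift] at this
      rw [this, mul_zero]
    simp [this]
  · intro i _
    apply Continuous.intervalIntegrable
    exact hw.mul (half_cont v (hb i) (pd_cont hψ i) (pd_supp hc i))

lemma T_id_pd {d : ℕ} {ψ : V d → ℝ} (hψ : ContDiff ℝ (⊤ : ℕ∞) ψ) (m : Fin d) (y : V d) :
    T id (-EuclideanSpace.single m 1) (pd m ψ) y =
      - ψ (y - EuclideanSpace.single m 1) + T 1 (-EuclideanSpace.single m 1) ψ y := by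
  set e : V d := EuclideanSpace.single m 1 with he
  have hd : ∀ s : ℝ, HasDerivAt (fun s : ℝ => - ψ (y + s • (-e))) (pd m ψ (y + s • (-e))) s := by
    intro s
    have h1 : HasFDerivAt ψ (fderiv ℝ ψ (y + s • (-e))) (y + s • (-e)) :=
      (hψ.differentiable (by simp) _).hasFDerivAt
    have h2 : HasDerivAt (fun s : ℝ => y + s • (-e)) ((1 : ℝ) • (-e)) s :=
      ((hasDerivAt_id s).smul_const (-e)).const_add y
    have := (h1.comp_hasDerivAt s h2).neg
    have e2 : pd m ψ (y + s • (-e)) = -(fderiv ℝ ψ (y + s • (-e))) ((1 : ℝ) • (-e)) := by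
      rw [one_smul, map_neg, neg_neg]
      rfl
    rw [e2]
    exact this
  have hcont : Continuous (fun s : ℝ => pd m ψ (y + s • (-e))) := by
    have := pd_cont hψ m
    fun_prop
  have := intervalIntegral.integral_mul_deriv_eq_deriv_mul (a := 0) (b := 1)
    (u := fun s : ℝ => s) (u' := fun _ => 1)
    (fun s _ => hasDerivAt_id s) (fun s _ => hd s) (by simp) (hcont.intervalIntegrable _ _)
  simp only [T, id]
  rw [this]
  simp [sub_eq_add_neg]

lemma T_ibp {d : ℕ} {ψ : V d → ℝ} (hψ : ContDiff ℝ (⊤ : ℕ∞) ψ) (hc : HasCompactSupport ψ)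
    (m : Fin d) {g : V d → ℝ} (hg : Continuous g)
    (hper : ∀ y, g (y + EuclideanSpace.single m 1) = g y) :
    ∫ y, T id (EuclideanSpace.single m 1) g y * pd m ψ y =
      - (∫ y, g y * ψ y) + ∫ y, T 1 (EuclideanSpace.single m 1) g y * ψ y := by
  have h1 : Continuous (1 : ℝ → ℝ) := continuous_const
  have hT : ∀ y, g y * T id (-EuclideanSpace.single m 1) (pd m ψ) y =
      - (g y * ψ (y - EuclideanSpace.single m 1)) +
        g y * T 1 (-EuclideanSpace.single m 1) ψ y := by
    intro y
    rw [T_id_pd hψ]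
    ring
  have hi1 : Integrable (fun y => g y * ψ (y - EuclideanSpace.single m 1)) := by
    have := hψ.continuous
    exact integrable_mul hg (by fun_prop) (shift_supp hc _)
  have hi2 : Integrable (fun y => g y * T 1 (-EuclideanSpace.single m 1) ψ y) :=
    integrable_mul hg (T_cont h1 _ hψ.continuous) (T_supp _ _ hc)
  rw [T_adj continuous_id _ hg (pd_cont hψ m) (pd_supp hc m),
    T_adj h1 _ hg hψ.continuous hc]
  simp_rw [hT]
  have hadd := integral_add hi1.neg hi2
  simp only [Pi.neg_apply] at hadd
  rw [hadd, integral_neg,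
    ← integral_add_right_eq_self (fun y => g y * ψ (y - EuclideanSpace.single m 1))
      (EuclideanSpace.single m 1)]
  simp [hper]

/-- periodicity -/
def Per {d : ℕ} (g : V d → ℝ) : Prop := ∀ (y : V d) (z : Fin d → ℤ), g (y + perPt z) = g y

lemma perPt_apply {d : ℕ} (z : Fin d → ℤ) (i : Fin d) : perPt z i = (z i : ℝ) := rfl

lemma Per.single {d : ℕ} {g : V d → ℝ} (h : Per g) (m : Fin d) (y : V d) :
    g (y + EuclideanSpace.single m 1) = g y := by
  have : (EuclideanSpace.single m 1 : V d) = perPt (Pi.single m 1) := by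
    ext i
    rw [perPt_apply]
    by_cases hi : i = m
    · subst hi; simp
    · simp [hi]
  rw [this, h]

lemma T_per {d : ℕ} (w : ℝ → ℝ) (v : V d) {g : V d → ℝ} (h : Per g) : Per (T w v g) := by
  intro y z
  unfold T
  congr 1
  ext s
  rw [add_right_comm, h]

lemma isCompact_cube (d : ℕ) : IsCompact (unitCube d) := by
  have h : unitCube d = (EuclideanSpace.equiv (Fin d) ℝ).toHomeomorph ⁻¹'
      (Set.univ.pi fun _ => Icc (0 : ℝ) 1) := by
    ext y
    simp only [unitCube, Set.mem_preimage, Set.mem_pi, Set.mem_univ, true_imp_iff]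
    rfl
  rw [h]
  exact (Homeomorph.isCompact_preimage _).2 (isCompact_univ_pi fun _ => isCompact_Icc)

lemma Per.bdd {d : ℕ} {g : V d → ℝ} (h : Per g) (hg : Continuous g) :
    ∃ K : ℝ, ∀ y, |g y| ≤ K := by
  obtain ⟨K, hK⟩ := (isCompact_cube d).exists_bound_of_continuousOn hg.continuousOn
  refine ⟨K, fun y => ?_⟩
  rw [← h y (fun i => -⌊y i⌋)]
  apply hK
  intro i
  have : (y + perPt fun i => -⌊y i⌋ : V d) i = Int.fract (y i) := by
    rw [PiLp.add_apply, perPt_apply]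
    simp [Int.fract, sub_eq_add_neg]
  rw [this]
  exact ⟨Int.fract_nonneg _, (Int.fract_lt_one _).le⟩

/-- standard basis -/
def bas (d : ℕ) : Module.Basis (Fin d) ℝ (V d) := (EuclideanSpace.basisFun (Fin d) ℝ).toBasis

lemma bas_repr (d : ℕ) (y : V d) (i : Fin d) : (bas d).repr y i = y i := by
  simp [bas]

lemma pre_cube (d : ℕ) : (@WithLp.toLp 2 (Fin d → ℝ)) ⁻¹' unitCube d =
    (Set.univ.pi fun _ => Icc (0 : ℝ) 1) := by
  ext y
  simp only [unitCube, Set.mem_preimage, Set.mem_pi, Set.mem_univ, true_imp_iff]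
  rfl

lemma pre_fund (d : ℕ) : (@WithLp.toLp 2 (Fin d → ℝ)) ⁻¹' ZSpan.fundamentalDomain (bas d) =
    (Set.univ.pi fun _ => Ico (0 : ℝ) 1) := by
  ext y
  simp [bas_repr, Set.mem_pi]

lemma vol_cube (d : ℕ) : volume (unitCube d) = 1 := by
  rw [← (PiLp.volume_preserving_toLp (Fin d)).measure_preimage
    (isCompact_cube d).measurableSet.nullMeasurableSet, pre_cube, volume_pi_pi]
  simp

lemma cube_ae (d : ℕ) : unitCube d =ᵐ[volume] ZSpan.fundamentalDomain (bas d) := by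
  symm
  apply ae_eq_of_subset_of_measure_ge
  · intro y hy i
    have := hy i
    rw [bas_repr] at this
    exact Ico_subset_Icc_self this
  · rw [vol_cube, ← (PiLp.volume_preserving_toLp (Fin d)).measure_preimage
      (ZSpan.fundamentalDomain_measurableSet (bas d)).nullMeasurableSet, pre_fund, volume_pi_pi]
    simp
  · exact (ZSpan.fundamentalDomain_measurableSet (bas d)).nullMeasurableSet
  · rw [vol_cube]; simp

lemma Per.lattice {d : ℕ} {g : V d → ℝ} (h : Per g)
    (l : Submodule.span ℤ (Set.range (bas d))) (y : V d) : g (l +ᵥ y) = g y := by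
  have hl := (bas d).mem_span_iff_repr_mem ℤ (l : V d) |>.1 l.2
  choose z hz using hl
  have : (l : V d) = perPt z := by
    ext i
    rw [perPt_apply, ← bas_repr, ← hz]
    simp
  rw [Submodule.vadd_def, vadd_eq_add, add_comm, this, h]

open scoped Pointwise in
lemma Per.shift_cube {d : ℕ} {g : V d → ℝ} (h : Per g) (v : V d) :
    ∫ y in unitCube d, g (y + v) = ∫ y in unitCube d, g y := by
  rw [setIntegral_congr_set (cube_ae d), setIntegral_congr_set (cube_ae d)]
  have hf := ZSpan.isAddFundamentalDomain (bas d) volume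
  have : VAddInvariantMeasure (Submodule.span ℤ (Set.range (bas d))) (V d) volume :=
    inferInstanceAs <| VAddInvariantMeasure
      (Submodule.span ℤ (Set.range (bas d))).toAddSubgroup (V d) volume
  have hf2 := hf.vadd_of_comm v
  rw [hf.setIntegral_eq hf2 (f := g) h.lattice]
  have := (measurePreserving_add_right (volume : Measure (V d)) v).setIntegral_image_emb
    (measurableEmbedding_addRight v) g (ZSpan.fundamentalDomain (bas d))
  rw [← this]
  have hset : v +ᵥ ZSpan.fundamentalDomain (bas d) =
      (fun x => x + v) '' ZSpan.fundamentalDomain (bas d) := by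
    rw [← Set.image_vadd]
    apply Set.image_congr
    intro x _
    rw [vadd_eq_add, add_comm]
  rw [hset]

lemma T_mean {d : ℕ} (v : V d) {g : V d → ℝ} (h : Per g) (hg : Continuous g) :
    ∫ y in unitCube d, T 1 v g y = ∫ y in unitCube d, g y := by
  unfold T
  rw [swap_set _ (isCompact_cube d)]
  · simp [h.shift_cube]
  · unfold Function.uncurry
    simp only [Pi.one_apply, one_mul]
    fun_prop

/-- invariance in direction `v` -/
def Inv {d : ℕ} (v : V d) (g : V d → ℝ) : Prop := ∀ (t : ℝ) y, g (y + t • v) = g y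

lemma T_inv {d : ℕ} (w : ℝ → ℝ) (v v' : V d) {g : V d → ℝ} (h : Inv v' g) :
    Inv v' (T w v g) := by
  intro t y
  unfold T
  congr 1
  ext s
  rw [add_right_comm, h]

lemma T_inv_self {d : ℕ} (m : Fin d) {g : V d → ℝ} (h : Per g) :
    Inv (EuclideanSpace.single m 1) (T 1 (EuclideanSpace.single m 1) g) := by
  intro t y
  have hp : Function.Periodic (fun s : ℝ => g (y + s • EuclideanSpace.single m (1 : ℝ))) 1 := by
    intro s
    simp only
    rw [add_smul, one_smul, ← add_assoc, h.single]
  have := hp.intervalIntegral_add_eq t 0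
  simp only [T, Pi.one_apply, one_mul]
  rw [zero_add] at this
  rw [← this]
  have h2 := intervalIntegral.integral_comp_add_right (a := 0) (b := 1)
    (fun s : ℝ => g (y + s • EuclideanSpace.single m (1 : ℝ))) t
  rw [zero_add, add_comm 1 t] at h2
  rw [← h2]
  congr 1
  ext s
  rw [add_assoc, ← add_smul, add_comm t s]

lemma const_of_inv {d : ℕ} {g : V d → ℝ}
    (h : ∀ m, Inv (EuclideanSpace.single m 1) g) (y : V d) : g y = g 0 := by
  have key : ∀ S : Finset (Fin d),
      g (∑ i ∈ S, y i • (EuclideanSpace.single i 1 : V d)) = g 0 := by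
    intro S
    induction S using Finset.induction_on with
    | empty => simp
    | insert m S hm ih => rw [Finset.sum_insert hm, add_comm, h m, ih]
  rw [← key Finset.univ]
  congr 1
  ext i
  simp [Pi.single_apply]

lemma decomp {d : ℕ} (b : Fin d → V d → ℝ) (hb : ∀ i, Continuous (b i))
    (hp : ∀ i, Per (b i)) (hdf : DF b) (S : Finset (Fin d)) :
    ∃ (φ : Fin d → Fin d → V d → ℝ) (c : Fin d → V d → ℝ),
      (∀ k i, Continuous (φ k i)) ∧ (∀ k i, Per (φ k i)) ∧ (∀ k i y, φ k i y = -φ i k y) ∧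
      (∀ i, Continuous (c i)) ∧ (∀ i, Per (c i)) ∧ DF c ∧
      (∀ i, ∫ y in unitCube d, c i y = ∫ y in unitCube d, b i y) ∧
      (∀ i, ∀ m ∈ S, Inv (EuclideanSpace.single m 1) (c i)) ∧
      (∀ i, ∀ ψ : V d → ℝ, ContDiff ℝ (⊤ : ℕ∞) ψ → HasCompactSupport ψ →
        ∫ y, b i y * ψ y = (∫ y, c i y * ψ y) - ∑ k, ∫ y, φ k i y * pd k ψ y) := by
  induction S using Finset.induction_on with
  | empty =>
    exact ⟨fun _ _ _ => 0, b, fun _ _ => continuous_const, fun _ _ _ _ => rfl, by simp, hb, hp,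
      hdf, fun _ => rfl, by simp, by simp⟩
  | insert m S hm ih =>
    obtain ⟨φ, c, h1, h2, h3, h4, h5, h6, h7, h8, h9⟩ := ih
    have hone : Continuous (1 : ℝ → ℝ) := continuous_const
    set e : V d := EuclideanSpace.single m 1 with he
    have hJ : ∀ i, Continuous (T id e (c i)) := fun i => T_cont continuous_id e (h4 i)
    have hJp : ∀ i, Per (T id e (c i)) := fun i => T_per id e (h5 i)
    refine ⟨fun k i y => φ k i y + ((if k = m then 1 else 0) * T id e (c i) y
      - (if i = m then 1 else 0) * T id e (c k) y), fun i => T 1 e (c i), ?_, ?_, ?_,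
      fun i => T_cont hone e (h4 i), fun i => T_per 1 e (h5 i), DF_T hone e h4 h6, ?_, ?_, ?_⟩
    · intro k i
      have := h1 k i
      have := hJ k
      have := hJ i
      fun_prop
    · intro k i y z
      simp only
      rw [h2 k i, hJp k, hJp i]
    · intro k i y
      simp only
      rw [h3 k i]
      ring
    · intro i
      rw [T_mean e (h5 i) (h4 i), h7]
    · intro i m' hm'
      rcases Finset.mem_insert.1 hm' with rfl | h
      · exact T_inv_self _ (h5 i)
      · exact T_inv _ _ _ (h8 i m' h)
    · intro i ψ hψ hc
      have hi1 : ∀ k, Integrable (fun y => φ k i y * pd k ψ y) := fun k =>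
        integrable_mul (h1 k i) (pd_cont hψ k) (pd_supp hc k)
      have hi2 : ∀ j k, Integrable (fun y => T id e (c j) y * pd k ψ y) := fun j k =>
        integrable_mul (hJ j) (pd_cont hψ k) (pd_supp hc k)
      have hk : ∀ k, ∫ y, (φ k i y + ((if k = m then 1 else 0) * T id e (c i) y
          - (if i = m then 1 else 0) * T id e (c k) y)) * pd k ψ y =
          (∫ y, φ k i y * pd k ψ y) + ((if k = m then 1 else 0) * ∫ y, T id e (c i) y * pd k ψ y)
          - (if i = m then 1 else 0) * ∫ y, T id e (c k) y * pd k ψ y := by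
        intro k
        rw [← integral_const_mul, ← integral_const_mul, ← integral_add (hi1 k),
          ← integral_sub]
        · congr 1
          ext y
          ring
        · exact (hi1 k).add ((hi2 i k).const_mul _)
        · exact (hi2 k k).const_mul _
        · exact (hi2 i k).const_mul _
      simp_rw [hk]
      rw [Finset.sum_sub_distrib, Finset.sum_add_distrib, ← Finset.mul_sum,
        DF_T continuous_id e h4 h6 ψ hψ hc, h9 i ψ hψ hc]
      have := T_ibp hψ hc m (h4 i) ((h5 i).single m)
      simp only [ite_mul, one_mul, zero_mul, Finset.sum_ite_eq',
        Finset.mem_univ, if_true, mul_zero]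
      rw [this]
      ring

lemma main_aux {d : ℕ} (b : Fin d → V d → ℝ) (hb : ∀ i, Continuous (b i))
    (hp : ∀ i, Per (b i)) (hdf : DF b) (h0 : ∀ i, ∫ y in unitCube d, b i y = 0) :
    ∃ (φ : Fin d → Fin d → V d → ℝ),
      (∀ k i, Continuous (φ k i)) ∧ (∀ k i, Per (φ k i)) ∧ (∀ k i y, φ k i y = -φ i k y) ∧
      (∀ i, ∀ ψ : V d → ℝ, ContDiff ℝ (⊤ : ℕ∞) ψ → HasCompactSupport ψ →
        ∫ y, b i y * ψ y = - ∑ k, ∫ y, φ k i y * pd k ψ y) := by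
  obtain ⟨φ, c, h1, h2, h3, h4, h5, h6, h7, h8, h9⟩ := decomp b hb hp hdf Finset.univ
  have hc : ∀ i y, c i y = 0 := by
    intro i y
    have h := const_of_inv (g := c i) (fun m => h8 i m (Finset.mem_univ m))
    have h' := h7 i
    simp_rw [h] at h'
    rw [h0, setIntegral_const, measureReal_def, vol_cube] at h'
    rw [h y]
    simpa using h'
  refine ⟨φ, h1, h2, h3, fun i ψ hψ hcs => ?_⟩
  rw [h9 i ψ hψ hcs]
  simp [hc]

lemma integral_pd {d : ℕ} {ψ : V d → ℝ} (hψ : ContDiff ℝ (⊤ : ℕ∞) ψ)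
    (hc : HasCompactSupport ψ) (k : Fin d) : ∫ y, pd k ψ y = 0 := by
  have hi : Integrable (pd k ψ) := (pd_cont hψ k).integrable_of_hasCompactSupport (pd_supp hc k)
  have := integral_mul_fderiv_eq_neg_fderiv_mul_of_integrable (μ := (volume : Measure (V d)))
    (f := fun _ => (1 : ℝ)) (g := ψ) (v := EuclideanSpace.single k 1) (by simp)
    (by simp only [one_mul]; exact hi)
    (by simpa using hψ.continuous.integrable_of_hasCompactSupport hc) (by simp)
    (fun x _ => hψ.differentiable (by simp) x)
  simp only [one_mul, fderiv_fun_const, Pi.zero_apply, ContinuousLinearMap.zero_apply, zero_mul,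
    integral_zero, neg_zero] at this
  exact this

end FluxAux

/-- **Lemma 2.1.** Existence of the flux corrector `φ = (φ_kij)`: bounded continuous
periodic functions, antisymmetric in `(k,i)`, with `b_ij = ∂_k φ_kij` distributionally. -/
theorem flux_corrector_exists
    (d : ℕ) (hd : 2 ≤ d) (lam M : ℝ) (hlam0 : 0 < lam) (hlam1 : lam ≤ 1) (hM : 0 < M)
    (A : EuclideanSpace ℝ (Fin d) → Matrix (Fin d) (Fin d) ℝ) (hA : MemA d lam M A)
    (χ : Fin d → EuclideanSpace ℝ (Fin d) → ℝ) (hχ : IsCorrector A χ)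
    (Ahat : Matrix (Fin d) (Fin d) ℝ) (hAhat : Ahat = homMatrix A χ)
    (b : Fin d → Fin d → EuclideanSpace ℝ (Fin d) → ℝ)
    (hb : ∀ i j y, b i j y = A y i j + (∑ k, A y i k * gradient (χ j) y k) - Ahat i j) :
    ∃ φ : Fin d → Fin d → Fin d → EuclideanSpace ℝ (Fin d) → ℝ,
      (∀ k i j, Continuous (φ k i j)) ∧
      (∀ k i j, ∃ K : ℝ, ∀ y, |φ k i j y| ≤ K) ∧
      (∀ k i j (y : EuclideanSpace ℝ (Fin d)) (z : Fin d → ℤ), φ k i j (y + perPt z) = φ k i j y) ∧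
      (∀ k i j y, φ k i j y = -φ i k j y) ∧
      (∀ i j, ∀ ψ : EuclideanSpace ℝ (Fin d) → ℝ, ContDiff ℝ (⊤ : ℕ∞) ψ → HasCompactSupport ψ →
        (∫ y, b i j y * ψ y) = -∑ k, ∫ y, φ k i j y * gradient ψ y k) := by
  have hAc : ∀ i j, Continuous (fun y => A y i j) := by
    intro i j
    have : LipschitzWith M.toNNReal (fun y => A y i j) := by
      apply LipschitzWith.of_dist_le_mul
      intro x y
      rw [Real.dist_eq, dist_eq_norm, Real.coe_toNNReal _ hM.le]
      exact hA.lipschitz x y i j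
    exact this.continuous
  have hgc : ∀ j k, Continuous (fun y => gradient (χ j) y k) := by
    intro j k
    have h1 : Continuous (fderiv ℝ (χ j)) := (hχ j).1.continuous_fderiv (by simp)
    simp_rw [FluxAux.gradient_apply]
    unfold FluxAux.pd
    fun_prop
  have hfc : ∀ i j, Continuous (fun y => A y i j + ∑ k, A y i k * gradient (χ j) y k) := by
    intro i j
    exact (hAc i j).add (continuous_finsetSum _ fun k _ => (hAc i k).mul (hgc j k))
  have hbe : ∀ i j, b i j = fun y => (A y i j + ∑ k, A y i k * gradient (χ j) y k) - Ahat i j :=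
    fun i j => funext (hb i j)
  have hbc : ∀ i j, Continuous (b i j) := by
    intro i j
    rw [hbe]
    exact (hfc i j).sub continuous_const
  have hbp : ∀ i j, FluxAux.Per (b i j) := by
    intro i j y z
    have hg : ∀ k, gradient (χ j) (y + perPt z) k = gradient (χ j) y k := by
      intro k
      have : (fun x => χ j (x + perPt z)) = χ j := funext fun x => (hχ j).2.1 x z
      rw [FluxAux.gradient_apply, FluxAux.gradient_apply, FluxAux.pd, FluxAux.pd,
        ← fderiv_comp_add_right, this]
    simp only [hb, hA.periodic, hg]
  have hb0 : ∀ i j, ∫ y in unitCube d, b i j y = 0 := by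
    intro i j
    have hK := FluxAux.isCompact_cube d
    simp_rw [hb]
    rw [integral_sub ((hfc i j).continuousOn.integrableOn_compact hK)
      (continuous_const.continuousOn.integrableOn_compact hK), setIntegral_const,
      measureReal_def, FluxAux.vol_cube, hAhat]
    simp [homMatrix]
  have hdf : ∀ j, FluxAux.DF (fun i => b i j) := by
    intro j ψ hψ hc
    have h := (hχ j).2.2.2 ψ hψ hc
    have hi : ∀ i, Integrable (fun y => b i j y * FluxAux.pd i ψ y) := fun i =>
      FluxAux.integrable_mul (hbc i j) (FluxAux.pd_cont hψ i) (FluxAux.pd_supp hc i)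
    have hi2 : ∀ i, Integrable (fun y => Ahat i j * FluxAux.pd i ψ y) := fun i =>
      FluxAux.integrable_mul continuous_const (FluxAux.pd_cont hψ i) (FluxAux.pd_supp hc i)
    have he : ∀ y, bform (A y) (gradient (χ j) y + EuclideanSpace.single j 1) (gradient ψ y) =
        ∑ i, (b i j y * FluxAux.pd i ψ y + Ahat i j * FluxAux.pd i ψ y) := by
      intro y
      unfold bform
      apply Finset.sum_congr rfl
      intro i _
      rw [FluxAux.gradient_apply ψ, ← Finset.sum_mul, ← add_mul, hb]
      congr 1
      simp only [PiLp.add_apply, mul_add, Finset.sum_add_distrib]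
      simp
      ring
    simp_rw [he] at h
    have hi3 : ∀ i, Integrable
        (fun y => b i j y * FluxAux.pd i ψ y + Ahat i j * FluxAux.pd i ψ y) :=
      fun i => (hi i).add (hi2 i)
    rw [integral_finsetSum _ fun i _ => hi3 i] at h
    simp_rw [fun i => integral_add (hi i) (hi2 i), integral_const_mul,
      fun i => FluxAux.integral_pd hψ hc i] at h
    simpa using h
  choose φ h1 h2 h3 h4 using fun j =>
    FluxAux.main_aux (fun i => b i j) (fun i => hbc i j) (fun i => hbp i j) (hdf j)
      (fun i => hb0 i j)
  refine ⟨fun k i j => φ j k i, fun k i j => h1 j k i, fun k i j => (h2 j k i).bdd (h1 j k i),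
    fun k i j => h2 j k i, fun k i j => h3 j k i, fun i j ψ hψ hc => ?_⟩
  simp_rw [FluxAux.gradient_apply]
  exact h4 j i ψ hψ hc

end
end

section
/- Let d ≥ 2, λ ∈ (0,1], M > 0, A ∈ 𝒜(λ,M), and let χ, Â be the corrector and homogenized matrix, and φ = (φ_kij) a flux corrector (bounded continuous ℤ^d-periodic functions with φ_kij = −φ_ikj and b_ij = ∂_k φ_kij distributionally, where b_ij = a_ij + a_ik ∂_k χ_j − â_ij). Let Ω ⊂ ℝ^d be open, ε > 0, u_ε ∈ C¹(Ω) and u_0 ∈ C²(Ω), and suppose ℒ_ε(u_ε) = ℒ_0(u_0) in Ω in the weak sense, i.e. ∫_Ω ⟨A(x/ε)∇u_ε, ∇ψ⟩ dx = ∫_Ω ⟨Â∇u_0, ∇ψ⟩ dx for every smooth compactly supported ψ on Ω. Then for every smooth compactly supported ψ on Ω, ∫_Ω ⟨A(x/ε)∇(u_ε − u_0 − ε χ_j(x/ε) ∂_j u_0), ∇ψ⟩ dx = ε ∫_Ω φ_kij(x/ε) (∂_k ∂_j u_0) (∂_i ψ) dx − ε ∫_Ω χ_j(x/ε) ⟨A(x/ε)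 ∇(∂_j u_0), ∇ψ⟩ dx. -/
open MeasureTheory Metric Set
open scoped ENNReal NNReal

noncomputable section

open Filter Topology Pointwise in
theorem conv_limit {d : ℕ} (c h : EuclideanSpace ℝ (Fin d) → ℝ) (hc : Continuous c)
    (hh : Continuous h) (hs : HasCompactSupport h)
    (ρ : ℕ → ContDiffBump (0 : EuclideanSpace ℝ (Fin d)))
    (hρ : Tendsto (fun n => (ρ n).rOut) atTop (𝓝 0)) (hρ1 : ∀ n, (ρ n).rOut ≤ 1) :
    Tendsto (fun n => ∫ y, c y * (convolution ((ρ n).normed volume) h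
      (ContinuousLinearMap.lsmul ℝ ℝ) volume) y) atTop (𝓝 (∫ y, c y * h y)) := by
  obtain ⟨C, hC⟩ := hh.bounded_above_of_compact_support hs
  set K : Set (EuclideanSpace ℝ (Fin d)) := closedBall 0 1 + tsupport h with hK
  have hKc : IsCompact K := (isCompact_closedBall _ _).add hs
  have hcont : ∀ n, Continuous (convolution ((ρ n).normed volume) h
      (ContinuousLinearMap.lsmul ℝ ℝ) volume) := fun n =>
    hs.continuous_convolution_right _ ((ρ n).continuous_normed.locallyIntegrable) hh
  refine tendsto_integral_of_dominated_convergence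
    (K.indicator fun y => |c y| * (3 * C)) ?_ ?_ ?_ ?_
  · intro n
    exact (hc.mul (hcont n)).aestronglyMeasurable
  · rw [integrable_indicator_iff hKc.measurableSet]
    exact (hc.abs.mul continuous_const).continuousOn.integrableOn_compact hKc
  · intro n
    refine Eventually.of_forall fun y => ?_
    by_cases hy : y ∈ K
    · rw [indicator_of_mem hy, norm_mul, Real.norm_eq_abs]
      refine mul_le_mul_of_nonneg_left ?_ (abs_nonneg _)
      have h1 := ContDiffBump.dist_normed_convolution_le (φ := ρ n) (μ := volume) (g := h)
        (x₀ := y) (ε := 2 * C) hh.aestronglyMeasurable (fun x _ => by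
          rw [dist_eq_norm]
          linarith [norm_sub_le (h x) (h y), hC x, hC y])
      rw [dist_eq_norm] at h1
      have h2 := norm_le_norm_sub_add ((convolution ((ρ n).normed volume) h
        (ContinuousLinearMap.lsmul ℝ ℝ) volume) y) (h y)
      linarith [hC y]
    · rw [indicator_of_notMem hy]
      have : (convolution ((ρ n).normed volume) h
        (ContinuousLinearMap.lsmul ℝ ℝ) volume) y = 0 := by
        by_contra hne
        have := support_convolution_subset (ContinuousLinearMap.lsmul ℝ ℝ)
          (Function.mem_support.2 hne)
        rw [(ρ n).support_normed_eq] at this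
        apply hy
        exact Set.add_subset_add ((ball_subset_ball (hρ1 n)).trans ball_subset_closedBall)
          (subset_tsupport _) this
      simp [this]
  · refine Eventually.of_forall fun y => ?_
    exact (ContDiffBump.convolution_tendsto_right_of_continuous hρ hh y).const_mul _

theorem grad_apply {d : ℕ} (f : EuclideanSpace ℝ (Fin d) → ℝ) (x : EuclideanSpace ℝ (Fin d))
    (i : Fin d) : gradient f x i = fderiv ℝ f x (EuclideanSpace.single i 1) := by
  have h : inner ℝ (gradient f x) (EuclideanSpace.single i (1:ℝ)) =
      fderiv ℝ f x (EuclideanSpace.single i 1) := by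
    unfold gradient
    rw [InnerProductSpace.toDual_symm_apply]
  rw [← h, EuclideanSpace.inner_single_right]
  simp

open Filter Topology Pointwise in
theorem div_extend {d : ℕ} (b : EuclideanSpace ℝ (Fin d) → ℝ)
    (φ : Fin d → EuclideanSpace ℝ (Fin d) → ℝ) (hb : Continuous b)
    (hφ : ∀ k, Continuous (φ k))
    (H : ∀ ψ : EuclideanSpace ℝ (Fin d) → ℝ, ContDiff ℝ (⊤ : ℕ∞) ψ → HasCompactSupport ψ →
      (∫ y, b y * ψ y) = -∑ k, ∫ y, φ k y * gradient ψ y k)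
    (g : EuclideanSpace ℝ (Fin d) → ℝ) (hg : ContDiff ℝ 1 g) (hs : HasCompactSupport g) :
    (∫ y, b y * g y) = -∑ k, ∫ y, φ k y * gradient g y k := by
  let ρ : ℕ → ContDiffBump (0 : EuclideanSpace ℝ (Fin d)) := fun n =>
    ⟨1 / ((n : ℝ) + 1) / 2, 1 / ((n : ℝ) + 1), by positivity, by
      have : (0:ℝ) < 1 / ((n : ℝ) + 1) := by positivity
      linarith⟩
  have hρ : Tendsto (fun n => (ρ n).rOut) atTop (𝓝 0) :=
    tendsto_one_div_add_atTop_nhds_zero_nat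
  have hρ1 : ∀ n, (ρ n).rOut ≤ 1 := fun n => by
    change 1 / ((n : ℝ) + 1) ≤ 1
    rw [div_le_one (by positivity)]
    linarith [(Nat.cast_nonneg n : (0:ℝ) ≤ n)]
  have hgi : LocallyIntegrable g volume := hg.continuous.locallyIntegrable
  have hL := conv_limit b g hb hg.continuous hs ρ hρ hρ1
  have hdc : ∀ k, Continuous (fun y => gradient g y k) := fun k => by
    simp only [grad_apply]
    exact (hg.continuous_fderiv one_ne_zero).clm_apply continuous_const
  have hds : ∀ k, HasCompactSupport (fun y => gradient g y k) := fun k => by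
    simp only [grad_apply]
    exact hs.fderiv_apply ℝ _
  have hR : Tendsto (fun n => -∑ k, ∫ y, φ k y * (convolution ((ρ n).normed volume)
      (fun y => gradient g y k) (ContinuousLinearMap.lsmul ℝ ℝ) volume) y) atTop
      (𝓝 (-∑ k, ∫ y, φ k y * gradient g y k)) :=
    (tendsto_finsetSum _ fun k _ =>
      conv_limit (φ k) _ (hφ k) (hdc k) (hds k) ρ hρ hρ1).neg
  refine tendsto_nhds_unique hL (hR.congr fun n => ?_)
  rw [H _ ((ρ n).hasCompactSupport_normed.contDiff_convolution_left _
    (ρ n).contDiff_normed hgi) ((ρ n).hasCompactSupport_normed.convolution _ hs)]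
  congr 1
  refine Finset.sum_congr rfl fun k _ => ?_
  congr 1
  ext y
  congr 1
  rw [grad_apply, (hs.hasFDerivAt_convolution_right _
    (ρ n).continuous_normed.locallyIntegrable hg y).fderiv,
    convolution_precompR_apply _ (ρ n).continuous_normed.locallyIntegrable (hs.fderiv ℝ)
      (hg.continuous_fderiv one_ne_zero)]
  simp only [grad_apply]

theorem div_scaled {d : ℕ} (b : EuclideanSpace ℝ (Fin d) → ℝ)
    (φ : Fin d → EuclideanSpace ℝ (Fin d) → ℝ) (hb : Continuous b)
    (hφ : ∀ k, Continuous (φ k))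
    (H : ∀ ψ : EuclideanSpace ℝ (Fin d) → ℝ, ContDiff ℝ (⊤ : ℕ∞) ψ → HasCompactSupport ψ →
      (∫ y, b y * ψ y) = -∑ k, ∫ y, φ k y * gradient ψ y k) (ε : ℝ) (hε : 0 < ε)
    (g : EuclideanSpace ℝ (Fin d) → ℝ) (hg : ContDiff ℝ 1 g) (hs : HasCompactSupport g) :
    (∫ y, b (ε⁻¹ • y) * g y) = -∑ k, ε * ∫ y, φ k (ε⁻¹ • y) * gradient g y k := by
  have h := div_extend b φ hb hφ H (fun y => g (ε • y))
    (hg.comp (contDiff_const_smul ε)) (hs.comp_homeomorph (Homeomorph.smulOfNeZero ε hε.ne'))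
  have h1 := Measure.integral_comp_smul (volume : Measure (EuclideanSpace ℝ (Fin d)))
    (fun y => b (ε⁻¹ • y) * g y) ε
  have h2 := fun k => Measure.integral_comp_smul (volume : Measure (EuclideanSpace ℝ (Fin d)))
    (fun y => φ k (ε⁻¹ • y) * gradient g y k) ε
  simp only [smul_smul, inv_mul_cancel₀ hε.ne', one_smul] at h1 h2
  have h3 : ∀ k y, gradient (fun y => g (ε • y)) y k = ε * gradient g (ε • y) k := by
    intro k y
    rw [grad_apply, grad_apply, fderiv_comp_smul]
    simp
  simp only [h3] at h
  have h4 : ∀ k, ∫ y, φ k y * (ε * gradient g (ε • y) k) =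
      ε * ∫ y, φ k y * gradient g (ε • y) k := by
    intro k
    rw [← integral_const_mul]
    congr 1
    ext y
    ring
  simp only [h4, h2, h1, smul_eq_mul] at h
  set D := |(ε ^ Module.finrank ℝ (EuclideanSpace ℝ (Fin d)))⁻¹| with hD
  have hD0 : D ≠ 0 := by positivity
  apply mul_left_cancel₀ hD0
  rw [h, mul_neg, Finset.mul_sum]
  congr 1
  refine Finset.sum_congr rfl fun k _ => ?_
  ring

theorem mul_cont {d : ℕ} {Ω : Set (EuclideanSpace ℝ (Fin d))} (hΩ : IsOpen Ω)
    {c P : EuclideanSpace ℝ (Fin d) → ℝ} (hc : ContinuousOn c Ω) (hP : Continuous P)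
    (ht : tsupport P ⊆ Ω) : Continuous fun x => c x * P x := by
  refine continuous_of_tsupport fun x hx => ?_
  have hx' : x ∈ tsupport P := closure_mono (Function.support_mul_subset_right c P) hx
  exact (hc.continuousAt (hΩ.mem_nhds (ht hx'))).mul hP.continuousAt

theorem mul_integ {d : ℕ} {Ω : Set (EuclideanSpace ℝ (Fin d))} (hΩ : IsOpen Ω)
    {c P : EuclideanSpace ℝ (Fin d) → ℝ} (hc : ContinuousOn c Ω) (hP : Continuous P)
    (hs : HasCompactSupport P) (ht : tsupport P ⊆ Ω) :
    Integrable (fun x => c x * P x) (volume.restrict Ω) :=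
  ((mul_cont hΩ hc hP ht).integrable_of_hasCompactSupport hs.mul_left).restrict

theorem grad_cont {d : ℕ} {Ω : Set (EuclideanSpace ℝ (Fin d))} (hΩ : IsOpen Ω)
    {u : EuclideanSpace ℝ (Fin d) → ℝ} (hu : ContDiffOn ℝ 1 u Ω) (i : Fin d) :
    ContinuousOn (fun x => gradient u x i) Ω := by
  simp only [grad_apply]
  exact (hu.continuousOn_fderiv_of_isOpen hΩ le_rfl).clm_apply continuousOn_const

theorem grad_contDiffOn {d : ℕ} {Ω : Set (EuclideanSpace ℝ (Fin d))} (hΩ : IsOpen Ω)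
    {u : EuclideanSpace ℝ (Fin d) → ℝ} (hu : ContDiffOn ℝ 2 u Ω) (i : Fin d) :
    ContDiffOn ℝ 1 (fun x => gradient u x i) Ω := by
  simp only [grad_apply]
  exact (hu.fderiv_of_isOpen hΩ (by norm_num)).clm_apply contDiffOn_const

theorem grad_tsupport {d : ℕ} (u : EuclideanSpace ℝ (Fin d) → ℝ) (i : Fin d) :
    tsupport (fun x => gradient u x i) ⊆ tsupport u := by
  simp only [grad_apply]
  exact tsupport_fderiv_apply_subset ℝ _

theorem grad_symm {d : ℕ} {u : EuclideanSpace ℝ (Fin d) → ℝ} (hu : ContDiff ℝ 2 u)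
    (x : EuclideanSpace ℝ (Fin d)) (i k : Fin d) :
    gradient (fun y => gradient u y i) x k = gradient (fun y => gradient u y k) x i := by
  simp only [grad_apply]
  have hd : DifferentiableAt ℝ (fderiv ℝ u) x :=
    ((hu.fderiv_right (m := 1) (by norm_num)).differentiable one_ne_zero) x
  have key : ∀ v w, fderiv ℝ (fun y => fderiv ℝ u y v) x w = fderiv ℝ (fderiv ℝ u) x w v := by
    intro v w
    rw [fderiv_clm_apply hd (differentiableAt_const v)]
    simp
  rw [key, key]
  exact (hu.contDiffAt.isSymmSndFDerivAt (by simp)) _ _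

theorem div_product {d : ℕ} (b : EuclideanSpace ℝ (Fin d) → ℝ)
    (φ : Fin d → EuclideanSpace ℝ (Fin d) → ℝ) (hb : Continuous b)
    (hφ : ∀ k, Continuous (φ k))
    (H : ∀ ψ : EuclideanSpace ℝ (Fin d) → ℝ, ContDiff ℝ (⊤ : ℕ∞) ψ → HasCompactSupport ψ →
      (∫ y, b y * ψ y) = -∑ k, ∫ y, φ k y * gradient ψ y k) (ε : ℝ) (hε : 0 < ε)
    {Ω : Set (EuclideanSpace ℝ (Fin d))} (hΩ : IsOpen Ω)
    (V P : EuclideanSpace ℝ (Fin d) → ℝ) (hV : ContDiffOn ℝ 1 V Ω) (hP : ContDiff ℝ 1 P)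
    (hs : HasCompactSupport P) (ht : tsupport P ⊆ Ω) :
    (∫ x in Ω, b (ε⁻¹ • x) * V x * P x) =
      -∑ k, ε * ((∫ x in Ω, φ k (ε⁻¹ • x) * gradient V x k * P x) +
        ∫ x in Ω, φ k (ε⁻¹ • x) * V x * gradient P x k) := by
  have hg : ContDiff ℝ 1 (fun x => V x * P x) := by
    rw [contDiff_iff_contDiffAt]
    intro x
    by_cases hx : x ∈ tsupport (fun x => V x * P x)
    swap
    · refine (contDiffAt_const (c := (0 : ℝ))).congr_of_eventuallyEq ?_
      exact notMem_tsupport_iff_eventuallyEq.1 hx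
    have hx' : x ∈ tsupport P := closure_mono (Function.support_mul_subset_right V P) hx
    exact (hV.contDiffAt (hΩ.mem_nhds (ht hx'))).mul hP.contDiffAt
  have hgs : HasCompactSupport (fun x => V x * P x) := hs.mul_left
  have h := div_scaled b φ hb hφ H ε hε _ hg hgs
  have hsc : Continuous fun x : EuclideanSpace ℝ (Fin d) => ε⁻¹ • x := continuous_const_smul _
  have hz : ∀ x, x ∉ Ω → P x = 0 := fun x hx => image_eq_zero_of_notMem_tsupport fun h => hx (ht h)
  have hgz : ∀ k x, x ∉ Ω → gradient (fun x => V x * P x) x k = 0 := fun k x hx =>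
    image_eq_zero_of_notMem_tsupport (f := fun x => gradient (fun x => V x * P x) x k) fun h =>
      hx (ht (closure_mono (Function.support_mul_subset_right V P) (grad_tsupport _ _ h)))
  have hpc : ∀ k, Continuous fun x => gradient P x k := fun k => by
    simpa using grad_cont isOpen_univ hP.contDiffOn k
  calc (∫ x in Ω, b (ε⁻¹ • x) * V x * P x)
      = ∫ x, b (ε⁻¹ • x) * (V x * P x) := by
        rw [setIntegral_eq_integral_of_forall_compl_eq_zero]
        · simp only [mul_assoc]
        · intro x hx
          simp [hz x hx]
    _ = _ := by
        rw [h]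
        congr 1
        refine Finset.sum_congr rfl fun k _ => ?_
        congr 1
        rw [← integral_add, ← setIntegral_eq_integral_of_forall_compl_eq_zero (s := Ω)]
        · refine setIntegral_congr_fun hΩ.measurableSet fun x hx => ?_
          have h1 : DifferentiableAt ℝ V x :=
            (hV.contDiffAt (hΩ.mem_nhds hx)).differentiableAt one_ne_zero
          have h2 : DifferentiableAt ℝ P x := hP.differentiable one_ne_zero x
          simp only [grad_apply]
          rw [fderiv_fun_mul h1 h2]
          simp only [add_apply, smul_apply, smul_eq_mul]
          ring
        · intro x hx
          rw [hgz k x hx, mul_zero]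
        · exact mul_integ hΩ (((hφ k).comp hsc).continuousOn.mul (grad_cont hΩ hV k))
            hP.continuous hs ht
        · exact mul_integ hΩ (((hφ k).comp hsc).continuousOn.mul hV.continuousOn)
            (hpc k) (by simpa only [grad_apply] using hs.fderiv_apply ℝ _)
            ((grad_tsupport _ _).trans ht)

theorem bform_integ {d : ℕ} {Ω : Set (EuclideanSpace ℝ (Fin d))} (hΩ : IsOpen Ω)
    {c : EuclideanSpace ℝ (Fin d) → ℝ}
    {B : EuclideanSpace ℝ (Fin d) → Matrix (Fin d) (Fin d) ℝ}
    {ξ : EuclideanSpace ℝ (Fin d) → EuclideanSpace ℝ (Fin d)}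
    {ψ : EuclideanSpace ℝ (Fin d) → ℝ} (hc : ContinuousOn c Ω)
    (hB : ∀ i j, ContinuousOn (fun x => B x i j) Ω) (hξ : ∀ j, ContinuousOn (fun x => ξ x j) Ω)
    (hψ : ContDiff ℝ 1 ψ) (hs : HasCompactSupport ψ) (ht : tsupport ψ ⊆ Ω) :
    Integrable (fun x => c x * bform (B x) (ξ x) (gradient ψ x)) (volume.restrict Ω) := by
  unfold bform
  simp only [Finset.mul_sum]
  refine integrable_finsetSum _ fun i _ => integrable_finsetSum _ fun j _ => ?_
  have := mul_integ hΩ ((hc.mul (hB i j)).mul (hξ j))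
    (P := fun x => gradient ψ x i) (by simpa using grad_cont isOpen_univ hψ.contDiffOn i)
    (by simpa only [grad_apply] using hs.fderiv_apply ℝ _)
    ((grad_tsupport _ _).trans ht)
  simpa only [mul_assoc, Pi.mul_apply] using this

/-- **Lemma 2.2.** The identity satisfied by `w = u_ε - u₀ - ε χ_j(x/ε) ∂_j u₀`
when `ℒ_ε u_ε = ℒ_0 u₀` in `Ω`, tested against any test function `ψ`. -/
theorem homogenization_error_identity
    (d : ℕ) (hd : 2 ≤ d) (lam M : ℝ) (hlam0 : 0 < lam) (hlam1 : lam ≤ 1) (hM : 0 < M)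
    (A : EuclideanSpace ℝ (Fin d) → Matrix (Fin d) (Fin d) ℝ) (hA : MemA d lam M A)
    (χ : Fin d → EuclideanSpace ℝ (Fin d) → ℝ) (hχ : IsCorrector A χ)
    (Ahat : Matrix (Fin d) (Fin d) ℝ) (hAhat : Ahat = homMatrix A χ)
    (b : Fin d → Fin d → EuclideanSpace ℝ (Fin d) → ℝ)
    (hb : ∀ i j y, b i j y = A y i j + (∑ k, A y i k * gradient (χ j) y k) - Ahat i j)
    (φ : Fin d → Fin d → Fin d → EuclideanSpace ℝ (Fin d) → ℝ)
    (hφcont : ∀ k i j, Continuous (φ k i j))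
    (hφbd : ∀ k i j, ∃ K : ℝ, ∀ y, |φ k i j y| ≤ K)
    (hφper : ∀ k i j (y : EuclideanSpace ℝ (Fin d)) (z : Fin d → ℤ), φ k i j (y + perPt z) = φ k i j y)
    (hφanti : ∀ k i j y, φ k i j y = -φ i k j y)
    (hφdiv : ∀ i j, ∀ ψ : EuclideanSpace ℝ (Fin d) → ℝ, ContDiff ℝ (⊤ : ℕ∞) ψ → HasCompactSupport ψ →
      (∫ y, b i j y * ψ y) = -∑ k, ∫ y, φ k i j y * gradient ψ y k)
    (Ω : Set (EuclideanSpace ℝ (Fin d))) (hΩ : IsOpen Ω) (ε : ℝ) (hε : 0 < ε)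
    (uε u₀ : EuclideanSpace ℝ (Fin d) → ℝ) (huε : ContDiffOn ℝ 1 uε Ω) (hu₀ : ContDiffOn ℝ 2 u₀ Ω)
    (heq : ∀ ψ : EuclideanSpace ℝ (Fin d) → ℝ, ContDiff ℝ (⊤ : ℕ∞) ψ → HasCompactSupport ψ → tsupport ψ ⊆ Ω →
      (∫ x in Ω, bform (A (ε⁻¹ • x)) (gradient uε x) (gradient ψ x)) =
        ∫ x in Ω, bform Ahat (gradient u₀ x) (gradient ψ x)) :
    ∀ ψ : EuclideanSpace ℝ (Fin d) → ℝ, ContDiff ℝ (⊤ : ℕ∞) ψ → HasCompactSupport ψ → tsupport ψ ⊆ Ω →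
      (∫ x in Ω, bform (A (ε⁻¹ • x))
          (gradient (fun y => uε y - u₀ y - ε * ∑ j, χ j (ε⁻¹ • y) * gradient u₀ y j) x)
          (gradient ψ x)) =
        ε * (∫ x in Ω, ∑ i, ∑ j, ∑ k,
            φ k i j (ε⁻¹ • x) * gradient (fun y => gradient u₀ y j) x k * gradient ψ x i)
        - ε * ∫ x in Ω, ∑ j, χ j (ε⁻¹ • x) *
            bform (A (ε⁻¹ • x)) (gradient (fun y => gradient u₀ y j) x) (gradient ψ x) := by
  intro ψ hψ hs ht
  have hψ2 : ContDiff ℝ 2 ψ := contDiff_infty.1 hψ 2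
  have hψ1 : ContDiff ℝ 1 ψ := hψ.of_le (by exact_mod_cast le_top)
  have hsc : Continuous fun x : EuclideanSpace ℝ (Fin d) => ε⁻¹ • x := continuous_const_smul _
  have hAc : ∀ i j, Continuous fun x => A x i j := fun i j => by
    have : LipschitzWith (Real.toNNReal M) fun x => A x i j := by
      refine LipschitzWith.of_dist_le_mul fun x y => ?_
      rw [Real.coe_toNNReal _ hM.le, Real.dist_eq, dist_eq_norm]
      exact hA.lipschitz x y i j
    exact this.continuous
  have hχg : ∀ j k, Continuous fun x => gradient (χ j) x k := fun j k => by
    simpa using grad_cont isOpen_univ (hχ j).1.contDiffOn k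
  have hbc : ∀ i j, Continuous (b i j) := fun i j => by
    rw [show b i j = _ from funext (hb i j)]
    exact ((hAc i j).add (continuous_finsetSum _ fun k _ => (hAc i k).mul (hχg j k))).sub
      continuous_const
  have hV : ∀ j, ContDiffOn ℝ 1 (fun x => gradient u₀ x j) Ω := grad_contDiffOn hΩ hu₀
  have hu₀1 : ContDiffOn ℝ 1 u₀ Ω := hu₀.of_le (by norm_num)
  have hP : ∀ i, ContDiff ℝ 1 (fun x => gradient ψ x i) := fun i => by
    exact contDiffOn_univ.1 (grad_contDiffOn isOpen_univ hψ2.contDiffOn i)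
  have hPs : ∀ i, HasCompactSupport (fun x => gradient ψ x i) := fun i => by
    simpa only [grad_apply] using hs.fderiv_apply ℝ _
  have hPt : ∀ i, tsupport (fun x => gradient ψ x i) ⊆ Ω := fun i => (grad_tsupport _ _).trans ht
  -- pointwise gradient of the error
  have hgrad : ∀ x ∈ Ω, ∀ l,
      gradient (fun y => uε y - u₀ y - ε * ∑ j, χ j (ε⁻¹ • y) * gradient u₀ y j) x l =
        gradient uε x l - gradient u₀ x l
          - ∑ j, gradient (χ j) (ε⁻¹ • x) l * gradient u₀ x j
          - ε * ∑ j, χ j (ε⁻¹ • x) * gradient (fun y => gradient u₀ y j) x l := by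
    intro x hx l
    have hn := hΩ.mem_nhds hx
    have d1 : DifferentiableAt ℝ uε x := (huε.contDiffAt hn).differentiableAt one_ne_zero
    have d2 : DifferentiableAt ℝ u₀ x := (hu₀1.contDiffAt hn).differentiableAt one_ne_zero
    have d3 : ∀ j, DifferentiableAt ℝ (fun y => gradient u₀ y j) x := fun j =>
      ((hV j).contDiffAt hn).differentiableAt one_ne_zero
    have d4 : ∀ j, DifferentiableAt ℝ (fun y => χ j (ε⁻¹ • y)) x := fun j =>
      (((hχ j).1.comp (contDiff_const_smul ε⁻¹)).differentiable one_ne_zero) x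
    have d5 : ∀ j ∈ Finset.univ,
        DifferentiableAt ℝ (fun y => χ j (ε⁻¹ • y) * gradient u₀ y j) x :=
      fun j _ => (d4 j).mul (d3 j)
    have d6 : DifferentiableAt ℝ (fun y => ∑ j, χ j (ε⁻¹ • y) * gradient u₀ y j) x :=
      DifferentiableAt.fun_sum d5
    have e1 : ∀ j, fderiv ℝ (fun y => χ j (ε⁻¹ • y)) x = ε⁻¹ • fderiv ℝ (χ j) (ε⁻¹ • x) :=
      fun j => fderiv_comp_smul _
    rw [grad_apply, fderiv_fun_sub (d1.fun_sub d2) (d6.const_mul ε), fderiv_fun_sub d1 d2,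
      fderiv_const_mul d6, fderiv_fun_sum d5]
    simp only [sub_apply, smul_apply,
      sum_apply, smul_eq_mul, ← grad_apply]
    rw [sub_sub _ (∑ j, _), Finset.mul_sum, Finset.mul_sum, ← Finset.sum_add_distrib]
    congr 1
    refine Finset.sum_congr rfl fun j _ => ?_
    rw [grad_apply (fun y => χ j (ε⁻¹ • y) * gradient u₀ y j), fderiv_fun_mul (d4 j) (d3 j), e1 j]
    simp only [add_apply, smul_apply, smul_eq_mul,
      ← grad_apply]
    field_simp
    ring
  -- pointwise decomposition
  have hpt : ∀ x ∈ Ω, bform (A (ε⁻¹ • x))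
      (gradient (fun y => uε y - u₀ y - ε * ∑ j, χ j (ε⁻¹ • y) * gradient u₀ y j) x)
      (gradient ψ x) =
      bform (A (ε⁻¹ • x)) (gradient uε x) (gradient ψ x)
        - bform Ahat (gradient u₀ x) (gradient ψ x)
        - (∑ i, ∑ j, b i j (ε⁻¹ • x) * gradient u₀ x j * gradient ψ x i)
        - ε * ∑ j, χ j (ε⁻¹ • x) *
            bform (A (ε⁻¹ • x)) (gradient (fun y => gradient u₀ y j) x) (gradient ψ x) := by
    intro x hx
    have hsw : (∑ j, χ j (ε⁻¹ • x) *
            bform (A (ε⁻¹ • x)) (gradient (fun y => gradient u₀ y j) x) (gradient ψ x)) =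
        ∑ i, ∑ l, A (ε⁻¹ • x) i l *
          (∑ j, χ j (ε⁻¹ • x) * gradient (fun y => gradient u₀ y j) x l) * gradient ψ x i := by
      unfold bform
      simp only [Finset.mul_sum, Finset.sum_mul]
      rw [Finset.sum_comm]
      refine Finset.sum_congr rfl fun i _ => ?_
      rw [Finset.sum_comm]
      refine Finset.sum_congr rfl fun l _ => Finset.sum_congr rfl fun j _ => ?_
      ring
    have hsb : (∑ i, ∑ j, b i j (ε⁻¹ • x) * gradient u₀ x j * gradient ψ x i) =
        ∑ i, ∑ l, (A (ε⁻¹ • x) i l * (gradient u₀ x l +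
          ∑ j, gradient (χ j) (ε⁻¹ • x) l * gradient u₀ x j) - Ahat i l * gradient u₀ x l)
            * gradient ψ x i := by
      refine Finset.sum_congr rfl fun i _ => ?_
      simp only [hb, ← Finset.sum_mul]
      congr 1
      simp only [add_mul, sub_mul, mul_add, Finset.sum_add_distrib, Finset.sum_sub_distrib,
        Finset.sum_mul, Finset.mul_sum]
      congr 2
      rw [Finset.sum_comm]
      refine Finset.sum_congr rfl fun l _ => Finset.sum_congr rfl fun j _ => ?_
      ring
    rw [hsw, hsb]
    unfold bform
    rw [Finset.mul_sum, ← Finset.sum_sub_distrib, ← Finset.sum_sub_distrib,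
      ← Finset.sum_sub_distrib]
    refine Finset.sum_congr rfl fun i _ => ?_
    rw [Finset.mul_sum, ← Finset.sum_sub_distrib, ← Finset.sum_sub_distrib,
      ← Finset.sum_sub_distrib]
    refine Finset.sum_congr rfl fun l _ => ?_
    rw [hgrad x hx l]
    ring
  -- integrability
  have hAce : ∀ i j, ContinuousOn (fun x => A (ε⁻¹ • x) i j) Ω := fun i j =>
    ((hAc i j).comp hsc).continuousOn
  have I1 : Integrable (fun x => bform (A (ε⁻¹ • x)) (gradient uε x) (gradient ψ x))
      (volume.restrict Ω) := by
    simpa using bform_integ hΩ (c := fun _ => 1) continuousOn_const hAce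
      (grad_cont hΩ huε) hψ1 hs ht
  have I2 : Integrable (fun x => bform Ahat (gradient u₀ x) (gradient ψ x))
      (volume.restrict Ω) := by
    simpa using bform_integ hΩ (c := fun _ => 1) (B := fun _ => Ahat) continuousOn_const
      (fun _ _ => continuousOn_const) (grad_cont hΩ hu₀1) hψ1 hs ht
  have I3' : ∀ i j, Integrable (fun x => b i j (ε⁻¹ • x) * gradient u₀ x j * gradient ψ x i)
      (volume.restrict Ω) := fun i j =>
    mul_integ hΩ (((hbc i j).comp hsc).continuousOn.mul (hV j).continuousOn)
      (hP i).continuous (hPs i) (hPt i)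
  have I3 : Integrable (fun x => ∑ i, ∑ j, b i j (ε⁻¹ • x) * gradient u₀ x j * gradient ψ x i)
      (volume.restrict Ω) :=
    integrable_finsetSum _ fun i _ => integrable_finsetSum _ fun j _ => I3' i j
  have I4 : Integrable (fun x => ε * ∑ j, χ j (ε⁻¹ • x) *
      bform (A (ε⁻¹ • x)) (gradient (fun y => gradient u₀ y j) x) (gradient ψ x))
      (volume.restrict Ω) :=
    (integrable_finsetSum _ fun j _ =>
      bform_integ hΩ ((hχ j).1.continuous.comp hsc).continuousOn hAce
        (grad_cont hΩ (hV j)) hψ1 hs ht).const_mul ε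
  have I5 : ∀ i j k, Integrable (fun x =>
      φ k i j (ε⁻¹ • x) * gradient (fun y => gradient u₀ y j) x k * gradient ψ x i)
      (volume.restrict Ω) := fun i j k =>
    mul_integ hΩ (((hφcont k i j).comp hsc).continuousOn.mul (grad_cont hΩ (hV j) k))
      (hP i).continuous (hPs i) (hPt i)
  have I12 : Integrable (fun x => bform (A (ε⁻¹ • x)) (gradient uε x) (gradient ψ x)
      - bform Ahat (gradient u₀ x) (gradient ψ x)) (volume.restrict Ω) := I1.sub I2
  have I123 : Integrable (fun x => bform (A (ε⁻¹ • x)) (gradient uε x) (gradient ψ x)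
      - bform Ahat (gradient u₀ x) (gradient ψ x)
      - ∑ i, ∑ j, b i j (ε⁻¹ • x) * gradient u₀ x j * gradient ψ x i) (volume.restrict Ω) :=
    I12.sub I3
  -- the flux corrector term
  have hflux : (∫ x in Ω, ∑ i, ∑ j, b i j (ε⁻¹ • x) * gradient u₀ x j * gradient ψ x i) =
      -(ε * ∫ x in Ω, ∑ i, ∑ j, ∑ k,
        φ k i j (ε⁻¹ • x) * gradient (fun y => gradient u₀ y j) x k * gradient ψ x i) := by
    have hanti : ∑ i, ∑ j, ∑ k, (∫ x in Ω, φ k i j (ε⁻¹ • x) * gradient u₀ x j *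
        gradient (fun y => gradient ψ y i) x k) = 0 := by
      have hT : ∀ i j k, (∫ x in Ω, φ k i j (ε⁻¹ • x) * gradient u₀ x j *
          gradient (fun y => gradient ψ y i) x k) =
          -(∫ x in Ω, φ i k j (ε⁻¹ • x) * gradient u₀ x j *
          gradient (fun y => gradient ψ y k) x i) := by
        intro i j k
        rw [← integral_neg]
        congr 1
        ext x
        rw [hφanti k i j, grad_symm hψ2 x i k]
        ring
      rw [Finset.sum_comm]
      refine Finset.sum_eq_zero fun j _ => ?_
      have h1 : ∑ i, ∑ k, (∫ x in Ω, φ k i j (ε⁻¹ • x) * gradient u₀ x j *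
          gradient (fun y => gradient ψ y i) x k) =
          -∑ i, ∑ k, (∫ x in Ω, φ k i j (ε⁻¹ • x) * gradient u₀ x j *
          gradient (fun y => gradient ψ y i) x k) := by
        conv_lhs => rw [Finset.sum_comm]
        simp only [← Finset.sum_neg_distrib]
        exact Finset.sum_congr rfl fun i _ => Finset.sum_congr rfl fun k _ => hT k j i
      linarith
    rw [integral_finsetSum _ fun i _ => integrable_finsetSum _ fun j _ => I3' i j,
      integral_finsetSum _ fun i _ => integrable_finsetSum _ fun j _ =>
        integrable_finsetSum _ fun k _ => I5 i j k]
    have hs1 : ∀ i, (∫ x in Ω, ∑ j, b i j (ε⁻¹ • x) * gradient u₀ x j * gradient ψ x i) =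
        ∑ j, -∑ k, ε * ((∫ x in Ω,
          φ k i j (ε⁻¹ • x) * gradient (fun y => gradient u₀ y j) x k * gradient ψ x i) +
        ∫ x in Ω, φ k i j (ε⁻¹ • x) * gradient u₀ x j *
          gradient (fun y => gradient ψ y i) x k) := by
      intro i
      rw [integral_finsetSum _ fun j _ => I3' i j]
      refine Finset.sum_congr rfl fun j _ => ?_
      exact div_product (b i j) (fun k => φ k i j) (hbc i j) (fun k => hφcont k i j)
        (hφdiv i j) ε hε hΩ _ _ (hV j) (hP i) (hPs i) (hPt i)
    have hs2 : ∀ i, (∫ x in Ω, ∑ j, ∑ k,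
        φ k i j (ε⁻¹ • x) * gradient (fun y => gradient u₀ y j) x k * gradient ψ x i) =
        ∑ j, ∑ k, ∫ x in Ω,
          φ k i j (ε⁻¹ • x) * gradient (fun y => gradient u₀ y j) x k * gradient ψ x i := by
      intro i
      rw [integral_finsetSum _ fun j _ => integrable_finsetSum _ fun k _ => I5 i j k]
      exact Finset.sum_congr rfl fun j _ => integral_finsetSum _ fun k _ => I5 i j k
    simp only [hs1, hs2, ← Finset.mul_sum, Finset.sum_neg_distrib, Finset.sum_add_distrib, hanti,
      add_zero]
  rw [setIntegral_congr_fun hΩ.measurableSet hpt, integral_sub I123 I4,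
    integral_sub I12 I3, integral_sub I1 I2, heq ψ hψ hs ht, hflux, integral_const_mul]
  ring

end
end

section
/- Let d ≥ 2, λ ∈ (0,1], M > 0, N > 1, and set r_0 = √λ/4. Then there exist r_1 ∈ (0, r_0/4), δ_1 > 0 and C(N) > 0, depending only on d, λ and N, such that for each u ∈ ℱ(N) there exist finitely many balls B(x_1,t_1),…,B(x_m,t_m) and B(y_1,s_1),…,B(y_{m'},s_{m'}) with all centers x_i, y_j ∈ B(0,r_0) and all radii 0 < t_i, s_j < r_1, satisfying: (i) {x ∈ B(0,r_0) : |u(x)| < δ_1} ⊂ ∪_{i=1}^m B(x_i,t_i); (ii) {x ∈ B(0,r_0) : |u(x)| + |∇u(x)| < δ_1} ⊂ ∪_{j=1}^{m'} B(y_j,s_j); (iii) ∑_{i=1}^m t_i^{d−1} ≤ C(N) and ∑_{j=1}^{m'} s_j^{d−1} < (1/4) r_0^{d−1}. -/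
open MeasureTheory Metric Set
open scoped ENNReal NNReal

noncomputable section

abbrev EE (d : ℕ) := EuclideanSpace ℝ (Fin d)

structure Ker {d : ℕ} (φ : EE d → ℝ) (c L : ℝ) : Prop where
  smooth : ContDiff ℝ (⊤ : ℕ∞) φ
  nonneg : ∀ y, 0 ≤ φ y
  le_one : ∀ y, φ y ≤ 1
  zero : ∀ y, 1 ≤ ‖y‖ → φ y = 0
  one : ∀ y, ‖y‖ < c → φ y = 1
  lip : ∀ y y', ‖y‖ ≤ 3 → ‖y'‖ ≤ 3 → |φ y - φ y'| ≤ L * ‖y - y'‖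
  c_pos : 0 < c
  L_nonneg : 0 ≤ L

/-- Mean value property with respect to a kernel. -/
def MV {d : ℕ} {G : Type*} [NormedAddCommGroup G] [NormedSpace ℝ G]
    (φ : EE d → ℝ) (Ω : Set (EE d)) (w : EE d → G) : Prop :=
  ∀ x ρ, 0 < ρ → closedBall x ρ ⊆ Ω → (∫ y, φ y) • w x = ∫ y, φ y • w (x + ρ • y)

set_option linter.unusedSectionVars false

section basic

variable {d : ℕ} {G : Type*} [NormedAddCommGroup G] [NormedSpace ℝ G]
  {φ : EE d → ℝ} {c L : ℝ} {Ω : Set (EE d)} {w : EE d → G}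

lemma Ker.zero' (h : Ker φ c L) {y : EE d} (hy : y ∉ closedBall (0 : EE d) 1) : φ y = 0 := by
  apply h.zero
  simp at hy
  exact hy.le

lemma Ker.integrable (h : Ker φ c L) {f : EE d → G} (hf : ContinuousOn f (closedBall 0 1)) :
    Integrable (fun y => φ y • f y) := by
  apply IntegrableOn.integrable_of_forall_notMem_eq_zero (s := closedBall (0 : EE d) 1)
  · apply ContinuousOn.integrableOn_compact (isCompact_closedBall _ _)
    exact h.smooth.continuous.continuousOn.smul hf
  · intro x hx
    rw [h.zero' hx, zero_smul]

lemma Ker.integrable_self (h : Ker φ c L) : Integrable φ := by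
  have := h.integrable (f := fun _ => (1 : ℝ)) continuousOn_const
  simpa using this

lemma mem_of_ker {x y : EE d} {ρ : ℝ} (hρ : 0 ≤ ρ) (hy : y ∈ closedBall (0 : EE d) 1) :
    x + ρ • y ∈ closedBall x ρ := by
  simp only [mem_closedBall, dist_zero_right, dist_self_add_left, norm_smul, Real.norm_eq_abs,
    abs_of_nonneg hρ] at *
  nlinarith


lemma contOn_aff {x : EE d} {ρ : ℝ} (hρ : 0 ≤ ρ) (hx : closedBall x ρ ⊆ Ω) (hw : ContinuousOn w Ω) :
    ContinuousOn (fun y => w (x + ρ • y)) (closedBall 0 1) := by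
  apply hw.comp (by fun_prop)
  intro y hy
  exact hx (mem_of_ker hρ hy)

lemma Ker.mass_ge (h : Ker φ c L) : volume.real (ball (0 : EE d) c) ≤ ∫ y, φ y := by
  have : ∫ y in ball (0 : EE d) c, φ y = volume.real (ball (0 : EE d) c) := by
    rw [setIntegral_congr_fun (g := fun _ => (1 : ℝ)) measurableSet_ball]
    · simp
    · intro y hy
      exact h.one y (by simpa using hy)
  rw [← this]
  exact setIntegral_le_integral h.integrable_self (Filter.Eventually.of_forall h.nonneg)

lemma vol_ball_pos {c : ℝ} (hc : 0 < c) : 0 < volume.real (ball (0 : EE d) c) := by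
  rw [measureReal_def, ENNReal.toReal_pos_iff]
  exact ⟨measure_ball_pos _ _ hc, measure_ball_lt_top⟩

lemma Ker.mass_pos (h : Ker φ c L) : 0 < ∫ y, φ y := (vol_ball_pos h.c_pos).trans_le h.mass_ge

lemma exists_bigger {x : EE d} {ρ : ℝ} (hρ : 0 ≤ ρ) (hΩ : IsOpen Ω) (hx : closedBall x ρ ⊆ Ω) :
    ∃ ε > 0, closedBall x (ρ + ε) ⊆ Ω := by
  obtain ⟨ε, hε, h⟩ := (isCompact_closedBall x ρ).exists_cthickening_subset_open hΩ hx
  refine ⟨ε, hε, ?_⟩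
  rwa [cthickening_closedBall hε.le hρ, add_comm] at h

/-- Lipschitz estimate for functions with the mean value property. -/
lemma MV.lip (h : Ker φ c L) (hw : ContinuousOn w Ω) (hmv : MV φ Ω w) {x v : EE d} {σ K : ℝ}
    (hσ : 0 < σ) (hx : closedBall x (2 * σ) ⊆ Ω) (hK : ∀ z ∈ closedBall x (2 * σ), ‖w z‖ ≤ K)
    (hv : ‖v‖ ≤ σ) :
    ‖w (x + v) - w x‖ ≤ L * volume.real (closedBall (0 : EE d) 2) /
      volume.real (ball (0 : EE d) c) * K / σ * ‖v‖ := by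
  have hK0 : 0 ≤ K := (norm_nonneg _).trans (hK x (by simp; positivity))
  set m := ∫ y, φ y with hm
  have hmpos := h.mass_pos
  have sub1 : closedBall x σ ⊆ Ω := (closedBall_subset_closedBall (by linarith)).trans hx
  have sub2 : closedBall (x + v) σ ⊆ Ω := by
    refine (closedBall_subset_closedBall' ?_).trans hx
    simp; linarith
  have e1 := hmv x σ hσ sub1
  have e2 := hmv (x + v) σ hσ sub2
  have i1 := h.integrable (contOn_aff hσ.le sub1 hw)
  have i2 := h.integrable (contOn_aff hσ.le sub2 hw)
  set q : EE d := σ⁻¹ • v with hq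
  have hqn : ‖q‖ ≤ 1 := by
    rw [hq, norm_smul, norm_inv, Real.norm_eq_abs, abs_of_pos hσ, inv_mul_le_iff₀ hσ]; linarith
  have hsm : σ • q = v := by rw [hq, smul_smul, mul_inv_cancel₀ hσ.ne', one_smul]
  have e3 : ∀ y, φ y • w (x + v + σ • y) = (fun y => φ (y - q) • w (x + σ • y)) (y + q) := by
    intro y
    simp only [add_sub_cancel_right, smul_add, hsm]
    congr 2; abel
  have i2' : Integrable (fun y => φ (y - q) • w (x + σ • y)) := by
    have := i2.comp_sub_right q
    refine this.congr (Filter.Eventually.of_forall fun y => ?_)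
    simp only [e3, sub_add_cancel]
  have e4 : ∫ y, φ y • w (x + v + σ • y) = ∫ y, φ (y - q) • w (x + σ • y) := by
    simp_rw [e3]
    rw [integral_add_right_eq_self (fun y => φ (y - q) • w (x + σ • y)) q]
  have e5 : m • (w (x + v) - w x) = ∫ y, (φ (y - q) - φ y) • w (x + σ • y) := by
    rw [smul_sub, e1, e2, e4, ← integral_sub i2' i1]
    simp_rw [sub_smul]
  have e6 : ∫ y, (φ (y - q) - φ y) • w (x + σ • y) =
      ∫ y in closedBall (0 : EE d) 2, (φ (y - q) - φ y) • w (x + σ • y) := by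
    symm
    apply setIntegral_eq_integral_of_forall_compl_eq_zero
    intro y hy
    simp only [mem_closedBall, dist_zero_right, not_le] at hy
    have := norm_sub_norm_le y q
    rw [h.zero y (by linarith), h.zero (y - q) (by linarith)]
    simp
  have e7 : ‖m • (w (x + v) - w x)‖ ≤ L * (‖v‖ / σ) * K * volume.real (closedBall (0 : EE d) 2) := by
    rw [e5, e6]
    apply norm_setIntegral_le_of_norm_le_const measure_closedBall_lt_top
    intro y hy
    simp only [mem_closedBall, dist_zero_right] at hy
    rw [norm_smul]
    have h1 := h.lip (y - q) y ((norm_sub_le _ _).trans (by linarith)) (by linarith)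
    have h2 : ‖y - q - y‖ = ‖v‖ / σ := by
      rw [sub_sub_cancel_left, norm_neg, hq, norm_smul, norm_inv, Real.norm_eq_abs, abs_of_pos hσ]
      ring
    rw [h2] at h1
    have hL := h.L_nonneg
    apply mul_le_mul h1 _ (norm_nonneg _) (by positivity)
    apply hK
    simp [norm_smul, abs_of_pos hσ]; nlinarith
  rw [norm_smul, Real.norm_eq_abs, abs_of_pos hmpos] at e7
  have hV := vol_ball_pos (d := d) h.c_pos
  have hge := h.mass_ge
  have : volume.real (ball (0 : EE d) c) * ‖w (x + v) - w x‖ ≤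
     L * (‖v‖ / σ) * K * volume.real (closedBall (0 : EE d) 2) :=
    (mul_le_mul_of_nonneg_right hge (norm_nonneg _)).trans e7
  rw [← le_div_iff₀' hV] at this
  refine this.trans (le_of_eq ?_)
  field_simp

/-- The constant in the gradient estimate. -/
def gradC (d : ℕ) (c L : ℝ) : ℝ :=
  4 * (L * volume.real (closedBall (0 : EE d) 2) / volume.real (ball (0 : EE d) c))

lemma Ker.gradC_nonneg (h : Ker φ c L) : 0 ≤ gradC d c L := by
  have := h.L_nonneg
  unfold gradC; positivity

lemma MV.fderiv_le (h : Ker φ c L) (hw : ContinuousOn w Ω) (hmv : MV φ Ω w) {x : EE d} {ρ K : ℝ}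
    (hρ : 0 < ρ) (hx : ball x ρ ⊆ Ω) (hK : ∀ z ∈ ball x ρ, ‖w z‖ ≤ K) :
    ‖fderiv ℝ w x‖ ≤ gradC d c L * K / ρ := by
  have hK0 : 0 ≤ K := (norm_nonneg _).trans (hK x (by simp; positivity))
  have hg := h.gradC_nonneg
  have hs : closedBall x (2 * (ρ / 4)) ⊆ ball x ρ := closedBall_subset_ball (by linarith)
  apply norm_fderiv_le_of_lip' ℝ (by positivity)
  filter_upwards [ball_mem_nhds x (show 0 < ρ / 4 by positivity)] with z hz
  have := hmv.lip h hw (x := x) (v := z - x) (σ := ρ / 4) (K := K) (by positivity) (hs.trans hx)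
    (fun z hz => hK z (hs hz)) (by rw [mem_ball, dist_eq_norm] at hz; exact hz.le)
  rw [add_sub_cancel] at this
  refine this.trans (le_of_eq ?_)
  unfold gradC
  field_simp

lemma meas_aff (h : Ker φ c L) {x : EE d} {s : ℝ} (hs : 0 ≤ s) (hw : ContinuousOn w Ω)
    (hx : closedBall x s ⊆ Ω) : AEStronglyMeasurable (fun y => φ y • w (x + s • y)) volume :=
  (h.integrable (contOn_aff hs hx hw)).aestronglyMeasurable

/-- Differentiation under the integral in the space variable. -/
lemma MV.fderiv [CompleteSpace G] (h : Ker φ c L) (hΩ : IsOpen Ω) (hw : ContDiffOn ℝ 1 w Ω)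
    (hmv : MV φ Ω w) : MV φ Ω (fderiv ℝ w) := by
  intro x ρ hρ hx
  obtain ⟨ε, hε, hxε⟩ := exists_bigger hρ.le hΩ hx
  have hcd : ContinuousOn (_root_.fderiv ℝ w) Ω := hw.continuousOn_fderiv_of_isOpen hΩ le_rfl
  obtain ⟨K, hK⟩ := (isCompact_closedBall x (ρ + ε)).exists_bound_of_continuousOn (hcd.mono hxε)
  have key : ∀ x' ∈ ball x ε, closedBall x' ρ ⊆ closedBall x (ρ + ε) := by
    intro x' hx'
    apply closedBall_subset_closedBall'
    rw [mem_ball] at hx'; linarith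
  have D := hasFDerivAt_integral_of_dominated_of_fderiv_le (𝕜 := ℝ) (μ := volume)
    (F := fun (x' : EE d) (y : EE d) => φ y • w (x' + ρ • y)) (x₀ := x) (s := ball x ε)
    (F' := fun x' y => φ y • _root_.fderiv ℝ w (x' + ρ • y)) (bound := fun y => φ y * K)
    (ball_mem_nhds x hε) ?_ ?_ ?_ ?_ ?_ ?_
  · have e : (fun x' => (∫ y, φ y) • w x') =ᶠ[nhds x] fun x' => ∫ y, φ y • w (x' + ρ • y) := by
      filter_upwards [ball_mem_nhds x hε] with x' hx'
      exact hmv x' ρ hρ ((key x' hx').trans hxε)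
    have D2 := D.congr_of_eventuallyEq e
    have D3 : HasFDerivAt (fun x' => (∫ y, φ y) • w x') ((∫ y, φ y) • _root_.fderiv ℝ w x) x := by
      apply HasFDerivAt.const_smul
      have : x ∈ Ω := hx (mem_closedBall_self hρ.le)
      exact ((hw.differentiableOn one_ne_zero).differentiableAt (hΩ.mem_nhds this)).hasFDerivAt
    exact D3.unique D2
  · filter_upwards [ball_mem_nhds x hε] with x' hx'
    exact meas_aff h hρ.le hw.continuousOn ((key x' hx').trans hxε)
  · exact h.integrable (contOn_aff hρ.le hx hw.continuousOn)
  · exact meas_aff h hρ.le hcd hx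
  · refine Filter.Eventually.of_forall fun y x' hx' => ?_
    by_cases hy : y ∈ closedBall (0 : EE d) 1
    · rw [norm_smul, Real.norm_eq_abs, abs_of_nonneg (h.nonneg y)]
      apply mul_le_mul_of_nonneg_left _ (h.nonneg y)
      exact hK _ (key x' hx' (mem_of_ker hρ.le hy))
    · simp [h.zero' hy]
  · exact h.integrable_self.mul_const K
  · refine Filter.Eventually.of_forall fun y x' hx' => ?_
    by_cases hy : y ∈ closedBall (0 : EE d) 1
    · apply HasFDerivAt.const_smul
      have hm : x' + ρ • y ∈ Ω := hxε (key x' hx' (mem_of_ker hρ.le hy))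
      have := ((hw.differentiableOn one_ne_zero).differentiableAt (hΩ.mem_nhds hm)).hasFDerivAt
      have h2 := this.comp x' ((hasFDerivAt_id x').add_const (ρ • y))
      exact h2
    · simp only [h.zero' hy, zero_smul]
      exact hasFDerivAt_const _ _

/-- Differentiation under the integral in the radius. -/
lemma radial_deriv [CompleteSpace G] (h : Ker φ c L) (hΩ : IsOpen Ω) (hw : ContDiffOn ℝ 1 w Ω)
    {x : EE d} {ρ : ℝ} (hρ : 0 < ρ) (hx : closedBall x ρ ⊆ Ω) :
    HasDerivAt (fun s => ∫ y, φ y • w (x + s • y)) (∫ y, φ y • fderiv ℝ w (x + ρ • y) y) ρ := by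
  obtain ⟨ε', hε', hxε'⟩ := exists_bigger hρ.le hΩ hx
  obtain ⟨ε, hε, hεε, hερ⟩ : ∃ ε > 0, ε ≤ ε' ∧ ε ≤ ρ := ⟨min ε' ρ, by positivity, by simp, by simp⟩
  have hxε : closedBall x (ρ + ε) ⊆ Ω := (closedBall_subset_closedBall (by linarith)).trans hxε'
  have hcd : ContinuousOn (fderiv ℝ w) Ω := hw.continuousOn_fderiv_of_isOpen hΩ le_rfl
  obtain ⟨K, hK⟩ := (isCompact_closedBall x (ρ + ε)).exists_bound_of_continuousOn (hcd.mono hxε)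
  have hK0 : 0 ≤ K := (norm_nonneg _).trans (hK x (by simp; positivity))
  have pos : ∀ s ∈ ball ρ ε, 0 ≤ s := by
    intro s hs
    rw [mem_ball, Real.dist_eq, abs_lt] at hs; linarith
  have key : ∀ s ∈ ball ρ ε, closedBall x s ⊆ closedBall x (ρ + ε) := by
    intro s hs
    apply closedBall_subset_closedBall
    rw [mem_ball, Real.dist_eq, abs_lt] at hs; linarith
  have D := hasDerivAt_integral_of_dominated_loc_of_deriv_le (𝕜 := ℝ) (μ := volume)
    (F := fun (s : ℝ) (y : EE d) => φ y • w (x + s • y)) (x₀ := ρ) (s := ball ρ ε)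
    (F' := fun s y => φ y • _root_.fderiv ℝ w (x + s • y) y) (bound := fun y => φ y * K)
    (ball_mem_nhds ρ hε) ?_ ?_ ?_ ?_ ?_ ?_
  · exact D.2
  · filter_upwards [ball_mem_nhds ρ hε] with s hs
    exact meas_aff h (pos s hs) hw.continuousOn ((key s hs).trans hxε)
  · exact h.integrable (contOn_aff hρ.le hx hw.continuousOn)
  · exact (h.integrable ((contOn_aff hρ.le hx hcd).clm_apply continuousOn_id)).aestronglyMeasurable
  · refine Filter.Eventually.of_forall fun y s hs => ?_
    by_cases hy : y ∈ closedBall (0 : EE d) 1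
    · rw [norm_smul, Real.norm_eq_abs, abs_of_nonneg (h.nonneg y)]
      apply mul_le_mul_of_nonneg_left _ (h.nonneg y)
      have h1 := hK _ (key s hs (mem_of_ker (pos s hs) hy))
      have h2 := (_root_.fderiv ℝ w (x + s • y)).le_opNorm y
      rw [mem_closedBall, dist_zero_right] at hy
      have := mul_le_mul h1 hy (norm_nonneg _) hK0
      linarith
    · simp [h.zero' hy]
  · exact h.integrable_self.mul_const K
  · refine Filter.Eventually.of_forall fun y s hs => ?_
    by_cases hy : y ∈ closedBall (0 : EE d) 1
    · apply HasDerivAt.const_smul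
      have hm : x + s • y ∈ Ω := hxε (key s hs (mem_of_ker (pos s hs) hy))
      have := ((hw.differentiableOn one_ne_zero).differentiableAt (hΩ.mem_nhds hm)).hasFDerivAt
      apply this.comp_hasDerivAt s
      simpa using ((hasDerivAt_id s).smul_const y).const_add x
    · simp only [h.zero' hy, zero_smul]
      exact hasDerivAt_const _ _

end basic

set_option linter.unusedSectionVars false

section smooth

variable {d : ℕ} {G : Type*} [NormedAddCommGroup G] [NormedSpace ℝ G]
  {φ : EE d → ℝ} {c L : ℝ} {Ω : Set (EE d)} {w : EE d → G} {u : EE d → ℝ}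

lemma MV.contDiffOn (h : Ker φ c L) (hΩ : IsOpen Ω) (hu : ContinuousOn u Ω) (hmv : MV φ Ω u) :
    ContDiffOn ℝ (⊤ : ℕ∞) u Ω := by
  intro x hxΩ
  apply ContDiffAt.contDiffWithinAt
  obtain ⟨r, hr, hxr⟩ := Metric.nhds_basis_closedBall.mem_iff.1 (hΩ.mem_nhds hxΩ)
  set ρ := r / 2 with hρdef
  have hρ : 0 < ρ := by positivity
  set v : EE d → ℝ := (closedBall x r).indicator u with hv
  have hvint : LocallyIntegrable v := by
    apply Integrable.locallyIntegrable
    rw [integrable_indicator_iff measurableSet_closedBall]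
    exact (hu.mono hxr).integrableOn_compact (isCompact_closedBall _ _)
  set g : EE d → ℝ := fun z => φ (-(ρ⁻¹ • z)) with hg
  have hgc : HasCompactSupport g := by
    apply HasCompactSupport.of_support_subset_isCompact (isCompact_closedBall (0 : EE d) ρ)
    intro z hz
    by_contra hz'
    apply hz
    apply h.zero
    simp only [mem_closedBall, dist_zero_right, not_le] at hz'
    rw [norm_neg, norm_smul, norm_inv, Real.norm_eq_abs, abs_of_pos hρ, ← div_eq_inv_mul,
      one_le_div hρ]
    exact hz'.le
  have hgs : ContDiff ℝ (⊤ : ℕ∞) g := h.smooth.comp (by fun_prop)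
  have hconv := hgc.contDiff_convolution_right (ContinuousLinearMap.mul ℝ ℝ) hvint hgs
  have hm := h.mass_pos
  have e : ∀ x' ∈ ball x ρ, u x' = (∫ y, φ y)⁻¹ * (|(ρ ^ Module.finrank ℝ (EE d))⁻¹| *
      convolution v g (ContinuousLinearMap.mul ℝ ℝ) volume x') := by
    intro x' hx'
    have hsub : closedBall x' ρ ⊆ closedBall x r := by
      apply closedBall_subset_closedBall'
      rw [mem_ball] at hx'; linarith
    have := hmv x' ρ hρ (hsub.trans hxr)
    rw [eq_inv_mul_iff_mul_eq₀ hm.ne', ← smul_eq_mul, this, convolution_def]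
    have e1 : ∀ y, φ y • u (x' + ρ • y) = (fun z => φ (ρ⁻¹ • z) * v (x' + z)) (ρ • y) := by
      intro y
      simp only [smul_smul, inv_mul_cancel₀ hρ.ne', one_smul, smul_eq_mul]
      by_cases hy : y ∈ closedBall (0 : EE d) 1
      · rw [hv, indicator_of_mem (hsub (mem_of_ker hρ.le hy))]
      · simp [h.zero' hy]
    simp_rw [e1]
    have e2 := Measure.integral_comp_smul volume (fun z : EE d => φ (ρ⁻¹ • z) * v (x' + z)) ρ
    rw [e2, smul_eq_mul]
    congr 1
    rw [← integral_sub_right_eq_self (fun z : EE d => φ (ρ⁻¹ • z) * v (x' + z)) x']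
    apply integral_congr_ae
    refine Filter.Eventually.of_forall fun t => ?_
    simp only [hg, add_sub_cancel, ContinuousLinearMap.mul_apply']
    rw [← smul_neg, neg_sub, mul_comm]
  have : ContDiff ℝ (⊤ : ℕ∞) fun x' => (∫ y, φ y)⁻¹ * (|(ρ ^ Module.finrank ℝ (EE d))⁻¹| *
      convolution v g (ContinuousLinearMap.mul ℝ ℝ) volume x') := by
    exact contDiff_const.mul (contDiff_const.mul hconv)
  apply this.contDiffAt.congr_of_eventuallyEq
  filter_upwards [ball_mem_nhds x hρ] with x' hx' using e x' hx'

lemma contDiffOn_iter (hΩ : IsOpen Ω) (hu : ContDiffOn ℝ (⊤ : ℕ∞) u Ω) (k : ℕ) :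
    ContDiffOn ℝ (⊤ : ℕ∞) (iteratedFDeriv ℝ k u) Ω := by
  intro x hx
  apply ContDiffAt.contDiffWithinAt
  apply (hu.contDiffAt (hΩ.mem_nhds hx)).iteratedFDeriv_right
  exact_mod_cast le_top

lemma MV.comp_iso {H : Type*} [NormedAddCommGroup H] [NormedSpace ℝ H] (e : G ≃L[ℝ] H)
    (hmv : MV φ Ω w) : MV φ Ω (fun x => e (w x)) := by
  intro x ρ hρ hx
  have h2 := e.integral_comp_comm (fun y => φ y • w (x + ρ • y)) (μ := volume)
  simp only [map_smul] at h2
  rw [h2, ← hmv x ρ hρ hx, map_smul]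

lemma MV.iter (h : Ker φ c L) (hΩ : IsOpen Ω) (hu : ContDiffOn ℝ (⊤ : ℕ∞) u Ω) (hmv : MV φ Ω u)
    (k : ℕ) : MV φ Ω (iteratedFDeriv ℝ k u) := by
  induction k with
  | zero =>
    rw [iteratedFDeriv_zero_eq_comp]
    exact hmv.comp_iso (continuousMultilinearCurryFin0 ℝ (EE d) ℝ).symm.toContinuousLinearEquiv
  | succ k ih =>
    have hc := (contDiffOn_iter hΩ hu k)
    have ih2 := ih.fderiv h hΩ (hc.of_le (by exact_mod_cast le_top))
    rw [iteratedFDeriv_succ_eq_comp_left]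
    exact ih2.comp_iso (continuousMultilinearCurryLeftEquiv ℝ
      (fun _ : Fin (k+1) => (EE d)) ℝ).symm.toContinuousLinearEquiv

/-- The radial derivative identity. -/
lemma MV.radial [CompleteSpace G] (h : Ker φ c L) (hΩ : IsOpen Ω) (hw : ContDiffOn ℝ 1 w Ω)
    (hmv : MV φ Ω w) {x : EE d} {ρ : ℝ} (hρ : 0 < ρ) (hx : closedBall x ρ ⊆ Ω) :
    ∫ y, φ y • _root_.fderiv ℝ w (x + ρ • y) y = 0 := by
  obtain ⟨ε, hε, hxε⟩ := exists_bigger hρ.le hΩ hx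
  have D := radial_deriv h hΩ hw hρ hx
  refine D.unique ?_
  apply (hasDerivAt_const ρ ((∫ y, φ y) • w x)).congr_of_eventuallyEq
  filter_upwards [Ioo_mem_nhds (show 0 < ρ from hρ) (show ρ < ρ + ε by linarith)] with s hs
  exact (hmv x s hs.1 ((closedBall_subset_closedBall hs.2.le).trans hxε)).symm

/-- The second derivative identity at a point where the first derivative vanishes. -/
lemma MV.second [CompleteSpace G] (h : Ker φ c L) (hΩ : IsOpen Ω) (hw : ContDiffOn ℝ 2 w Ω)
    (hmv : MV φ Ω w) {x : EE d} (hx : x ∈ Ω) (h0 : _root_.fderiv ℝ w x = 0) :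
    ∫ y, φ y • _root_.fderiv ℝ (_root_.fderiv ℝ w) x y y = 0 := by
  set P := _root_.fderiv ℝ w with hP
  have hw1 : ContDiffOn ℝ 1 w Ω := hw.of_le (by norm_num)
  have hPc : ContDiffOn ℝ 1 P Ω := hw.fderiv_of_isOpen hΩ (by norm_num)
  have hPx : HasFDerivAt P (_root_.fderiv ℝ P x) x :=
    ((hPc.differentiableOn one_ne_zero).differentiableAt (hΩ.mem_nhds hx)).hasFDerivAt
  obtain ⟨r, hr, hxr⟩ := Metric.nhds_basis_closedBall.mem_iff.1 (hΩ.mem_nhds hx)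
  obtain ⟨K, hK⟩ := hPx.isBigO_sub.bound
  obtain ⟨r', hr', hK'⟩ := Metric.nhds_basis_closedBall.mem_iff.1 hK
  have hK2 : ∀ z ∈ closedBall x r', ‖P z‖ ≤ K * ‖z - x‖ := by
    intro z hz
    have := hK' hz
    simpa [h0] using this
  have lim : Filter.Tendsto (fun ρ : ℝ => ∫ y, φ y • (ρ⁻¹ • P (x + ρ • y)) y) (nhdsWithin 0 (Ioi 0))
      (nhds (∫ y, φ y • _root_.fderiv ℝ P x y y)) := by
    apply tendsto_integral_filter_of_dominated_convergence (fun y => φ y * |K|)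
    · filter_upwards [Ioc_mem_nhdsGT hr] with ρ hρ
      have hxs : closedBall x ρ ⊆ Ω := (closedBall_subset_closedBall hρ.2).trans hxr
      exact (h.integrable (((contOn_aff hρ.1.le hxs hPc.continuousOn).const_smul ρ⁻¹).clm_apply
        continuousOn_id)).aestronglyMeasurable
    · filter_upwards [Ioc_mem_nhdsGT hr'] with ρ hρ
      refine Filter.Eventually.of_forall fun y => ?_
      by_cases hy : y ∈ closedBall (0 : EE d) 1
      · rw [norm_smul, Real.norm_eq_abs, abs_of_nonneg (h.nonneg y)]
        apply mul_le_mul_of_nonneg_left _ (h.nonneg y)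
        have h1 := hK2 (x + ρ • y) ((closedBall_subset_closedBall hρ.2) (mem_of_ker hρ.1.le hy))
        have hρ0 := hρ.1
        rw [add_sub_cancel_left, norm_smul, Real.norm_eq_abs, abs_of_pos hρ0] at h1
        rw [mem_closedBall, dist_zero_right] at hy
        have h3 : ‖ρ⁻¹ • P (x + ρ • y)‖ ≤ |K| := by
          rw [norm_smul, norm_inv, Real.norm_eq_abs, abs_of_pos hρ0, inv_mul_le_iff₀ hρ0]
          refine h1.trans ?_
          have := le_abs_self K
          have : K * (ρ * ‖y‖) ≤ |K| * (ρ * ‖y‖) := by gcongr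
          have : |K| * (ρ * ‖y‖) ≤ |K| * (ρ * 1) := by gcongr
          linarith
        refine (ContinuousLinearMap.le_opNorm _ _).trans ?_
        have := mul_le_mul h3 hy (norm_nonneg _) (abs_nonneg K)
        linarith
      · simp [h.zero' hy]
    · exact h.integrable_self.mul_const _
    · refine Filter.Eventually.of_forall fun y => ?_
      apply Filter.Tendsto.const_smul
      have hd : HasDerivAt (fun s : ℝ => P (x + s • y)) (_root_.fderiv ℝ P x y) 0 := by
        have hPx' : HasFDerivAt P (_root_.fderiv ℝ P x) (x + (0:ℝ) • y) := by simpa using hPx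
        apply hPx'.comp_hasDerivAt (0 : ℝ)
        simpa using ((hasDerivAt_id (0 : ℝ)).smul_const y).const_add x
      rw [hasDerivAt_iff_tendsto_slope_zero] at hd
      simp only [zero_add, zero_smul, add_zero, h0, sub_zero] at hd
      have hd2 := hd.mono_left (nhdsGT_le_nhdsNE 0)
      exact ((ContinuousLinearMap.apply ℝ G y).continuous.tendsto _).comp hd2
  refine tendsto_nhds_unique lim ?_
  apply tendsto_const_nhds.congr'
  filter_upwards [Ioc_mem_nhdsGT hr] with ρ hρ
  have := hmv.radial h hΩ hw1 hρ.1 ((closedBall_subset_closedBall hρ.2).trans hxr)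
  symm
  simp only [smul_apply]
  simp_rw [smul_comm (φ _) ρ⁻¹]
  rw [integral_smul, this, smul_zero]

end smooth

set_option linter.unusedSectionVars false

section dimension

variable {d : ℕ} {G : Type*} [NormedAddCommGroup G] [NormedSpace ℝ G]
  {φ : EE d → ℝ} {c L : ℝ} {Ω : Set (EE d)} {w : EE d → G} {u : EE d → ℝ}

lemma rank_ge_two [CompleteSpace G] (h : Ker φ c L) (T : EE d →L[ℝ] EE d →L[ℝ] G) (hsym : ∀ y z, T y z = T z y)
    (hT : T ≠ 0) (hint : ∫ y, φ y • T y y = 0) : Module.finrank ℝ T.ker + 2 ≤ d := by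
  by_contra hcon
  have hrn := LinearMap.finrank_range_add_finrank_ker (T : EE d →ₗ[ℝ] EE d →L[ℝ] G)
  have hd : Module.finrank ℝ (EE d) = d := by simp
  have hr1 : Module.finrank ℝ (LinearMap.range (T : EE d →ₗ[ℝ] EE d →L[ℝ] G)) ≤ 1 := by
    have : Module.finrank ℝ T.ker = Module.finrank ℝ (LinearMap.ker (T : EE d →ₗ[ℝ] EE d →L[ℝ] G)) := rfl
    omega
  obtain ⟨⟨S, hS⟩, hS'⟩ := finrank_le_one_iff.1 hr1
  have hf : ∀ y, ∃ a : ℝ, T y = a • S := by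
    intro y
    obtain ⟨a, ha⟩ := hS' ⟨T y, LinearMap.mem_range_self _ y⟩
    exact ⟨a, by simpa using (congrArg Subtype.val ha).symm⟩
  choose f hf using hf
  have hS0 : S ≠ 0 := by
    rintro rfl
    apply hT
    ext y z
    simp [hf y]
  obtain ⟨e, he⟩ : ∃ e, S e ≠ 0 := by
    by_contra! hh
    exact hS0 (by ext z; simp [hh])
  have hse : ∀ y, f y • S e = f e • S y := by
    intro y
    have := hsym y e
    rw [hf y, hf e] at this
    simpa using this
  have hfe : f e ≠ 0 := by
    intro h0
    apply hT
    ext y z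
    have := hse y
    rw [h0, zero_smul, smul_eq_zero] at this
    rw [hf y, this.resolve_right he]; simp
  have hSy : ∀ y, S y = (f y / f e) • S e := by
    intro y
    rw [div_eq_inv_mul, mul_smul, hse, smul_smul, inv_mul_cancel₀ hfe, one_smul]
  set g : G := (f e)⁻¹ • S e with hg
  have hg0 : g ≠ 0 := smul_ne_zero (inv_ne_zero hfe) he
  have hTy : ∀ y, T y y = (f y ^ 2) • g := by
    intro y
    rw [hf y, smul_apply, hSy y, hg, smul_smul, smul_smul]
    congr 1; ring
  obtain ⟨ψ, hψ1, hψ⟩ := exists_dual_vector ℝ g (norm_ne_zero_iff.2 hg0)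
  have hq : Continuous fun y => φ y * ψ (T y y) := by
    have := h.smooth.continuous
    fun_prop
  have hval : ∀ y, ψ (T y y) = f y ^ 2 * ‖g‖ := by
    intro y
    rw [hTy, map_smul, hψ]; simp
  have hnn : ∀ y, 0 ≤ φ y * ψ (T y y) := by
    intro y
    rw [hval]
    have := h.nonneg y
    positivity
  have hinte : Integrable (fun y => φ y • T y y) := h.integrable (by fun_prop)
  have hi0 : ∫ y, φ y * ψ (T y y) = 0 := by
    have := ψ.integral_comp_comm hinte
    rw [hint] at this
    simpa using this
  have hi : Integrable (fun y => φ y * ψ (T y y)) := by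
    simpa using ψ.integrable_comp hinte
  have hae := (integral_eq_zero_iff_of_nonneg hnn hi).1 hi0
  have hz : (fun y => φ y * ψ (T y y)) = 0 := (hq.ae_eq_iff_eq volume continuous_zero).1 hae
  have hball : ∀ y, ‖y‖ < c → T y = 0 := by
    intro y hy
    have := congrFun hz y
    simp only [h.one y hy, one_mul, hval, Pi.zero_apply, mul_eq_zero, norm_eq_zero, hg0, or_false,
      pow_eq_zero_iff two_ne_zero] at this
    rw [hf, this, zero_smul]
  apply hT
  ext1 y
  by_cases hy0 : y = 0
  · simp [hy0]
  have hyn : 0 < ‖y‖ := norm_pos_iff.2 hy0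
  have hc := h.c_pos
  have := hball ((c / 2 / ‖y‖) • y) (by
    rw [norm_smul, Real.norm_eq_abs, abs_of_pos (by positivity), div_mul_cancel₀ _ hyn.ne']
    linarith)
  rw [map_smul, smul_eq_zero] at this
  exact this.resolve_left (by positivity)

/-- Near a point where `P` has derivative `T`, a subset of the zero set of `P` has dimension at most
that of `ker T`. -/
lemma dimH_local {H : Type*} [NormedAddCommGroup H] [NormedSpace ℝ H] {P : EE d → H} {x : EE d}
    {T : EE d →L[ℝ] H} (hP : HasStrictFDerivAt P T x) (S : Set (EE d)) (hS : ∀ z ∈ S, P z = 0) :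
    ∃ U ∈ nhds x, dimH (S ∩ U) ≤ Module.finrank ℝ T.ker := by
  set π : EE d →L[ℝ] T.ker := T.ker.orthogonalProjectionOnto with hπ
  have hinj : LinearMap.ker ((π.prod T : EE d →L[ℝ] T.ker × H) : EE d →ₗ[ℝ] T.ker × H) = ⊥ := by
    rw [LinearMap.ker_eq_bot']
    intro z hz
    have hz1 : π z = 0 ∧ T z = 0 := by simpa using hz
    have hmem : z ∈ T.ker := hz1.2
    have := Submodule.orthogonalProjectionOnto_mem_subspace_eq_self (K := T.ker) ⟨z, hmem⟩
    have h2 : π z = ⟨z, hmem⟩ := this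
    rw [hz1.1] at h2
    exact (congrArg Subtype.val h2).symm
  obtain ⟨K, hK, hanti⟩ := LinearMap.exists_antilipschitzWith _ hinj
  obtain ⟨U, hU, happ⟩ := hP.approximates_deriv_on_nhds (c := (2 * K)⁻¹) (Or.inr (by positivity))
  refine ⟨U, hU, ?_⟩
  set f : ↥(S ∩ U) → T.ker := fun z => π z.1 with hf
  have hKr : (0 : ℝ) < K := hK
  have haf : AntilipschitzWith K f := by
    apply AntilipschitzWith.of_le_mul_dist
    rintro ⟨a, haS, haU⟩ ⟨b, hbS, hbU⟩
    have h1 := happ a haU b hbU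
    rw [hS a haS, hS b hbS, sub_zero, zero_sub, norm_neg] at h1
    have h2 := hanti.le_mul_dist a b
    rw [Prod.dist_eq] at h2
    have h3 : dist (T a) (T b) = ‖T (a - b)‖ := by rw [map_sub, dist_eq_norm]
    have h4 : dist a b ≤ K * max (dist (π a) (π b)) (dist (T a) (T b)) := h2
    rw [h3] at h4
    change dist a b ≤ K * dist (π a) (π b)
    push_cast at h1
    rw [← dist_eq_norm a b] at h1
    rcases le_total ‖T (a - b)‖ (dist (π a) (π b)) with hle | hle
    · rwa [max_eq_left hle] at h4
    · rw [max_eq_right hle] at h4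
      have h5 : (K : ℝ) * ‖T (a - b)‖ ≤ K * ((2 * (K : ℝ))⁻¹ * dist a b) :=
        mul_le_mul_of_nonneg_left h1 hKr.le
      have h6 : (K : ℝ) * ((2 * (K : ℝ))⁻¹ * dist a b) = dist a b / 2 := by field_simp
      have h7 : dist a b ≤ 0 := by linarith
      exact h7.trans (by positivity)
  calc dimH (S ∩ U) = dimH ((Subtype.val : ↥(S ∩ U) → EE d) '' univ) := by simp
    _ = dimH (univ : Set ↥(S ∩ U)) := isometry_subtype_coe.dimH_image _
    _ ≤ dimH (f '' univ) := haf.le_dimH_image _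
    _ ≤ dimH (univ : Set T.ker) := dimH_mono (subset_univ _)
    _ = _ := Real.dimH_univ_eq_finrank _

lemma fderiv_comp_zero {H : Type*} [NormedAddCommGroup H] [NormedSpace ℝ H] (e : G ≃L[ℝ] H)
    {f : EE d → G} {x : EE d} (hf : DifferentiableAt ℝ f x) (h0 : fderiv ℝ f x = 0) :
    fderiv ℝ (fun z => e (f z)) x = 0 := by
  have := (e.hasFDerivAt (x := f x)).comp x hf.hasFDerivAt
  rw [h0] at this
  have h2 := this.fderiv
  simp only [ContinuousLinearMap.comp_zero] at h2
  exact h2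

/-- The set of zeros of order exactly `k + 2` has dimension at most `d - 2`. -/
lemma dimH_stratum (h : Ker φ c L) (hΩ : IsOpen Ω) (hu : ContDiffOn ℝ (⊤ : ℕ∞) u Ω)
    (hmv : MV φ Ω u) (k : ℕ) :
    dimH {x ∈ Ω | iteratedFDeriv ℝ (k + 1) u x = 0 ∧ iteratedFDeriv ℝ (k + 2) u x ≠ 0}
      ≤ ((d - 2 : ℕ) : ℝ≥0∞) := by
  set S := {x ∈ Ω | iteratedFDeriv ℝ (k + 1) u x = 0 ∧ iteratedFDeriv ℝ (k + 2) u x ≠ 0} with hS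
  by_contra! hcon
  obtain ⟨x, hxS, hx⟩ := exists_mem_nhdsWithin_lt_dimH_of_lt_dimH hcon
  set w := iteratedFDeriv ℝ k u with hw
  have hwc := contDiffOn_iter hΩ hu k
  have hwm := hmv.iter h hΩ hu k
  have hw2 : ContDiffOn ℝ 2 w Ω := contDiffOn_infty.1 hwc 2
  have hPz : ∀ z ∈ S, fderiv ℝ w z = 0 := by
    intro z hz
    have := norm_fderiv_iteratedFDeriv (𝕜 := ℝ) (f := u) (x := z) (n := k)
    rw [hz.2.1, norm_zero] at this
    exact (norm_eq_zero (E := EE d →L[ℝ] ContinuousMultilinearMap ℝ (fun _ : Fin k => EE d) ℝ)).1 this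
  have hPc : ContDiffOn ℝ 1 (fderiv ℝ w) Ω := hw2.fderiv_of_isOpen hΩ (by norm_num)
  have hPx := (hPc.contDiffAt (hΩ.mem_nhds hxS.1)).hasStrictFDerivAt one_ne_zero
  have hne : fderiv ℝ (fderiv ℝ w) x ≠ 0 := by
    intro h0
    apply hxS.2.2
    rw [← norm_eq_zero, ← norm_fderiv_iteratedFDeriv, iteratedFDeriv_succ_eq_comp_left]
    have := fderiv_comp_zero (continuousMultilinearCurryLeftEquiv ℝ
      (fun _ : Fin (k+1) => (EE d)) ℝ).symm.toContinuousLinearEquiv (f := fderiv ℝ w) (x := x)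
      hPx.hasFDerivAt.differentiableAt h0
    refine (congrArg norm this).trans ?_
    simp
  have hsymm : ∀ y z, fderiv ℝ (fderiv ℝ w) x y z = fderiv ℝ (fderiv ℝ w) x z y := by
    have := (hw2.contDiffAt (hΩ.mem_nhds hxS.1)).isSymmSndFDerivAt (by simp)
    intro y z
    exact this y z
  have hrank := rank_ge_two h _ hsymm hne (hwm.second h hΩ hw2 hxS.1 (hPz x hxS))
  obtain ⟨U, hU, hdim⟩ := dimH_local hPx S hPz
  have := hx (S ∩ U) (inter_mem_nhdsWithin S hU)
  have h3 := this.trans_le hdim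
  rw [Nat.cast_lt] at h3
  omega

end dimension

set_option linter.unusedSectionVars false

section continuation

variable {d : ℕ} {G : Type*} [NormedAddCommGroup G] [NormedSpace ℝ G]
  {φ : EE d → ℝ} {c L : ℝ} {Ω : Set (EE d)} {w : EE d → G} {u : EE d → ℝ}

lemma taylor_step {x₀ : EE d} {r K : ℝ} (hw : ∀ x ∈ ball x₀ r, DifferentiableAt ℝ w x)
    (h0 : w x₀ = 0) (j : ℕ)
    (hK : ∀ x ∈ ball x₀ r, ‖fderiv ℝ w x‖ ≤ K * ‖x - x₀‖ ^ j / j.factorial) :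
    ∀ x ∈ ball x₀ r, ‖w x‖ ≤ K * ‖x - x₀‖ ^ (j + 1) / (j + 1).factorial := by
  intro x hx
  set v := x - x₀ with hv
  have hmem : ∀ t ∈ Icc (0:ℝ) 1, x₀ + t • v ∈ ball x₀ r := by
    intro t ht
    rw [mem_ball, dist_eq_norm] at hx ⊢
    rw [add_sub_cancel_left, norm_smul, Real.norm_eq_abs, abs_of_nonneg ht.1]
    have : t * ‖v‖ ≤ 1 * ‖v‖ := mul_le_mul_of_nonneg_right ht.2 (norm_nonneg _)
    linarith
  have hder : ∀ t ∈ Icc (0:ℝ) 1, HasDerivAt (fun t : ℝ => w (x₀ + t • v))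
      (fderiv ℝ w (x₀ + t • v) v) t := by
    intro t ht
    apply (hw _ (hmem t ht)).hasFDerivAt.comp_hasDerivAt t
    simpa using ((hasDerivAt_id t).smul_const v).const_add x₀
  have := image_norm_le_of_norm_deriv_right_le_deriv_boundary
    (f := fun t : ℝ => w (x₀ + t • v)) (a := 0) (b := 1)
    (f' := fun t => fderiv ℝ w (x₀ + t • v) v)
    (fun t ht => (hder t ht).continuousAt.continuousWithinAt)
    (fun t ht => (hder t ⟨ht.1, ht.2.le⟩).hasDerivWithinAt)
    (B := fun t => K * ‖v‖ ^ (j + 1) / (j + 1).factorial * t ^ (j + 1))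
    (B' := fun t => K * ‖v‖ ^ (j + 1) / (j + 1).factorial * (((j + 1 : ℕ) : ℝ) * t ^ j))
    (by simp [h0])
    (fun t => by
      have := (hasDerivAt_pow (j + 1) t).const_mul (K * ‖v‖ ^ (j + 1) / (j + 1).factorial)
      simpa using this)
    (fun t ht => by
      have h1 := hK _ (hmem t ⟨ht.1, ht.2.le⟩)
      rw [add_sub_cancel_left, norm_smul, Real.norm_eq_abs, abs_of_nonneg ht.1] at h1
      refine (ContinuousLinearMap.le_opNorm _ _).trans ?_
      refine (mul_le_mul_of_nonneg_right h1 (norm_nonneg v)).trans (le_of_eq ?_)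
      rw [Nat.factorial_succ]
      push_cast
      have : ((j : ℝ) + 1) ≠ 0 := by positivity
      have : (j.factorial : ℝ) ≠ 0 := by positivity
      field_simp
      ring)
    (x := 1) (by simp)
  simpa [hv] using this

lemma iter_diffAt (hΩ : IsOpen Ω) (hu : ContDiffOn ℝ (⊤ : ℕ∞) u Ω) (k : ℕ) {x : EE d}
    (hx : x ∈ Ω) : DifferentiableAt ℝ (iteratedFDeriv ℝ k u) x :=
  ((contDiffOn_iter hΩ hu k).contDiffAt (hΩ.mem_nhds hx)).differentiableAt (by simp)

lemma taylor_flat (hΩ : IsOpen Ω) (hu : ContDiffOn ℝ (⊤ : ℕ∞) u Ω) {x₀ : EE d} {r K : ℝ}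
    (hr : ball x₀ r ⊆ Ω) (hflat : ∀ k, iteratedFDeriv ℝ k u x₀ = 0) (k : ℕ)
    (hK : ∀ x ∈ ball x₀ r, ‖iteratedFDeriv ℝ k u x‖ ≤ K) :
    ∀ x ∈ ball x₀ r, |u x| ≤ K * ‖x - x₀‖ ^ k / k.factorial := by
  have main : ∀ j ≤ k, ∀ x ∈ ball x₀ r,
      ‖iteratedFDeriv ℝ (k - j) u x‖ ≤ K * ‖x - x₀‖ ^ j / j.factorial := by
    intro j
    induction j with
    | zero => intro _ x hx; simpa using hK x hx
    | succ j ih =>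
      intro hj
      apply taylor_step (fun x hx => iter_diffAt hΩ hu _ (hr hx)) (hflat _)
      intro x hx
      rw [norm_fderiv_iteratedFDeriv]
      have := ih (by omega) x hx
      rwa [show k - (j + 1) + 1 = k - j by omega]
  intro x hx
  have := main k le_rfl x hx
  rw [Nat.sub_self] at this
  simpa using this

lemma iter_bound (h : Ker φ c L) (hΩ : IsOpen Ω) (hu : ContDiffOn ℝ (⊤ : ℕ∞) u Ω)
    (hmv : MV φ Ω u) {x₀ : EE d} {R M ρ : ℝ} (hρ : 0 < ρ) (hR : ball x₀ R ⊆ Ω)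
    (hM : ∀ x ∈ ball x₀ R, |u x| ≤ M) (j : ℕ) :
    ∀ x ∈ ball x₀ (R - j * ρ), ‖iteratedFDeriv ℝ j u x‖ ≤ (gradC d c L / ρ) ^ j * M := by
  induction j with
  | zero => intro x hx; simpa using hM x (by simpa using hx)
  | succ j ih =>
    intro x hx
    have hsub : ball x ρ ⊆ ball x₀ (R - j * ρ) := by
      apply ball_subset_ball'
      rw [mem_ball] at hx
      push_cast at hx
      linarith
    have hsub2 : ball x₀ (R - j * ρ) ⊆ Ω :=
      (ball_subset_ball (by have : 0 ≤ j * ρ := by positivity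
                            linarith)).trans hR
    rw [← norm_fderiv_iteratedFDeriv]
    refine ((hmv.iter h hΩ hu j).fderiv_le h (contDiffOn_iter hΩ hu j).continuousOn hρ
      (hsub.trans hsub2) (fun z hz => ih z (hsub hz))).trans (le_of_eq ?_)
    rw [pow_succ]
    ring

lemma uc_local (h : Ker φ c L) (hΩ : IsOpen Ω) (hu : ContDiffOn ℝ (⊤ : ℕ∞) u Ω)
    (hmv : MV φ Ω u) {x₀ : EE d} (hx₀ : x₀ ∈ Ω)
    (hflat : ∀ k, iteratedFDeriv ℝ k u x₀ = 0) : u =ᶠ[nhds x₀] 0 := by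
  obtain ⟨R, hR, hxR⟩ := Metric.nhds_basis_closedBall.mem_iff.1 (hΩ.mem_nhds hx₀)
  obtain ⟨M, hM⟩ := (isCompact_closedBall x₀ R).exists_bound_of_continuousOn
    (hu.continuousOn.mono hxR)
  have hM0 : 0 ≤ M := (norm_nonneg _).trans (hM x₀ (by simp; positivity))
  have hM' : ∀ x ∈ ball x₀ R, |u x| ≤ M := fun x hx => hM x (ball_subset_closedBall hx)
  have hsub : ball x₀ R ⊆ Ω := ball_subset_closedBall.trans hxR
  set C := gradC d c L with hC
  have hC0 : 0 ≤ C := h.gradC_nonneg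
  have hsub2 : ball x₀ (R / 2) ⊆ ball x₀ R := ball_subset_ball (by linarith)
  have bound : ∀ k : ℕ, 0 < k → ∀ x ∈ ball x₀ (R / 2),
      |u x| ≤ M * (2 * C * Real.exp 1 * ‖x - x₀‖ / R) ^ k := by
    intro k hk x hx
    have hk' : (0 : ℝ) < k := by exact_mod_cast hk
    have hb := iter_bound h hΩ hu hmv (ρ := R / (2 * k)) (by positivity) hsub hM' k
    have e : R - k * (R / (2 * k)) = R / 2 := by field_simp; ring
    rw [e] at hb
    have ht := taylor_flat hΩ hu (hsub2.trans hsub) hflat k hb x hx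
    refine ht.trans ?_
    have hexp := Real.pow_div_factorial_le_exp (k : ℝ) hk'.le k
    have e2 : (C / (R / (2 * k))) ^ k * M * ‖x - x₀‖ ^ k / k.factorial
        = M * (2 * C * ‖x - x₀‖ / R) ^ k * ((k : ℝ) ^ k / k.factorial) := by
      have : C / (R / (2 * k)) = 2 * C / R * k := by field_simp
      rw [this]
      rw [show 2 * C * ‖x - x₀‖ / R = 2 * C / R * ‖x - x₀‖ by ring, mul_pow, mul_pow]
      ring
    have e3 : (2 * C * Real.exp 1 * ‖x - x₀‖ / R) ^ k
       = (2 * C * ‖x - x₀‖ / R) ^ k * Real.exp k := by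
      rw [← Real.exp_one_pow, ← mul_pow]
      congr 1; ring
    rw [e2, e3, ← mul_assoc]
    exact mul_le_mul_of_nonneg_left hexp (by positivity)
  have hev : ∀ᶠ x in nhds x₀, 2 * C * Real.exp 1 * ‖x - x₀‖ / R < 1 := by
    have : ContinuousAt (fun x => 2 * C * Real.exp 1 * ‖x - x₀‖ / R) x₀ := by fun_prop
    apply this.eventually_lt continuousAt_const
    simp
  filter_upwards [hev, ball_mem_nhds x₀ (show 0 < R / 2 by positivity)] with x hx hxb
  have lim : Filter.Tendsto (fun k : ℕ => M * (2 * C * Real.exp 1 * ‖x - x₀‖ / R) ^ k)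
      Filter.atTop (nhds (M * 0)) :=
    (tendsto_pow_atTop_nhds_zero_of_lt_one (by positivity) hx).const_mul M
  rw [mul_zero] at lim
  have : |u x| ≤ 0 := ge_of_tendsto lim
    ((Filter.eventually_gt_atTop 0).mono fun k hk => bound k hk x hxb)
  exact abs_nonpos_iff.1 this

lemma uc_global (h : Ker φ c L) (hΩ : IsOpen Ω) (hconn : IsPreconnected Ω)
    (hu : ContDiffOn ℝ (⊤ : ℕ∞) u Ω) (hmv : MV φ Ω u) {x₀ : EE d} (hx₀ : x₀ ∈ Ω)
    (hflat : ∀ k, iteratedFDeriv ℝ k u x₀ = 0) : ∀ x ∈ Ω, u x = 0 := by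
  set Z : Set (EE d) := {x | u =ᶠ[nhds x] 0} with hZ
  have hZo : IsOpen Z := isOpen_setOfPred_eventually_nhds
  have hiter : ∀ x ∈ Z, ∀ k, iteratedFDeriv ℝ k u x = 0 := by
    intro x hx k
    have := (Filter.EventuallyEq.iteratedFDeriv (𝕜 := ℝ) hx k).eq_of_nhds
    rw [this]
    exact congrFun (iteratedFDeriv_fun_zero (𝕜 := ℝ) (E := EE d) (F := ℝ) (n := k)) x
  have := hconn.subset_of_closure_inter_subset hZo
    ⟨x₀, hx₀, uc_local h hΩ hu hmv hx₀ hflat⟩ (by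
      rintro x ⟨hxc, hxΩ⟩
      apply uc_local h hΩ hu hmv hxΩ
      intro k
      have hc : ContinuousAt (iteratedFDeriv ℝ k u) x := (iter_diffAt hΩ hu k hxΩ).continuousAt
      have hfr : ∃ᶠ z in nhds x, z ∈ Z := mem_closure_iff_frequently.1 hxc
      have hfr2 : ∃ᶠ z in nhds x, iteratedFDeriv ℝ k u z ∈ ({0} : Set _) :=
        hfr.mono fun z hz => hiter z hz k
      have := (hc.tendsto.frequently hfr2)
      have h2 := mem_closure_iff_frequently.2 this
      simpa using h2)
  intro x hx
  exact (this hx).eq_of_nhds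

lemma sing_null (hd : 2 ≤ d) (h : Ker φ c L) (hΩ : IsOpen Ω) (hconn : IsPreconnected Ω)
    (hu : ContDiffOn ℝ (⊤ : ℕ∞) u Ω) (hmv : MV φ Ω u) (hne : ∃ x ∈ Ω, u x ≠ 0) :
    μH[((d - 1 : ℕ) : ℝ)] {x ∈ Ω | u x = 0 ∧ fderiv ℝ u x = 0} = 0 := by
  have hsub : {x ∈ Ω | u x = 0 ∧ fderiv ℝ u x = 0} ⊆ ⋃ k : ℕ,
      {x ∈ Ω | iteratedFDeriv ℝ (k + 1) u x = 0 ∧ iteratedFDeriv ℝ (k + 2) u x ≠ 0} := by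
    rintro x ⟨hx, h0, h1⟩
    have hex : ∃ k, iteratedFDeriv ℝ k u x ≠ 0 := by
      by_contra! hh
      obtain ⟨z, hz, hz'⟩ := hne
      exact hz' (uc_global h hΩ hconn hu hmv hx hh z hz)
    classical
    set n := Nat.find hex with hn
    have hn1 : iteratedFDeriv ℝ n u x ≠ 0 := Nat.find_spec hex
    have hmin : ∀ j < n, iteratedFDeriv ℝ j u x = 0 := fun j hj => by
      have := Nat.find_min hex hj
      simpa using this
    have hn0 : n ≠ 0 := by
      intro hh
      rw [hh] at hn1
      apply hn1
      rw [← norm_eq_zero, norm_iteratedFDeriv_zero, h0, norm_zero]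
    have hn1' : n ≠ 1 := by
      intro hh
      rw [hh] at hn1
      apply hn1
      rw [← norm_eq_zero, norm_iteratedFDeriv_one, h1, norm_zero]
    obtain ⟨k, hk⟩ : ∃ k, n = k + 2 := ⟨n - 2, by omega⟩
    rw [hk] at hn1 hmin
    exact mem_iUnion.2 ⟨k, hx, hmin _ (by omega), hn1⟩
  have hdim : dimH {x ∈ Ω | u x = 0 ∧ fderiv ℝ u x = 0} < (((d - 1 : ℕ) : ℝ≥0) : ℝ≥0∞) := by
    refine (dimH_mono hsub).trans_lt ?_
    rw [dimH_iUnion]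
    refine (iSup_le fun k => dimH_stratum h hΩ hu hmv k).trans_lt ?_
    rw [ENNReal.coe_natCast, Nat.cast_lt]
    omega
  have := hausdorffMeasure_of_dimH_lt hdim
  rwa [NNReal.coe_natCast] at this

end continuation

set_option linter.unusedSectionVars false

section covering

variable {d : ℕ}

lemma cover_null {k : ℕ} (hk : 1 ≤ k) {S : Set (EE d)} (hS : IsCompact S)
    (h0 : μH[(k : ℝ)] S = 0) {ε η : ℝ} (hε : 0 < ε) (hη : 0 < η) :
    ∃ (F : Finset ℕ) (z : ℕ → EE d) (s : ℕ → ℝ),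
      (∀ n ∈ F, z n ∈ S ∧ 0 < s n ∧ s n < η) ∧ S ⊆ ⋃ n ∈ F, ball (z n) (s n) ∧
      ∑ n ∈ F, s n ^ k < ε := by
  have hε2 : (0 : ℝ≥0∞) < ENNReal.ofReal (ε / 2) := by simpa using hε
  have hr : (0 : ℝ≥0∞) < ENNReal.ofReal (η / 2) := by simpa using hη
  rw [Measure.hausdorffMeasure_apply] at h0
  have h1 := (iSup₂_le_iff.1 h0.le _ hr).trans_lt hε2
  simp only [iInf_lt_iff] at h1
  obtain ⟨t, hcov, hdiam, hsum⟩ := h1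
  obtain ⟨θ, hθ, hθsum⟩ := ENNReal.exists_pos_sum_of_countable hε2.ne' ℕ
  have hfin : ∀ n, ediam (t n) ≠ ⊤ := fun n => ((hdiam n).trans_lt ENNReal.ofReal_lt_top).ne
  have hex : ∀ n, ∃ s : ℝ, (ediam (t n)).toReal < s ∧ s < η ∧
      s ^ k < (ediam (t n)).toReal ^ k + θ n := by
    intro n
    have hlt : (ediam (t n)).toReal < η := by
      have := ENNReal.toReal_mono ENNReal.ofReal_ne_top (hdiam n)
      rw [ENNReal.toReal_ofReal (by positivity)] at this
      linarith
    have hev : ∀ᶠ s in nhds (ediam (t n)).toReal, s ^ k < (ediam (t n)).toReal ^ k + θ n := by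
      have : ContinuousAt (fun s : ℝ => s ^ k) (ediam (t n)).toReal := by fun_prop
      apply this.eventually_lt continuousAt_const
      have : (0 : ℝ) < θ n := hθ n
      linarith
    have h2 : ∀ᶠ s in nhdsWithin (ediam (t n)).toReal (Ioi (ediam (t n)).toReal),
        (ediam (t n)).toReal < s ∧ s < η ∧ s ^ k < (ediam (t n)).toReal ^ k + θ n := by
      filter_upwards [self_mem_nhdsWithin, nhdsWithin_le_nhds hev,
        nhdsWithin_le_nhds (Iio_mem_nhds hlt)] with s a b c
      exact ⟨a, c, b⟩
    exact h2.exists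
  choose s hs1 hs2 hs3 using hex
  have hs0 : ∀ n, 0 < s n := fun n => ENNReal.toReal_nonneg.trans_lt (hs1 n)
  set I : Set ℕ := {n | (t n ∩ S).Nonempty} with hI
  have hz : ∀ n, ∃ z : EE d, n ∈ I → z ∈ t n ∩ S := by
    intro n
    by_cases hn : n ∈ I
    · exact ⟨hn.some, fun _ => hn.some_mem⟩
    · exact ⟨0, fun h => absurd h hn⟩
  choose z hz using hz
  have hcov2 : S ⊆ ⋃ n ∈ I, ball (z n) (s n) := by
    intro x hx
    obtain ⟨n, hn⟩ := mem_iUnion.1 (hcov hx)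
    have hnI : n ∈ I := ⟨x, hn, hx⟩
    refine mem_iUnion₂.2 ⟨n, hnI, ?_⟩
    rw [mem_ball]
    refine lt_of_le_of_lt ?_ (hs1 n)
    rw [← ENNReal.ofReal_le_iff_le_toReal (hfin n), ← edist_dist]
    exact edist_le_ediam_of_mem hn (hz n hnI).1
  obtain ⟨b, hbI, hbfin, hb⟩ := hS.elim_finite_subcover_image (fun _ _ => isOpen_ball) hcov2
  refine ⟨hbfin.toFinset, z, s, fun n hn => ?_, by simpa using hb, ?_⟩
  · have := hbI (hbfin.mem_toFinset.1 hn)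
    exact ⟨(hz n this).2, hs0 n, hs2 n⟩
  have key : ENNReal.ofReal (∑ n ∈ hbfin.toFinset, s n ^ k) < ENNReal.ofReal ε := by
    rw [ENNReal.ofReal_sum_of_nonneg (fun n _ => by have := hs0 n; positivity)]
    calc ∑ n ∈ hbfin.toFinset, ENNReal.ofReal (s n ^ k)
        ≤ ∑ n ∈ hbfin.toFinset, ((⨆ _ : (t n).Nonempty, ediam (t n) ^ (k : ℝ)) + θ n) := by
          apply Finset.sum_le_sum
          intro n hn
          have hne : (t n).Nonempty := ⟨z n, (hz n (hbI (hbfin.mem_toFinset.1 hn))).1⟩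
          rw [iSup_pos hne]
          refine (ENNReal.ofReal_le_ofReal (hs3 n).le).trans ?_
          rw [ENNReal.ofReal_add (by positivity) (by positivity), ENNReal.ofReal_coe_nnreal,
            ENNReal.ofReal_pow ENNReal.toReal_nonneg, ENNReal.ofReal_toReal (hfin n),
            ENNReal.rpow_natCast]
      _ ≤ ∑' n, ((⨆ _ : (t n).Nonempty, ediam (t n) ^ (k : ℝ)) + θ n) := ENNReal.sum_le_tsum _
      _ = (∑' n, (⨆ _ : (t n).Nonempty, ediam (t n) ^ (k : ℝ))) + ∑' n, (θ n : ℝ≥0∞) :=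
          ENNReal.tsum_add
      _ < ENNReal.ofReal (ε / 2) + ENNReal.ofReal (ε / 2) := ENNReal.add_lt_add hsum hθsum
      _ = ENNReal.ofReal ε := by
          rw [← ENNReal.ofReal_add (by positivity) (by positivity), add_halves]
  exact (ENNReal.ofReal_lt_ofReal_iff hε).1 key

/-- Finite cover of a ball by small balls. -/
lemma cover_ball (r ρ : ℝ) (hρ : 0 < ρ) :
    ∃ (m : ℕ) (x : Fin m → EE d), (∀ i, x i ∈ ball (0 : EE d) r) ∧
      ball (0 : EE d) r ⊆ ⋃ i, ball (x i) ρ := by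
  have htb : TotallyBounded (ball (0 : EE d) r) :=
    (isCompact_closedBall (0 : EE d) r).totallyBounded.subset ball_subset_closedBall
  obtain ⟨t, hts, htf, ht⟩ := Metric.finite_approx_of_totallyBounded htb ρ hρ
  have := htf.to_subtype
  obtain ⟨m, ⟨e⟩⟩ := Finite.exists_equiv_fin t
  refine ⟨m, fun i => (e.symm i : EE d), fun i => hts (e.symm i).2, fun y hy => ?_⟩
  obtain ⟨a, ha, hya⟩ := mem_iUnion₂.1 (ht hy)
  exact mem_iUnion.2 ⟨e ⟨a, ha⟩, by simpa using hya⟩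

end covering

set_option linter.unusedSectionVars false

section kernel

variable {d : ℕ}

def cl (A : Matrix (Fin d) (Fin d) ℝ) : EE d →L[ℝ] EE d :=
  Matrix.toEuclideanCLM (n := Fin d) (𝕜 := ℝ) A

lemma cl_apply (A : Matrix (Fin d) (Fin d) ℝ) (ξ : EE d) (i : Fin d) :
    cl A ξ i = ∑ j, A i j * ξ j := by
  simp [cl, Matrix.mulVec, dotProduct]

lemma bform_eq (A : Matrix (Fin d) (Fin d) ℝ) (ξ η : EE d) :
    bform A ξ η = inner ℝ η (cl A ξ) := by
  simp only [bform, PiLp.inner_apply, cl_apply]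
  simp [Finset.sum_mul]

lemma cl_mul {A B : Matrix (Fin d) (Fin d) ℝ} (h : A * B = 1) (y : EE d) :
    cl A (cl B y) = y := by
  unfold cl
  rw [← mul_apply_eq_comp, ← map_mul, h, map_one]
  rfl

lemma cl_symm {A : Matrix (Fin d) (Fin d) ℝ} (h : A.IsSymm) (ξ η : EE d) :
    inner ℝ (cl A ξ) η = inner ℝ ξ (cl A η) := by
  rw [real_inner_comm, ← bform_eq, ← bform_eq, bform, bform, Finset.sum_comm]
  refine Finset.sum_congr rfl fun i _ => Finset.sum_congr rfl fun j _ => ?_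
  rw [h.apply]
  ring

structure InB (lam : ℝ) (B : Matrix (Fin d) (Fin d) ℝ) : Prop where
  bd : ∀ i j, |B i j| ≤ lam⁻¹
  low : ∀ y : EE d, ‖y‖ ^ 2 ≤ bform B y y

lemma bform_bound {Λ : ℝ} {B : Matrix (Fin d) (Fin d) ℝ} (hB : ∀ i j, |B i j| ≤ Λ)
    (ξ η : EE d) : |bform B ξ η| ≤ (d : ℝ) * d * Λ * ‖ξ‖ * ‖η‖ := by
  unfold bform
  have key : ∀ i j, |B i j * ξ j * η i| ≤ Λ * ‖ξ‖ * ‖η‖ := by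
    intro i j
    rw [abs_mul, abs_mul]
    have h1 : |ξ j| ≤ ‖ξ‖ := PiLp.norm_apply_le ξ j
    have h2 : |η i| ≤ ‖η‖ := PiLp.norm_apply_le η i
    have h3 := hB i j
    have h4 : 0 ≤ Λ := (abs_nonneg _).trans h3
    gcongr
  calc |∑ i, ∑ j, B i j * ξ j * η i| ≤ ∑ i, ∑ j, |B i j * ξ j * η i| :=
        (Finset.abs_sum_le_sum_abs _ _).trans
          (Finset.sum_le_sum fun i _ => Finset.abs_sum_le_sum_abs _ _)
    _ ≤ ∑ i : Fin d, ∑ j : Fin d, Λ * ‖ξ‖ * ‖η‖ :=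
        Finset.sum_le_sum fun i _ => Finset.sum_le_sum fun j _ => key i j
    _ = _ := by simp; ring

lemma exists_inv {lam : ℝ} (hl : 0 < lam) {A : Matrix (Fin d) (Fin d) ℝ} (hs : A.IsSymm)
    (hA : ∀ ξ : EE d, lam * ‖ξ‖ ^ 2 ≤ bform A ξ ξ ∧ bform A ξ ξ ≤ ‖ξ‖ ^ 2) :
    ∃ B : Matrix (Fin d) (Fin d) ℝ, InB lam B ∧ B.IsSymm ∧ A * B = 1 := by
  have hA1 : ∀ ξ : EE d, lam * ‖ξ‖ ≤ ‖cl A ξ‖ := by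
    intro ξ
    have h1 := (hA ξ).1
    rw [bform_eq] at h1
    have h2 := real_inner_le_norm ξ (cl A ξ)
    rcases (norm_nonneg ξ).eq_or_lt with h0 | h0
    · rw [← h0, mul_zero]; positivity
    · have : ‖ξ‖ * (lam * ‖ξ‖) ≤ ‖ξ‖ * ‖cl A ξ‖ := by nlinarith
      exact le_of_mul_le_mul_left this h0
  have hA2 : ∀ ξ : EE d, ‖cl A ξ‖ ^ 2 ≤ bform A ξ ξ := by
    intro ξ
    have h1 := (hA (ξ - cl A ξ)).1
    have h2 := (hA (cl A ξ)).2
    have h0 : 0 ≤ lam * ‖ξ - cl A ξ‖ ^ 2 := by positivity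
    have h3 := cl_symm hs ξ (cl A ξ)
    have h4 := real_inner_self_eq_norm_sq (cl A ξ)
    simp only [bform_eq, map_sub, inner_sub_left, inner_sub_right] at *
    linarith
  have hdet : IsUnit A := by
    rw [← Matrix.mulVec_injective_iff_isUnit]
    intro v w hvw
    have h1 : cl A (WithLp.toLp 2 (v - w)) = 0 := by
      ext i
      rw [cl_apply]
      have := congrFun hvw i
      simp only [Matrix.mulVec, dotProduct] at this
      simp [mul_sub, this]
    have h2 := hA1 (WithLp.toLp 2 (v - w))
    rw [h1, norm_zero] at h2
    have h3 : ‖(WithLp.toLp 2 (v - w) : EE d)‖ ≤ 0 := by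
      by_contra! hh
      nlinarith [mul_pos hl hh]
    have h4 : (WithLp.toLp 2 (v - w) : EE d) = 0 := norm_le_zero_iff.1 h3
    have h5 : v - w = 0 := congrArg WithLp.ofLp h4
    exact sub_eq_zero.1 h5
  have hdet' : IsUnit A.det := (Matrix.isUnit_iff_isUnit_det A).1 hdet
  have hAB : A * A⁻¹ = 1 := Matrix.mul_nonsing_inv A hdet'
  refine ⟨A⁻¹, ⟨?_, ?_⟩, ?_, hAB⟩
  · intro i j
    have h1 := hA1 (cl A⁻¹ (EuclideanSpace.single j 1))
    rw [cl_mul hAB] at h1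
    have h2 : |cl A⁻¹ (EuclideanSpace.single j 1) i| ≤ ‖cl A⁻¹ (EuclideanSpace.single j 1)‖ :=
      PiLp.norm_apply_le (cl A⁻¹ (EuclideanSpace.single j 1)) i
    have h3 : cl A⁻¹ (EuclideanSpace.single j 1) i = A⁻¹ i j := by
      rw [cl_apply]
      simp
    rw [h3] at h2
    refine h2.trans ?_
    have h4 : lam * ‖cl A⁻¹ (EuclideanSpace.single j 1)‖ ≤ 1 := by simpa using h1
    rw [← one_div lam, le_div_iff₀ hl]
    linarith
  · intro y
    have h1 := hA2 (cl A⁻¹ y)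
    rw [cl_mul hAB, bform_eq, cl_mul hAB] at h1
    rwa [bform_eq, real_inner_comm]
  · rw [Matrix.IsSymm, Matrix.transpose_nonsing_inv, hs.eq]

def gcut (t : ℝ) : ℝ := Real.smoothTransition (2 - 2 * t)

def kern (B : Matrix (Fin d) (Fin d) ℝ) (y : EE d) : ℝ := gcut (bform B y y)

lemma gcut_smooth : ContDiff ℝ (⊤ : ℕ∞) gcut :=
  Real.smoothTransition.contDiff.comp (by fun_prop)

lemma gcut_zero {t : ℝ} (ht : 1 ≤ t) : gcut t = 0 :=
  Real.smoothTransition.zero_of_nonpos (by linarith)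

lemma gcut_one {t : ℝ} (ht : t ≤ 1 / 2) : gcut t = 1 :=
  Real.smoothTransition.one_of_one_le (by linarith)

lemma bform_smooth (B : Matrix (Fin d) (Fin d) ℝ) :
    ContDiff ℝ (⊤ : ℕ∞) (fun y : EE d => bform B y y) := by
  simp only [bform_eq]
  exact contDiff_id.inner ℝ ((cl B).contDiff)

lemma exists_ker {lam : ℝ} (hl : 0 < lam) :
    ∃ c L : ℝ, ∀ B : Matrix (Fin d) (Fin d) ℝ, InB lam B → Ker (kern B) c L := by
  set Λ : ℝ := (d : ℝ) * d * lam⁻¹ with hΛ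
  have hΛ0 : 0 ≤ Λ := by positivity
  obtain ⟨K, hK⟩ := ((gcut_smooth.of_le (by simp) :
    ContDiff ℝ 1 gcut).locallyLipschitz.locallyLipschitzOn (s := Icc 0 (Λ * 9))).exists_lipschitzOnWith_of_compact isCompact_Icc
  refine ⟨1 / (2 * Λ + 1), K * (6 * Λ), fun B hB => ?_⟩
  have hbd := fun ξ η => bform_bound hB.bd ξ η
  have hmem : ∀ y : EE d, ‖y‖ ≤ 3 → bform B y y ∈ Icc 0 (Λ * 9) := by
    intro y hy
    refine ⟨(by positivity : (0:ℝ) ≤ ‖y‖ ^ 2).trans (hB.low y), ?_⟩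
    refine (le_abs_self _).trans ((hbd y y).trans ?_)
    rw [mul_assoc]
    apply mul_le_mul_of_nonneg_left _ hΛ0
    nlinarith [norm_nonneg y]
  refine ⟨gcut_smooth.comp (bform_smooth B), fun y => Real.smoothTransition.nonneg _,
    fun y => Real.smoothTransition.le_one _, fun y hy => gcut_zero ?_, fun y hy => gcut_one ?_,
    fun y y' hy hy' => ?_, by positivity, by positivity⟩
  · have := hB.low y
    nlinarith
  · have h1 := (le_abs_self _).trans (hbd y y)
    have h2 : (2 * Λ + 1) * ‖y‖ < 1 := by
      rw [lt_div_iff₀ (by positivity)] at hy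
      linarith
    have h3 : ‖y‖ ≤ 1 := by nlinarith [norm_nonneg y, mul_nonneg hΛ0 (norm_nonneg y)]
    have h4 : Λ * ‖y‖ * ‖y‖ ≤ Λ * ‖y‖ * 1 :=
      mul_le_mul_of_nonneg_left h3 (by positivity)
    nlinarith [norm_nonneg y]
  · have h1 := hK.dist_le_mul _ (hmem y hy) _ (hmem y' hy')
    rw [Real.dist_eq, Real.dist_eq] at h1
    have h2 : bform B y y - bform B y' y' = bform B (y - y') y + bform B y' (y - y') := by
      simp only [bform_eq, map_sub, inner_sub_left, inner_sub_right]
      ring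
    have h3 : |bform B y y - bform B y' y'| ≤ 6 * Λ * ‖y - y'‖ := by
      rw [h2]
      refine (abs_add_le _ _).trans ?_
      have a1 := hbd (y - y') y
      have a2 := hbd y' (y - y')
      have a3 : Λ * ‖y - y'‖ * ‖y‖ ≤ Λ * ‖y - y'‖ * 3 := by gcongr
      have a4 : Λ * ‖y'‖ * ‖y - y'‖ ≤ Λ * 3 * ‖y - y'‖ := by gcongr
      linarith
    refine h1.trans ?_
    rw [mul_assoc]
    exact mul_le_mul_of_nonneg_left h3 K.2

/-- Primitive of the cutoff function. -/
def gprim (t : ℝ) : ℝ := ∫ τ in (1 : ℝ)..t, gcut τ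

lemma gprim_deriv (t : ℝ) : HasDerivAt gprim (gcut t) t :=
  (gcut_smooth.continuous.integral_hasStrictDerivAt 1 t).hasDerivAt

lemma gprim_smooth : ContDiff ℝ (⊤ : ℕ∞) gprim := by
  have : deriv gprim = gcut := funext fun t => (gprim_deriv t).deriv
  exact contDiff_infty_iff_deriv.2 ⟨fun t => (gprim_deriv t).differentiableAt, this ▸ gcut_smooth⟩

lemma gprim_zero {t : ℝ} (ht : 1 ≤ t) : gprim t = 0 := by
  unfold gprim
  rw [intervalIntegral.integral_congr (g := fun _ => 0)]
  · simp
  · intro τ hτ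
    rw [uIcc_of_le ht] at hτ
    exact gcut_zero hτ.1

lemma weak_mv {lam c L : ℝ} {A B : Matrix (Fin d) (Fin d) ℝ} (hs : A.IsSymm) (hB : InB lam B)
    (hBs : B.IsSymm) (hAB : A * B = 1) (hker : Ker (kern B) c L) {Ω : Set (EE d)}
    (hΩ : IsOpen Ω) {u : EE d → ℝ} (hu : IsWeakSol (fun _ => A) Ω u) : MV (kern B) Ω u := by
  obtain ⟨hc1, hweak⟩ := hu
  have key : ∀ (x : EE d) (s : ℝ), 0 < s → closedBall x s ⊆ Ω →
      ∫ y, kern B y • fderiv ℝ u (x + s • y) y = 0 := by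
    intro x s hs0 hx
    set q : EE d → ℝ := fun z => bform B (s⁻¹ • (z - x)) (s⁻¹ • (z - x)) with hq
    have hqs : ContDiff ℝ (⊤ : ℕ∞) q := (bform_smooth B).comp (by fun_prop)
    have hout : ∀ z, z ∉ closedBall x s → 1 ≤ q z := by
      intro z hz
      refine le_trans ?_ (hB.low _)
      rw [mem_closedBall, dist_eq_norm, not_le] at hz
      rw [norm_smul, norm_inv, Real.norm_eq_abs, abs_of_pos hs0]
      have : 1 ≤ s⁻¹ * ‖z - x‖ := by
        rw [← div_eq_inv_mul, le_div_iff₀ hs0]; linarith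
      nlinarith
    have hψ0 : ∀ z, z ∉ closedBall x s → gprim (q z) = 0 := fun z hz => gprim_zero (hout z hz)
    have hw := hweak (fun z => gprim (q z)) (gprim_smooth.comp hqs)
      (HasCompactSupport.intro (isCompact_closedBall x s) hψ0)
      ((closure_minimal (fun z hz => by
        by_contra hh
        exact hz (hψ0 z hh)) isClosed_closedBall).trans hx)
    have hgrad : ∀ z, gradient (fun z => gprim (q z)) z =
        (2 * s⁻¹ * s⁻¹ * gcut (q z)) • cl B (z - x) := by
      intro z
      apply HasGradientAt.gradient
      rw [hasGradientAt_iff_hasFDerivAt]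
      have h1 : HasFDerivAt (fun z : EE d => s⁻¹ • (z - x))
          (s⁻¹ • ContinuousLinearMap.id ℝ (EE d)) z :=
        ((hasFDerivAt_id z).sub_const x).const_smul s⁻¹
      have h2 := h1.inner ℝ ((cl B).hasFDerivAt.comp z h1)
      have hqe : q = fun t => inner ℝ (s⁻¹ • (t - x)) ((cl B ∘ fun z => s⁻¹ • (z - x)) t) := by
        funext t
        simp only [hq, bform_eq, Function.comp]
      rw [← hqe] at h2
      have h3 := (gprim_deriv (q z)).comp_hasFDerivAt z h2
      refine h3.congr_fderiv ?_
      ext v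
      have e := cl_symm hBs (z - x) v
      have e2 := real_inner_comm v (cl B (z - x))
      simp only [FunLike.coe_smul, Pi.smul_apply, ContinuousLinearMap.comp_apply, Function.comp_apply,
        fderivInnerCLM_apply, ContinuousLinearMap.prod_apply, ContinuousLinearMap.id_apply,
        map_smul, inner_smul_left, inner_smul_right, smul_eq_mul,
        InnerProductSpace.toDual_apply_apply, conj_trivial]
      rw [← e, e2]
      ring
    set H : EE d → ℝ := fun z => gcut (q z) * fderiv ℝ u z (z - x) with hH
    have hbf : ∀ z, bform A (gradient u z) (gradient (fun z => gprim (q z)) z) =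
        (2 * s⁻¹ * s⁻¹) * H z := by
      intro z
      rw [bform_eq, ← cl_symm hs, hgrad, map_smul, cl_mul hAB, inner_smul_left, real_inner_comm,
        ← InnerProductSpace.toDual_apply_apply, toDual_gradient]
      simp only [conj_trivial, hH]
      ring
    have hH0 : ∫ z, H z = 0 := by
      rw [← setIntegral_eq_integral_of_forall_compl_eq_zero (s := Ω)]
      · simp only [hbf] at hw
        rw [integral_const_mul] at hw
        rcases mul_eq_zero.1 hw with h | h
        · exfalso
          have : 0 < 2 * s⁻¹ * s⁻¹ := by positivity
          linarith
        · exact h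
      · intro z hz
        rw [hH]
        simp only
        rw [gcut_zero (hout z fun hh => hz (hx hh)), zero_mul]
    have hcv : ∫ y, H (x + s • y) = 0 := by
      have h1 := Measure.integral_comp_smul (volume : Measure (EE d)) (fun z => H (x + z)) s
      rw [h1, integral_add_left_eq_self H x, hH0, smul_zero]
    have e : ∀ y, H (x + s • y) = s * (kern B y • fderiv ℝ u (x + s • y) y) := by
      intro y
      simp only [hH, hq, kern, add_sub_cancel_left, smul_smul, inv_mul_cancel₀ hs0.ne', one_smul,
        map_smul, smul_eq_mul]
      ring
    simp only [e] at hcv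
    rw [integral_const_mul] at hcv
    exact (mul_eq_zero.1 hcv).resolve_left hs0.ne'
  intro x ρ hρ hx
  have hsub : ∀ s ≤ ρ, closedBall x s ⊆ Ω := fun s hs =>
    (closedBall_subset_closedBall hs).trans hx
  set f : ℝ → ℝ := fun s => ∫ y, kern B y • u (x + s • y) with hf
  have hder : ∀ s ∈ Ioc 0 ρ, HasDerivAt f 0 s := by
    intro s hs
    have := radial_deriv hker hΩ hc1 hs.1 (hsub s hs.2)
    rwa [key x s hs.1 (hsub s hs.2)] at this
  obtain ⟨K, hK⟩ := (isCompact_closedBall x ρ).exists_bound_of_continuousOn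
    (hc1.continuousOn.mono hx)
  have hcont0 : ContinuousWithinAt f (Icc 0 ρ) 0 := by
    apply continuousWithinAt_of_dominated (bound := fun y => kern B y * K)
    · filter_upwards [self_mem_nhdsWithin] with s hs
      exact meas_aff hker hs.1 hc1.continuousOn (hsub s hs.2)
    · filter_upwards [self_mem_nhdsWithin] with s hs
      refine Filter.Eventually.of_forall fun y => ?_
      rw [norm_smul, Real.norm_eq_abs, abs_of_nonneg (hker.nonneg y)]
      by_cases hy : y ∈ closedBall (0 : EE d) 1
      · exact mul_le_mul_of_nonneg_left
          (hK _ (closedBall_subset_closedBall hs.2 (mem_of_ker hs.1 hy))) (hker.nonneg y)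
      · simp [hker.zero' hy]
    · exact hker.integrable_self.mul_const K
    · refine Filter.Eventually.of_forall fun y => ContinuousAt.continuousWithinAt ?_
      have hxΩ : x ∈ Ω := hx (by simp; positivity)
      have h1 : ContinuousAt u (x + (0 : ℝ) • y) := by
        simpa using hc1.continuousOn.continuousAt (hΩ.mem_nhds hxΩ)
      have h2 : ContinuousAt (fun s : ℝ => x + s • y) 0 := by fun_prop
      exact (ContinuousAt.comp (f := fun s : ℝ => x + s • y) h1 h2).const_smul (kern B y)
  have hcont : ContinuousOn f (Icc 0 ρ) := by
    intro s hs
    rcases hs.1.eq_or_lt with h | h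
    · rw [← h]; exact hcont0
    · exact (hder s ⟨h, hs.2⟩).continuousAt.continuousWithinAt
  obtain ⟨s, hs, he⟩ := exists_hasDerivAt_eq_slope f (fun _ => 0) hρ hcont
    (fun s hs => hder s ⟨hs.1, hs.2.le⟩)
  have h1 : f ρ - f 0 = 0 := by
    have := he.symm
    rw [div_eq_zero_iff] at this
    rcases this with h | h
    · exact h
    · linarith
  have h0 : f 0 = (∫ y, kern B y) • u x := by
    simp only [hf, zero_smul, add_zero]
    exact integral_smul_const _ _
  rw [← h0]
  linarith

end kernel

set_option linter.unusedSectionVars false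

section bounds

variable {d : ℕ}

/-- Uniform package of estimates. -/
structure Good (lam N K : ℝ) (B : Matrix (Fin d) (Fin d) ℝ) (u : EE d → ℝ) : Prop where
  inB : InB lam B
  mv : MV (kern B) (ball 0 1) u
  smooth : ContDiffOn ℝ (⊤ : ℕ∞) u (ball 0 1)
  b0 : ∀ x ∈ ball (0 : EE d) (5 / 8), |u x| ≤ K
  b1 : ∀ x ∈ ball (0 : EE d) (5 / 8), ‖fderiv ℝ u x‖ ≤ K
  b2 : ∀ x ∈ ball (0 : EE d) (5 / 8), ‖fderiv ℝ (fderiv ℝ u) x‖ ≤ K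
  low : N⁻¹ * volume.real (ball (0 : EE d) (1 / 2)) ≤
    ∫ x in ball (0 : EE d) (1 / 2), (u x) ^ 2

lemma sup_bound {φ : EE d → ℝ} {c L : ℝ} (h : Ker φ c L) {u : EE d → ℝ}
    (hu : ContinuousOn u (ball 0 1)) (hmv : MV φ (ball 0 1) u)
    (hav : (⨍ x in ball (0 : EE d) 1, (u x) ^ 2) = 1) :
    ∀ x ∈ ball (0 : EE d) (7 / 8), |u x| ≤ 1 + |((1 / 16 : ℝ) ^ d)⁻¹| *
      volume.real (ball (0 : EE d) 1) / volume.real (ball (0 : EE d) c) := by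
  intro x hx
  have hint : IntegrableOn (fun x => (u x) ^ 2) (ball (0 : EE d) 1) := by
    by_contra hh
    rw [setAverage_eq, integral_undef hh] at hav
    simp at hav
  have hI : ∫ x in ball (0 : EE d) 1, (u x) ^ 2 = volume.real (ball (0 : EE d) 1) := by
    have hp := vol_ball_pos (d := d) (c := 1) one_pos
    rw [setAverage_eq, smul_eq_mul, inv_mul_eq_iff_eq_mul₀ hp.ne', mul_one] at hav
    exact hav
  set H : EE d → ℝ := indicator (ball (0 : EE d) 1) (fun x => (u x) ^ 2) with hH
  have hHi : Integrable H := (integrable_indicator_iff measurableSet_ball).2 hint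
  have hHI : ∫ z, H z = volume.real (ball (0 : EE d) 1) := by
    rw [hH, integral_indicator measurableSet_ball, hI]
  have hH0 : ∀ z, 0 ≤ H z := fun z => indicator_nonneg (fun _ _ => sq_nonneg _) z
  have hcv : ∫ y, H (x + (1 / 16 : ℝ) • y) =
      |((1 / 16 : ℝ) ^ d)⁻¹| * volume.real (ball (0 : EE d) 1) := by
    have h1 := Measure.integral_comp_smul (volume : Measure (EE d)) (fun z => H (x + z)) (1 / 16)
    rw [h1, integral_add_left_eq_self H x, hHI, finrank_euclideanSpace_fin, smul_eq_mul]
  have hHi2 : Integrable (fun y => H (x + (1 / 16 : ℝ) • y)) :=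
    (hHi.comp_add_left x).comp_smul (by norm_num)
  have hsub : closedBall x (1 / 16) ⊆ ball (0 : EE d) 1 := by
    refine (closedBall_subset_ball' ?_)
    rw [mem_ball] at hx
    linarith
  have e := hmv x (1 / 16) (by norm_num) hsub
  have hi := h.integrable (contOn_aff (by norm_num) hsub hu)
  have hb : |(∫ y, φ y) * u x| ≤ (∫ y, φ y) + ∫ y, H (x + (1 / 16 : ℝ) • y) := by
    rw [← smul_eq_mul, e, ← integral_add h.integrable_self hHi2, ← Real.norm_eq_abs]
    refine (norm_integral_le_integral_norm _).trans ?_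
    apply integral_mono hi.norm (h.integrable_self.add hHi2)
    intro y
    change ‖φ y • u (x + (1 / 16 : ℝ) • y)‖ ≤ φ y + H (x + (1 / 16 : ℝ) • y)
    rw [norm_smul, Real.norm_eq_abs, Real.norm_eq_abs, abs_of_nonneg (h.nonneg y)]
    by_cases hy : y ∈ closedBall (0 : EE d) 1
    · have hm := hsub (mem_of_ker (x := x) (ρ := 1 / 16) (by norm_num) hy)
      rw [hH, indicator_of_mem hm]
      have a1 := h.nonneg y
      have a2 := h.le_one y
      set t := u (x + (1 / 16 : ℝ) • y)
      have a3 : |t| ≤ 1 + t ^ 2 := by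
        rw [abs_le]; constructor <;> nlinarith [sq_nonneg (t - 1), sq_nonneg (t + 1)]
      have a4 : φ y * |t| ≤ φ y * (1 + t ^ 2) := mul_le_mul_of_nonneg_left a3 a1
      nlinarith [sq_nonneg t]
    · rw [h.zero' hy]
      rw [zero_mul, zero_add]
      exact hH0 _
  rw [hcv, abs_mul, abs_of_pos h.mass_pos] at hb
  have hm := h.mass_ge
  have hv := vol_ball_pos (d := d) h.c_pos
  have hp := h.mass_pos
  set m := ∫ y, φ y
  set V := |((1 / 16 : ℝ) ^ d)⁻¹| * volume.real (ball (0 : EE d) 1) with hV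
  have hV0 : 0 ≤ V := by positivity
  have h1 : |u x| ≤ 1 + V / m := by
    rw [← mul_le_mul_iff_right₀ hp]
    have : m * (1 + V / m) = m + V := by field_simp
    linarith
  refine h1.trans ?_
  gcongr

lemma exists_good {lam : ℝ} (hl : 0 < lam) (N : ℝ) (hN : 1 < N) :
    ∃ K : ℝ, ∀ u : EE d → ℝ, MemF d lam N u → ∃ B, Good lam N K B u := by
  obtain ⟨c, L, hker⟩ := exists_ker (d := d) hl
  set K0 := 1 + |((1 / 16 : ℝ) ^ d)⁻¹| *
      volume.real (ball (0 : EE d) 1) / volume.real (ball (0 : EE d) c) with hK0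
  set K1 := gradC d c L * K0 / (1 / 8) with hK1
  set K2 := gradC d c L * K1 / (1 / 8) with hK2
  refine ⟨max K0 (max K1 K2), fun u hu => ?_⟩
  obtain ⟨⟨A, hs, hA, hweak⟩, hav, hdoub⟩ := hu
  obtain ⟨B, hB, hBs, hAB⟩ := exists_inv hl hs hA
  have h := hker B hB
  have hmv := weak_mv hs hB hBs hAB h isOpen_ball hweak
  have hcont := hweak.1.continuousOn
  have hsm := hmv.contDiffOn h isOpen_ball hcont
  have hmv1 := hmv.fderiv h isOpen_ball hweak.1
  have hc1 : ContinuousOn (fderiv ℝ u) (ball 0 1) :=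
    hweak.1.continuousOn_fderiv_of_isOpen isOpen_ball le_rfl
  have B0 := sup_bound h hcont hmv hav
  have hsub : ∀ (x : EE d) (a b e : ℝ), x ∈ ball (0 : EE d) a → a + b ≤ e →
      ball x b ⊆ ball (0 : EE d) e := by
    intro x a b e hx hab
    apply ball_subset_ball'
    rw [mem_ball] at hx
    linarith
  have B1 : ∀ x ∈ ball (0 : EE d) (3 / 4), ‖fderiv ℝ u x‖ ≤ K1 := by
    intro x hx
    have s1 := hsub x (3 / 4) (1 / 8) (7 / 8) hx (by norm_num)
    exact hmv.fderiv_le h hcont (by norm_num) (s1.trans (ball_subset_ball (by norm_num)))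
      (fun z hz => B0 z (s1 hz))
  have B2 : ∀ x ∈ ball (0 : EE d) (5 / 8), ‖fderiv ℝ (fderiv ℝ u) x‖ ≤ K2 := by
    intro x hx
    have s1 := hsub x (5 / 8) (1 / 8) (3 / 4) hx (by norm_num)
    exact hmv1.fderiv_le h hc1 (by norm_num) (s1.trans (ball_subset_ball (by norm_num)))
      (fun z hz => B1 z (s1 hz))
  refine ⟨B, hB, hmv, hsm, ?_, ?_, ?_, ?_⟩
  · intro x hx
    exact (B0 x (ball_subset_ball (by norm_num) hx)).trans (le_max_left _ _)
  · intro x hx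
    exact (B1 x (ball_subset_ball (by norm_num) hx)).trans
      ((le_max_left _ _).trans (le_max_right _ _))
  · intro x hx
    exact (B2 x hx).trans ((le_max_right _ _).trans (le_max_right _ _))
  · have hp := vol_ball_pos (d := d) (c := 1 / 2) (by norm_num)
    rw [hav, setAverage_eq, smul_eq_mul] at hdoub
    have hN0 : 0 < N := by linarith
    set I := ∫ x in ball (0 : EE d) (1 / 2), (u x) ^ 2
    set V := volume.real (ball (0 : EE d) (1 / 2))
    have : N⁻¹ * V * 1 ≤ N⁻¹ * V * (N * (V⁻¹ * I)) :=
      mul_le_mul_of_nonneg_left hdoub (by positivity)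
    have e : N⁻¹ * V * (N * (V⁻¹ * I)) = I := by field_simp
    linarith

lemma Good.lip {lam N K : ℝ} {B : Matrix (Fin d) (Fin d) ℝ} {u : EE d → ℝ}
    (h : Good lam N K B u) : ∀ x ∈ ball (0 : EE d) (5 / 8), ∀ y ∈ ball (0 : EE d) (5 / 8),
    |u y - u x| ≤ K * ‖y - x‖ := by
  intro x hx y hy
  apply (convex_ball (0 : EE d) (5 / 8)).norm_image_sub_le_of_norm_fderiv_le (𝕜 := ℝ) _ h.b1 hx hy
  intro z hz
  have hz1 : z ∈ ball (0 : EE d) 1 := ball_subset_ball (by norm_num) hz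
  exact (h.smooth.contDiffAt (isOpen_ball.mem_nhds hz1)).differentiableAt (by simp)

lemma Good.taylor {lam N K : ℝ} {B : Matrix (Fin d) (Fin d) ℝ} {u : EE d → ℝ}
    (h : Good lam N K B u) : ∀ x ∈ ball (0 : EE d) (5 / 8), ∀ y ∈ ball (0 : EE d) (5 / 8),
    |u y - u x - fderiv ℝ u x (y - x)| ≤ K * ‖y - x‖ * ‖y - x‖ := by
  intro x hx y hy
  have hK : 0 ≤ K := (norm_nonneg _).trans (h.b1 x hx)
  have hcv : Convex ℝ (ball (0 : EE d) (5 / 8) ∩ closedBall x ‖y - x‖) :=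
    (convex_ball _ _).inter (convex_closedBall _ _)
  have hsm : ∀ z ∈ ball (0 : EE d) (5 / 8), ContDiffAt ℝ (⊤ : ℕ∞) u z := fun z hz =>
    h.smooth.contDiffAt (isOpen_ball.mem_nhds (ball_subset_ball (by norm_num) hz))
  rw [← Real.norm_eq_abs]
  apply hcv.norm_image_sub_le_of_norm_fderiv_le' (𝕜 := ℝ) (f := u)
  · intro z hz
    exact (hsm z hz.1).differentiableAt (by simp)
  · intro z hz
    have h1 : ‖fderiv ℝ u z - fderiv ℝ u x‖ ≤ K * ‖z - x‖ := by
      apply (convex_ball (0 : EE d) (5 / 8)).norm_image_sub_le_of_norm_fderiv_le (𝕜 := ℝ) _ h.b2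
        hx hz.1
      intro w hw
      exact ((hsm w hw).fderiv_right (m := (⊤ : ℕ∞)) le_rfl).differentiableAt (by simp)
    refine h1.trans (mul_le_mul_of_nonneg_left ?_ hK)
    have := hz.2
    rwa [mem_closedBall, dist_eq_norm] at this
  · exact ⟨hx, by simp⟩
  · exact ⟨hy, by simp [dist_eq_norm]⟩

end bounds

set_option linter.unusedSectionVars false

section compactness

variable {d : ℕ}

lemma kern_cont (B : Matrix (Fin d) (Fin d) ℝ) : Continuous (kern B) :=
  (gcut_smooth.comp (bform_smooth B)).continuous

lemma arzela {u : ℕ → EE d → ℝ} {K : ℝ} {X : Set (EE d)} (hX : IsCompact X)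
    (hb : ∀ n, ∀ z ∈ X, |u n z| ≤ K) (hlip : ∀ n, ∀ z ∈ X, ∀ z' ∈ X,
      |u n z - u n z'| ≤ K * ‖z - z'‖) :
    ∃ (v : EE d → ℝ) (σ : ℕ → ℕ), StrictMono σ ∧
      TendstoUniformlyOn (fun n => u (σ n)) v Filter.atTop X := by
  haveI : CompactSpace X := isCompact_iff_compactSpace.1 hX
  have hl : ∀ n, LipschitzWith K.toNNReal (fun z : X => u n z) := by
    intro n
    apply LipschitzWith.of_dist_le_mul
    intro z z'
    rw [Real.dist_eq, Subtype.dist_eq, dist_eq_norm]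
    refine (hlip n z z.2 z' z'.2).trans ?_
    gcongr
    exact Real.le_coe_toNNReal K
  set f : ℕ → BoundedContinuousFunction X ℝ := fun n =>
    BoundedContinuousFunction.mkOfCompact ⟨fun z : X => u n z, (hl n).continuous⟩ with hf
  have hcomp : IsCompact (closure (range f)) := by
    apply BoundedContinuousFunction.arzela_ascoli (Icc (-K) K) isCompact_Icc
    · rintro g x ⟨n, rfl⟩
      exact abs_le.1 (hb n x x.2)
    · apply UniformEquicontinuous.equicontinuous
      apply LipschitzWith.uniformEquicontinuous _ K.toNNReal
      rintro ⟨g, n, rfl⟩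
      exact hl n
  obtain ⟨g, -, σ, hσ, hlim⟩ := hcomp.tendsto_subseq (x := f)
    (fun n => subset_closure (mem_range_self n))
  classical
  refine ⟨fun z => if h : z ∈ X then g ⟨z, h⟩ else 0, σ, hσ, ?_⟩
  rw [BoundedContinuousFunction.tendsto_iff_tendstoUniformly] at hlim
  rw [Metric.tendstoUniformlyOn_iff]
  intro ε hε
  filter_upwards [Metric.tendstoUniformly_iff.1 hlim ε hε] with n hn z hz
  simp only [hz, dif_pos]
  exact hn ⟨z, hz⟩

lemma matrix_seq {lam : ℝ} {B : ℕ → Matrix (Fin d) (Fin d) ℝ} (hB : ∀ n, InB lam (B n)) :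
    ∃ (B' : Matrix (Fin d) (Fin d) ℝ) (σ : ℕ → ℕ), StrictMono σ ∧ InB lam B' ∧
      ∀ y : EE d, Filter.Tendsto (fun n => bform (B (σ n)) y y) Filter.atTop
        (nhds (bform B' y y)) := by
  set X : Set (Fin d → Fin d → ℝ) := univ.pi fun _ => univ.pi fun _ => Icc (-lam⁻¹) lam⁻¹
  have hX : IsCompact X := isCompact_univ_pi fun _ => isCompact_univ_pi fun _ => isCompact_Icc
  obtain ⟨B', hB', σ, hσ, hlim⟩ := hX.tendsto_subseq (x := fun n i j => B n i j)
    (fun n => by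
      intro i _ j _
      exact abs_le.1 ((hB n).bd i j))
  have hij : ∀ i j, Filter.Tendsto (fun n => B (σ n) i j) Filter.atTop (nhds (B' i j)) := by
    intro i j
    exact (tendsto_pi_nhds.1 ((tendsto_pi_nhds.1 hlim) i)) j
  have hbf : ∀ y : EE d, Filter.Tendsto (fun n => bform (B (σ n)) y y) Filter.atTop
      (nhds (bform (Matrix.of B') y y)) := by
    intro y
    unfold bform
    refine tendsto_finsetSum _ fun i _ => tendsto_finsetSum _ fun j _ => ?_
    exact ((hij i j).mul_const _).mul_const _
  refine ⟨Matrix.of B', σ, hσ, ⟨fun i j => ?_, fun y => ?_⟩, hbf⟩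
  · exact abs_le.2 (hB' i trivial j trivial)
  · exact ge_of_tendsto (hbf y) (Filter.Eventually.of_forall fun n => (hB (σ n)).low y)

lemma limit_mv {lam c L K : ℝ} (hker : ∀ B : Matrix (Fin d) (Fin d) ℝ, InB lam B → Ker (kern B) c L)
    {B : ℕ → Matrix (Fin d) (Fin d) ℝ} {B' : Matrix (Fin d) (Fin d) ℝ} (hB : ∀ n, InB lam (B n))
    (hB' : InB lam B') (hlim : ∀ y : EE d, Filter.Tendsto (fun n => bform (B n) y y) Filter.atTop
        (nhds (bform B' y y))) {Ω : Set (EE d)} {u : ℕ → EE d → ℝ} {v : EE d → ℝ}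
    (hmv : ∀ n, MV (kern (B n)) Ω (u n)) (hc : ∀ n, ContinuousOn (u n) Ω)
    (hb : ∀ n, ∀ x ∈ Ω, |u n x| ≤ K)
    (hv : ∀ x ∈ Ω, Filter.Tendsto (fun n => u n x) Filter.atTop (nhds (v x))) :
    MV (kern B') Ω v := by
  intro x ρ hρ hx
  have hk : ∀ y, Filter.Tendsto (fun n => kern (B n) y) Filter.atTop (nhds (kern B' y)) :=
    fun y => (gcut_smooth.continuous.tendsto _).comp (hlim y)
  have hxΩ : x ∈ Ω := hx (by simp; positivity)
  have hK0 : 0 ≤ K := (abs_nonneg _).trans (hb 0 x hxΩ)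
  have hi : ∀ a : ℝ, Integrable (indicator (closedBall (0 : EE d) 1) fun _ => a) := fun a =>
    (integrable_indicator_iff measurableSet_closedBall).2
      (integrableOn_const (measure_closedBall_lt_top.ne))
  have h1 : Filter.Tendsto (fun n => ∫ y, kern (B n) y) Filter.atTop (nhds (∫ y, kern B' y)) := by
    apply tendsto_integral_of_dominated_convergence
      (indicator (closedBall (0 : EE d) 1) fun _ => (1 : ℝ))
    · intro n; exact (kern_cont (B n)).aestronglyMeasurable
    · exact hi 1
    · intro n
      refine Filter.Eventually.of_forall fun y => ?_
      have hkr := hker _ (hB n)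
      rw [Real.norm_eq_abs, abs_of_nonneg (hkr.nonneg y)]
      by_cases hy : y ∈ closedBall (0 : EE d) 1
      · rw [indicator_of_mem hy]; exact hkr.le_one y
      · rw [indicator_of_notMem hy, hkr.zero' hy]
    · exact Filter.Eventually.of_forall hk
  have h2 : Filter.Tendsto (fun n => ∫ y, kern (B n) y • u n (x + ρ • y)) Filter.atTop
      (nhds (∫ y, kern B' y • v (x + ρ • y))) := by
    apply tendsto_integral_of_dominated_convergence
      (indicator (closedBall (0 : EE d) 1) fun _ => K)
    · intro n; exact meas_aff (hker _ (hB n)) hρ.le (hc n) hx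
    · exact hi K
    · intro n
      refine Filter.Eventually.of_forall fun y => ?_
      have hkr := hker _ (hB n)
      rw [norm_smul, Real.norm_eq_abs, Real.norm_eq_abs, abs_of_nonneg (hkr.nonneg y)]
      by_cases hy : y ∈ closedBall (0 : EE d) 1
      · rw [indicator_of_mem hy]
        have a := hb n _ (hx (mem_of_ker (x := x) hρ.le hy))
        have := mul_le_mul (hkr.le_one y) a (abs_nonneg _) zero_le_one
        simpa using this
      · rw [indicator_of_notMem hy, hkr.zero' hy, zero_mul]
    · refine Filter.Eventually.of_forall fun y => ?_
      by_cases hy : y ∈ closedBall (0 : EE d) 1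
      · exact (hk y).smul (hv _ (hx (mem_of_ker (x := x) hρ.le hy)))
      · simp only [(hker _ hB').zero' hy, fun n => (hker _ (hB n)).zero' hy, zero_smul]
        exact tendsto_const_nhds
  have h3 := h1.smul (hv x hxΩ)
  have e : (fun n => (∫ y, kern (B n) y) • u n x) =
      fun n => ∫ y, kern (B n) y • u n (x + ρ • y) := funext fun n => hmv n x ρ hρ hx
  rw [e] at h3
  exact tendsto_nhds_unique h3 h2

lemma MV.mono' {G : Type*} [NormedAddCommGroup G] [NormedSpace ℝ G] {φ : EE d → ℝ}
    {Ω Ω' : Set (EE d)} {w : EE d → G} (h : MV φ Ω w) (hs : Ω' ⊆ Ω) : MV φ Ω' w :=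
  fun x ρ hρ hx => h x ρ hρ (hx.trans hs)

lemma core_cover (hd : 2 ≤ d) {lam N r₀ ε η : ℝ} (hl : 0 < lam) (hN : 1 < N)
    (hr : r₀ ≤ 1 / 4) (hε : 0 < ε) (hη : 0 < η) :
    ∃ δ > 0, ∀ u : EE d → ℝ, MemF d lam N u →
      ∃ (F : Finset ℕ) (z : ℕ → EE d) (s : ℕ → ℝ),
        (∀ n ∈ F, z n ∈ closedBall (0 : EE d) r₀ ∧ 0 < s n ∧ s n < η) ∧
        {x ∈ ball (0 : EE d) r₀ | |u x| + ‖fderiv ℝ u x‖ < δ} ⊆ ⋃ n ∈ F, ball (z n) (s n) ∧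
        ∑ n ∈ F, s n ^ (d - 1) < ε := by
  obtain ⟨K, hK⟩ := exists_good (d := d) hl N hN
  obtain ⟨c, L, hker⟩ := exists_ker (d := d) hl
  by_contra! hcon
  choose u hu hbad using fun n : ℕ => hcon (1 / ((n : ℝ) + 1)) (by positivity)
  choose B hgood using fun n => hK (u n) (hu n)
  set X : Set (EE d) := closedBall 0 (1 / 2) with hX
  have hXs : X ⊆ ball (0 : EE d) (5 / 8) := closedBall_subset_ball (by norm_num)
  obtain ⟨B', σ, hσ, hB', hBlim⟩ := matrix_seq fun n => (hgood n).inB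
  obtain ⟨v, τ, hτ, hvlim⟩ := arzela (u := fun n => u (σ n)) (isCompact_closedBall (0 : EE d) (1 / 2))
    (fun n z hz => (hgood (σ n)).b0 z (hXs hz))
    (fun n z hz z' hz' => (hgood (σ n)).lip z' (hXs hz') z (hXs hz))
  set κ : ℕ → ℕ := fun n => σ (τ n) with hκ
  have hκm : StrictMono κ := hσ.comp hτ
  have hpt : ∀ x ∈ X, Filter.Tendsto (fun n => u (κ n) x) Filter.atTop (nhds (v x)) :=
    fun x hx => hvlim.tendsto_at hx
  have hun : ∀ n, ContinuousOn (u n) (ball 0 1) := fun n => (hgood n).smooth.continuousOn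
  have hX1 : X ⊆ ball (0 : EE d) 1 := closedBall_subset_ball (by norm_num)
  have hvc : ContinuousOn v X := hvlim.continuousOn
    (Filter.Eventually.of_forall fun n => (hun (κ n)).mono hX1).frequently
  set Ω : Set (EE d) := ball 0 (1 / 2) with hΩ
  have hΩX : Ω ⊆ X := ball_subset_closedBall
  have hΩ1 : Ω ⊆ ball (0 : EE d) 1 := hΩX.trans hX1
  have hmv : MV (kern B') Ω v := limit_mv (K := K) hker (B := fun n => B (κ n))
    (fun n => (hgood _).inB) hB' (fun y => (hBlim y).comp hτ.tendsto_atTop)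
    (fun n => (hgood _).mv.mono' hΩ1) (fun n => (hun _).mono hΩ1)
    (fun n x hx => (hgood _).b0 x (hXs (hΩX hx))) (fun x hx => hpt x (hΩX hx))
  have hkB := hker B' hB'
  have hvs : ContDiffOn ℝ (⊤ : ℕ∞) v Ω := hmv.contDiffOn hkB isOpen_ball (hvc.mono hΩX)
  have hne : ∃ x ∈ Ω, v x ≠ 0 := by
    by_contra! hz
    have hI : Filter.Tendsto (fun n => ∫ x in Ω, (u (κ n) x) ^ 2) Filter.atTop
        (nhds (∫ x in Ω, (v x) ^ 2)) := by
      apply tendsto_integral_of_dominated_convergence (fun _ => K ^ 2)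
      · intro n
        exact (((hun (κ n)).mono hΩ1).pow 2).aestronglyMeasurable measurableSet_ball
      · exact integrableOn_const (measure_ball_lt_top.ne)
      · intro n
        refine (ae_restrict_iff' measurableSet_ball).2 (Filter.Eventually.of_forall fun x hx => ?_)
        rw [norm_pow, Real.norm_eq_abs]
        have := (hgood (κ n)).b0 x (hXs (hΩX hx))
        gcongr
      · refine (ae_restrict_iff' measurableSet_ball).2 (Filter.Eventually.of_forall fun x hx => ?_)
        exact (hpt x (hΩX hx)).pow 2
    have h1 : N⁻¹ * volume.real Ω ≤ ∫ x in Ω, (v x) ^ 2 :=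
      ge_of_tendsto hI (Filter.Eventually.of_forall fun n => (hgood (κ n)).low)
    have h2 : ∫ x in Ω, (v x) ^ 2 = 0 := by
      rw [setIntegral_congr_fun (g := fun _ => (0 : ℝ)) measurableSet_ball]
      · simp
      · intro x hx
        simp [hz x hx]
    have h3 : 0 < volume.real Ω := vol_ball_pos (by norm_num)
    have h4 : 0 < N⁻¹ * volume.real Ω := by positivity
    linarith
  have hnull := sing_null hd hkB isOpen_ball (convex_ball (0 : EE d) (1 / 2)).isPreconnected
    hvs hmv hne
  set S : Set (EE d) := closedBall 0 r₀ ∩ {x | v x = 0 ∧ fderiv ℝ v x = 0} with hS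
  have hrΩ : closedBall (0 : EE d) r₀ ⊆ Ω := closedBall_subset_ball (by linarith)
  have hsub : S ⊆ {x ∈ Ω | v x = 0 ∧ fderiv ℝ v x = 0} := fun x hx => ⟨hrΩ hx.1, hx.2⟩
  have hSnull : μH[((d - 1 : ℕ) : ℝ)] S = 0 := measure_mono_null hsub hnull
  have hScomp : IsCompact S := by
    have hd1 : ContinuousOn (fderiv ℝ v) Ω :=
      hvs.continuousOn_fderiv_of_isOpen isOpen_ball (by simp)
    have c1 : IsClosed (closedBall (0 : EE d) r₀ ∩ v ⁻¹' {0}) :=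
      (hvc.mono (hrΩ.trans hΩX)).preimage_isClosed_of_isClosed isClosed_closedBall
        isClosed_singleton
    have c2 : IsClosed (closedBall (0 : EE d) r₀ ∩ fderiv ℝ v ⁻¹' {0}) :=
      (hd1.mono hrΩ).preimage_isClosed_of_isClosed isClosed_closedBall isClosed_singleton
    have e : S = (closedBall (0 : EE d) r₀ ∩ v ⁻¹' {0}) ∩
        (closedBall (0 : EE d) r₀ ∩ fderiv ℝ v ⁻¹' {0}) := by
      ext x
      simp only [hS, mem_inter_iff, mem_setOf_eq, mem_preimage, mem_singleton_iff]
      tauto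
    rw [e]
    exact (isCompact_closedBall (0 : EE d) r₀).of_isClosed_subset (c1.inter c2)
      (fun x hx => hx.1.1)
  obtain ⟨F, z, s, hF, hcov, hsum⟩ := cover_null (by omega) hScomp hSnull hε hη
  set U : Set (EE d) := ⋃ n ∈ F, ball (z n) (s n) with hU
  have hUo : IsOpen U := isOpen_biUnion fun _ _ => isOpen_ball
  have hnot : ∀ n, ∃ x, x ∈ ball (0 : EE d) r₀ ∧
      |u (κ n) x| + ‖fderiv ℝ (u (κ n)) x‖ < 1 / ((κ n : ℝ) + 1) ∧ x ∉ U := by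
    intro n
    by_contra! hh
    have := hbad (κ n) F z s (fun i hi => ⟨(hF i hi).1.1, (hF i hi).2⟩)
      (fun x hx => hh x hx.1 hx.2)
    linarith
  choose p hp1 hp2 hp3 using hnot
  obtain ⟨p', hp', ω, hω, hplim⟩ := (isCompact_closedBall (0 : EE d) r₀).tendsto_subseq
    (x := p) (fun n => ball_subset_closedBall (hp1 n))
  have hp'X : p' ∈ Ω := hrΩ hp'
  have hp'U : p' ∉ U := by
    intro hh
    obtain ⟨n, hn⟩ := (hplim.eventually (hUo.mem_nhds hh)).exists
    exact hp3 _ hn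
  have hsmall : Filter.Tendsto (fun n => 1 / ((κ (ω n) : ℝ) + 1)) Filter.atTop (nhds 0) :=
    tendsto_one_div_add_atTop_nhds_zero_nat.comp (hκm.comp hω).tendsto_atTop
  have hpX : ∀ n, p n ∈ ball (0 : EE d) (5 / 8) := fun n =>
    hXs (hΩX (hrΩ (ball_subset_closedBall (hp1 n))))
  have hK0 : 0 ≤ K := (abs_nonneg _).trans ((hgood 0).b0 _ (hpX 0))
  -- quadratic estimate for the limit
  have hquad : ∀ y ∈ Ω, |v y| ≤ K * ‖y - p'‖ * ‖y - p'‖ := by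
    intro y hy
    have hb : ∀ n, |u (κ (ω n)) y| ≤ K * ‖y - p (ω n)‖ * ‖y - p (ω n)‖ +
        (1 / ((κ (ω n) : ℝ) + 1)) * (1 + ‖y - p (ω n)‖) := by
      intro n
      have ht := (hgood (κ (ω n))).taylor _ (hpX (ω n)) y (hXs (hΩX hy))
      have h2 := hp2 (ω n)
      set g := fderiv ℝ (u (κ (ω n))) (p (ω n))
      have h3 := g.le_opNorm (y - p (ω n))
      rw [Real.norm_eq_abs] at h3
      have h4 : |u (κ (ω n)) y| ≤ |u (κ (ω n)) y - u (κ (ω n)) (p (ω n)) - g (y - p (ω n))| +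
          |u (κ (ω n)) (p (ω n))| + |g (y - p (ω n))| := by
        have := abs_add_three (u (κ (ω n)) y - u (κ (ω n)) (p (ω n)) - g (y - p (ω n)))
          (u (κ (ω n)) (p (ω n))) (g (y - p (ω n)))
        refine le_trans (le_of_eq ?_) this
        congr 1; ring
      have h5 : ‖g‖ * ‖y - p (ω n)‖ ≤ 1 / ((κ (ω n) : ℝ) + 1) * ‖y - p (ω n)‖ := by
        apply mul_le_mul_of_nonneg_right _ (norm_nonneg _)
        linarith [abs_nonneg (u (κ (ω n)) (p (ω n)))]
      have h6 := norm_nonneg g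
      linarith
    have hnorm : Filter.Tendsto (fun n => ‖y - p (ω n)‖) Filter.atTop (nhds ‖y - p'‖) :=
      (tendsto_const_nhds.sub hplim).norm
    have l1 := ((hpt y (hΩX hy)).comp hω.tendsto_atTop).abs
    have l2 := ((hnorm.const_mul K).mul hnorm).add (hsmall.mul (hnorm.const_add 1))
    have := le_of_tendsto_of_tendsto' l1 l2 hb
    simpa using this
  have hv0 : v p' = 0 := by
    have := hquad p' hp'X
    simpa using this
  have hfd : HasFDerivAt v (0 : EE d →L[ℝ] ℝ) p' := by
    rw [hasFDerivAt_iff_isLittleO_nhds_zero]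
    simp only [hv0, sub_zero, zero_apply]
    rw [Asymptotics.isLittleO_iff]
    intro ε' hε'
    have e1 : ∀ᶠ h in nhds (0 : EE d), p' + h ∈ Ω := by
      have : ContinuousAt (fun h : EE d => p' + h) 0 := by fun_prop
      apply this.eventually_mem
      have h0 : Ω ∈ nhds p' := isOpen_ball.mem_nhds hp'X
      rwa [add_zero]
    have e2 : ∀ᶠ h in nhds (0 : EE d), K * ‖h‖ < ε' := by
      have : ContinuousAt (fun h : EE d => K * ‖h‖) 0 := by fun_prop
      apply this.eventually_lt continuousAt_const
      simpa using hε'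
    filter_upwards [e1, e2] with h h1 h2
    have := hquad _ h1
    rw [add_sub_cancel_left] at this
    exact this.trans (mul_le_mul_of_nonneg_right h2.le (norm_nonneg _))
  exact hp'U (hcov ⟨hp', hv0, hfd.fderiv⟩)

end compactness

/-- **Lemma 4.3.** Uniform covering of the sublevel sets `{|u| < δ₁}` and
`{|u| + |∇u| < δ₁}` for all `u ∈ ℱ(N)` by controlled families of small balls. -/
theorem compactness_covering_lemma
    (d : ℕ) (hd : 2 ≤ d) (lam M N : ℝ) (hlam0 : 0 < lam) (hlam1 : lam ≤ 1)
    (hM : 0 < M) (hN : 1 < N) (r₀ : ℝ) (hr₀ : r₀ = Real.sqrt lam / 4) :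
    ∃ r₁ δ₁ C : ℝ, 0 < r₁ ∧ r₁ < r₀ / 4 ∧ 0 < δ₁ ∧ 0 < C ∧
      ∀ u : EuclideanSpace ℝ (Fin d) → ℝ, MemF d lam N u →
        ∃ (m m' : ℕ) (x : Fin m → EuclideanSpace ℝ (Fin d)) (t : Fin m → ℝ)
          (y : Fin m' → EuclideanSpace ℝ (Fin d)) (s : Fin m' → ℝ),
          (∀ i, x i ∈ ball (0 : EuclideanSpace ℝ (Fin d)) r₀ ∧ 0 < t i ∧ t i < r₁) ∧
          (∀ j, y j ∈ ball (0 : EuclideanSpace ℝ (Fin d)) r₀ ∧ 0 < s j ∧ s j < r₁) ∧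
          ({z ∈ ball (0 : EuclideanSpace ℝ (Fin d)) r₀ | |u z| < δ₁} ⊆ ⋃ i, ball (x i) (t i)) ∧
          ({z ∈ ball (0 : EuclideanSpace ℝ (Fin d)) r₀ | |u z| + ‖gradient u z‖ < δ₁} ⊆
            ⋃ j, ball (y j) (s j)) ∧
          (∑ i, t i ^ (d - 1)) ≤ C ∧
          (∑ j, s j ^ (d - 1)) < (1 / 4) * r₀ ^ (d - 1) := by
  have hs0 : 0 < Real.sqrt lam := Real.sqrt_pos.2 hlam0
  have hs1 : Real.sqrt lam ≤ 1 := Real.sqrt_le_one.2 hlam1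
  have hr0 : 0 < r₀ := by rw [hr₀]; positivity
  have hr4 : r₀ ≤ 1 / 4 := by rw [hr₀]; linarith
  obtain ⟨m, x, hx, hcov⟩ := cover_ball (d := d) r₀ (r₀ / 16) (by positivity)
  obtain ⟨δ, hδ, H⟩ := core_cover (r₀ := r₀) (ε := (1 / 4) * r₀ ^ (d - 1) / 2 ^ (d - 1))
    (η := r₀ / 16) hd hlam0 hN hr4 (by positivity) (by positivity)
  refine ⟨r₀ / 8, δ, m * (r₀ / 16) ^ (d - 1) + 1, by positivity, by linarith, hδ,
    by positivity, ?_⟩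
  intro u hu
  obtain ⟨F, z, s, h1, h2, h3⟩ := H u hu
  have hy : ∀ n, ∃ y : EE d, n ∈ F → y ∈ ball (0 : EE d) r₀ ∧ dist (z n) y < s n := by
    intro n
    by_cases hn : n ∈ F
    · obtain ⟨a, b, c⟩ := h1 n hn
      rw [← closure_ball _ hr0.ne', Metric.mem_closure_iff] at a
      obtain ⟨y, hy, hyd⟩ := a _ b
      exact ⟨y, fun _ => ⟨hy, hyd⟩⟩
    · exact ⟨0, fun h => absurd h hn⟩
  choose y hy using hy
  refine ⟨m, F.card, x, fun _ => r₀ / 16, fun j => y (F.equivFin.symm j),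
    fun j => 2 * s (F.equivFin.symm j), ?_, ?_, ?_, ?_, ?_, ?_⟩
  · intro i
    exact ⟨hx i, by positivity, by linarith⟩
  · intro j
    have hj := (F.equivFin.symm j).2
    obtain ⟨a, b, c⟩ := h1 _ hj
    exact ⟨(hy _ hj).1, by linarith, by linarith⟩
  · exact fun w hw => hcov hw.1
  · intro w hw
    have hg : ‖gradient u w‖ = ‖fderiv ℝ u w‖ := by
      rw [gradient, LinearIsometryEquiv.norm_map]
    have hw' := hw.2
    rw [hg] at hw'
    have := h2 ⟨hw.1, hw'⟩
    simp only [mem_iUnion] at this ⊢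
    obtain ⟨n, hn, hwn⟩ := this
    refine ⟨F.equivFin ⟨n, hn⟩, ?_⟩
    simp only [Equiv.symm_apply_apply]
    rw [mem_ball] at hwn ⊢
    have := dist_triangle w (z n) (y n)
    linarith [(hy n hn).2]
  · simp
  · rw [Equiv.sum_comp F.equivFin.symm (fun n => (2 * s (n : ℕ)) ^ (d - 1)),
      Finset.sum_coe_sort F (fun n => (2 * s n) ^ (d - 1))]
    simp only [mul_pow]
    rw [← Finset.mul_sum]
    rw [lt_div_iff₀ (by positivity)] at h3
    linarith

end
end

section
/- Let ψ : (−∞, 1] → ℝ be convex on (−∞, 1] and real-analytic on the open interval (−∞, 1). If ψ(0) = (ψ(−1) + ψ(1))/2, then ψ is affine on (−∞, 1]: there exist constants a, b ∈ ℝ such that ψ(r) = a r + b for all r ≤ 1. -/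
open MeasureTheory Metric Set
open scoped ENNReal NNReal

noncomputable section

/-- A function convex on `(-∞, 1]` and real-analytic on `(-∞, 1)` with
`ψ(0) = (ψ(-1) + ψ(1))/2` is affine on `(-∞, 1]`. -/
theorem convex_analytic_midpoint_affine
    (ψ : ℝ → ℝ) (hconv : ConvexOn ℝ (Set.Iic (1 : ℝ)) ψ)
    (hanal : AnalyticOnNhd ℝ ψ (Set.Iio (1 : ℝ)))
    (hmid : ψ 0 = (ψ (-1) + ψ 1) / 2) :
    ∃ a b : ℝ, ∀ r : ℝ, r ≤ 1 → ψ r = a * r + b := by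
  have hEq : EqOn ψ (fun r => (ψ 1 - ψ 0) * r + ψ 0) (Set.Iio (1 : ℝ)) := by
    have hg : AnalyticOnNhd ℝ (fun r : ℝ => (ψ 1 - ψ 0) * r + ψ 0) (Set.Iio (1 : ℝ)) := by
      intro x _
      fun_prop
    refine hanal.eqOn_of_preconnected_of_eventuallyEq hg isPreconnected_Iio
      (z₀ := 1 / 2) (by simp only [Set.mem_Iio]; norm_num) ?_
    filter_upwards [Ioo_mem_nhds (show (0 : ℝ) < 1 / 2 by norm_num)
      (show (1 / 2 : ℝ) < 1 by norm_num)] with r hr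
    obtain ⟨h0, h1⟩ := hr
    have hup := hconv.2 (show (0 : ℝ) ∈ Set.Iic (1 : ℝ) by simp)
      (show (1 : ℝ) ∈ Set.Iic (1 : ℝ) by simp)
      (show 0 ≤ 1 - r by linarith) h0.le (by ring)
    have hpos : 0 < 1 + r := by linarith
    have hlo := hconv.2 (show (-1 : ℝ) ∈ Set.Iic (1 : ℝ) by simp only [Set.mem_Iic]; norm_num)
      (show r ∈ Set.Iic (1 : ℝ) from h1.le)
      (show 0 ≤ r / (1 + r) by positivity) (show 0 ≤ 1 / (1 + r) by positivity)
      (by field_simp; ring)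
    simp only [smul_eq_mul] at hup hlo
    rw [show (1 - r) * 0 + r * 1 = r by ring] at hup
    rw [show r / (1 + r) * (-1) + 1 / (1 + r) * r = 0 by ring,
      show r / (1 + r) * ψ (-1) + 1 / (1 + r) * ψ r = (r * ψ (-1) + ψ r) / (1 + r) by ring,
      le_div_iff₀ hpos] at hlo
    have hm : ψ (-1) = 2 * ψ 0 - ψ 1 := by linarith
    rw [hm] at hlo
    apply le_antisymm <;> linarith
  refine ⟨ψ 1 - ψ 0, ψ 0, fun r hr => ?_⟩
  rcases hr.lt_or_eq with h | h
  · exact hEq h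
  · subst h
    ring

end
end
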